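/- arXiv:2407.11903 — 7 statements merged into one kernel-verified Lean document; each statement's English description precedes it below -/
import Mathlib

section
/- (Liouville theorem for quasilinear equations with bounded gradient) Let H : ℝⁿ → ℝ be a smooth function with D²H(p) positive definite for every p ∈ ℝⁿ. Let u : ℝⁿ → ℝ be a smooth function with sup_{x ∈ ℝⁿ} |∇u(x)| < ∞ satisfying div(∇H(∇u))(x) = ∑_{i,j} ∂ᵢ∂ⱼH(∇u(x)) ∂ᵢ∂ⱼu(x) = 0 for every x ∈ ℝⁿ. Then u is affine, i.e. there exist b ∈ ℝⁿ and c ∈ ℝ with u(x) = ⟨b, x⟩ + c. -/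
open Real

/-- Second partial derivative matrix (Hessian) of `u` at `x`. -/
noncomputable def hessianMatrix {n : ℕ} (u : EuclideanSpace ℝ (Fin n) → ℝ)
    (x : EuclideanSpace ℝ (Fin n)) : Matrix (Fin n) (Fin n) ℝ :=
  Matrix.of fun i j =>
    fderiv ℝ (fun y => fderiv ℝ u y (EuclideanSpace.single j 1)) x (EuclideanSpace.single i 1)

section LinearTheory

open MeasureTheory Metric Set
open scoped ContDiff
set_option linter.unusedSectionVars false

lemma smoothTransition_deriv_bound : ∃ K : ℝ, 0 < K ∧ ∀ t, |deriv Real.smoothTransition t| ≤ K := by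
  have hc : Continuous (deriv Real.smoothTransition) :=
    (Real.smoothTransition.contDiff (n := 1)).continuous_deriv (by norm_num)
  obtain ⟨K, hK⟩ := (isCompact_Icc (a := (0:ℝ)) (b := 1)).exists_bound_of_continuousOn hc.continuousOn
  refine ⟨max K 1, by positivity, fun t => ?_⟩
  by_cases ht : t ∈ Icc (0:ℝ) 1
  · exact (hK t ht).trans (le_max_left _ _)
  · have : deriv Real.smoothTransition t = 0 := by
      rw [mem_Icc, not_and_or, not_le, not_le] at ht
      rcases ht with ht | ht
      · have : Real.smoothTransition =ᶠ[nhds t] fun _ => 0 := by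
          filter_upwards [gt_mem_nhds ht] with s hs
          exact Real.smoothTransition.zero_of_nonpos hs.le
        rw [this.deriv_eq]; simp
      · have : Real.smoothTransition =ᶠ[nhds t] fun _ => 1 := by
          filter_upwards [lt_mem_nhds ht] with s hs
          exact Real.smoothTransition.one_of_one_le hs.le
        rw [this.deriv_eq]; simp
    rw [this]; simp

set_option linter.unusedSectionVars false

variable {E : Type*} [NormedAddCommGroup E] [InnerProductSpace ℝ E] [FiniteDimensional ℝ E]
  [MeasurableSpace E] [BorelSpace E]

variable (E) in
lemma cutoff_exists : ∃ K : ℝ, 0 < K ∧ ∀ r R : ℝ, 0 < r → r < R → ∃ η : E → ℝ,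
    ContDiff ℝ ∞ η ∧ HasCompactSupport η ∧ (∀ x, 0 ≤ η x) ∧ (∀ x, η x ≤ 1) ∧
    (∀ x ∈ closedBall (0:E) r, η x = 1) ∧ (∀ x, x ∉ closedBall (0:E) R → η x = 0) ∧
    (∀ x, x ∉ closedBall (0:E) R → fderiv ℝ η x = 0) ∧
    ∀ x, ‖fderiv ℝ η x‖ ≤ K / (R - r) := by
  obtain ⟨K, hK, hb⟩ := smoothTransition_deriv_bound
  refine ⟨2 * K, by positivity, fun r R hr hR => ?_⟩
  have hd : 0 < R ^ 2 - r ^ 2 := by nlinarith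
  set q : E → ℝ := fun x => (R ^ 2 - ‖x‖ ^ 2) / (R ^ 2 - r ^ 2) with hq
  have hqc : ContDiff ℝ ∞ q := (contDiff_const.sub (contDiff_norm_sq ℝ)).div_const _
  set η : E → ℝ := fun x => Real.smoothTransition (q x) with hη
  have hηc : ContDiff ℝ ∞ η := Real.smoothTransition.contDiff.comp hqc
  have h0 : ∀ x, x ∉ closedBall (0:E) R → η x = 0 := by
    intro x hx
    apply Real.smoothTransition.zero_of_nonpos
    apply div_nonpos_of_nonpos_of_nonneg _ hd.le
    simp at hx
    nlinarith
  have h0' : ∀ x, x ∉ closedBall (0:E) R → fderiv ℝ η x = 0 := by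
    intro x hx
    have : η =ᶠ[nhds x] fun _ => 0 := by
      filter_upwards [isClosed_closedBall.isOpen_compl.mem_nhds hx] with y hy
      exact h0 y hy
    rw [this.fderiv_eq]; simp
  refine ⟨η, hηc, HasCompactSupport.intro (isCompact_closedBall 0 R) h0,
    fun x => Real.smoothTransition.nonneg _, fun x => Real.smoothTransition.le_one _, ?_, h0, h0', ?_⟩
  · intro x hx
    apply Real.smoothTransition.one_of_one_le
    rw [one_le_div hd]
    simp at hx
    nlinarith [norm_nonneg x]
  · intro x
    by_cases hx : x ∈ closedBall (0:E) R
    · have hq' : HasFDerivAt q ((R ^ 2 - r ^ 2)⁻¹ • (-(2 • innerSL ℝ x) : E →L[ℝ] ℝ)) x := by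
        have := (((hasStrictFDerivAt_norm_sq x).hasFDerivAt).const_sub (R^2)).const_mul ((R ^ 2 - r ^ 2)⁻¹)
        refine this.congr_of_eventuallyEq (Filter.Eventually.of_forall fun y => ?_)
        simp [hq, div_eq_inv_mul]
      have hS : HasDerivAt Real.smoothTransition (deriv Real.smoothTransition (q x)) (q x) :=
        ((Real.smoothTransition.contDiff (n := 1)).differentiable (by norm_num) _).hasDerivAt
      have := (hS.comp_hasFDerivAt x hq').fderiv
      have e : fderiv ℝ η x = deriv Real.smoothTransition (q x) • (R ^ 2 - r ^ 2)⁻¹ • (-(2 • innerSL ℝ x) : E →L[ℝ] ℝ) := this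
      rw [e, norm_smul, norm_smul, norm_neg]
      have h2 : ‖(2 • innerSL ℝ x : E →L[ℝ] ℝ)‖ ≤ 2 * R := by
        refine (norm_nsmul_le).trans ?_
        simp at hx ⊢; exact hx
      have h3 : ‖(R ^ 2 - r ^ 2)⁻¹‖ = (R ^ 2 - r ^ 2)⁻¹ := by
        rw [Real.norm_of_nonneg]; positivity
      rw [h3]
      calc _ ≤ K * ((R ^ 2 - r ^ 2)⁻¹ * (2 * R)) := by
              gcongr
              exact hb _
        _ ≤ 2 * K / (R - r) := by
              have : R ^ 2 - r ^ 2 = (R - r) * (R + r) := by ring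
              have h4 : 0 < R - r := by linarith
              have h5 : 0 < R + r := by linarith
              rw [this, mul_inv]
              have : (R + r)⁻¹ * R ≤ 1 := by
                rw [inv_mul_le_iff₀ h5]; linarith
              calc _ = 2 * K / (R - r) * ((R + r)⁻¹ * R) := by field_simp
                _ ≤ 2 * K / (R - r) * 1 := by gcongr
                _ = _ := by ring
    · rw [h0' x hx]; simp
      have : 0 < R - r := by linarith
      positivity

/-- Uniformly elliptic symmetric coefficient fields. -/
structure EllForm (b : E → (E →L[ℝ] ℝ) →ₗ[ℝ] (E →L[ℝ] ℝ) →ₗ[ℝ] ℝ) (l L : ℝ) : Prop where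
  cont : ∀ ξ ζ : E → (E →L[ℝ] ℝ), Continuous ξ → Continuous ζ → Continuous fun x => b x (ξ x) (ζ x)
  symm : ∀ x ξ ζ, b x ξ ζ = b x ζ ξ
  low : ∀ x ξ, l * ‖ξ‖ ^ 2 ≤ b x ξ ξ
  up : ∀ x ξ, b x ξ ξ ≤ L * ‖ξ‖ ^ 2

/-- Weak solutions. -/
def WeakSol (b : E → (E →L[ℝ] ℝ) →ₗ[ℝ] (E →L[ℝ] ℝ) →ₗ[ℝ] ℝ) (v : E → ℝ) : Prop :=
  ∀ φ : E → ℝ, ContDiff ℝ ∞ φ → HasCompactSupport φ →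
      ∫ x, b x (fderiv ℝ v x) (fderiv ℝ φ x) = 0

lemma caccioppoli {b : E → (E →L[ℝ] ℝ) →ₗ[ℝ] (E →L[ℝ] ℝ) →ₗ[ℝ] ℝ}
    {l L : ℝ} (hb : EllForm b l L) (hl : 0 < l)
    {v : E → ℝ} (hv : ContDiff ℝ ∞ v) (hw : WeakSol b v)
    {g P Q G : E → ℝ} (hg : ContDiff ℝ ∞ g) (hP : Continuous P) (hQ : Continuous Q)
    (hPQ : ∀ x, g x = P x * Q x) (hG : ∀ x, fderiv ℝ g x = G x • fderiv ℝ v x)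
    (hGQ : ∀ x, Q x ^ 2 ≤ G x)
    {η : E → ℝ} (hη : ContDiff ℝ ∞ η) (hηs : HasCompactSupport η) :
    ∫ x, η x ^ 2 * (Q x ^ 2 * ‖fderiv ℝ v x‖ ^ 2) ≤ 4 * L / l * ∫ x, P x ^ 2 * ‖fderiv ℝ η x‖ ^ 2 := by
  have hvd : Continuous (fderiv ℝ v) := hv.continuous_fderiv (by simp)
  have hηd : Continuous (fderiv ℝ η) := hη.continuous_fderiv (by simp)
  have hηds : HasCompactSupport (fderiv ℝ η) := hηs.fderiv ℝ
  set φ : E → ℝ := fun x => η x ^ 2 * g x with hφ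
  have hφc : ContDiff ℝ ∞ φ := (hη.pow 2).mul hg
  have hφs : HasCompactSupport φ := by
    refine HasCompactSupport.intro hηs fun x hx => ?_
    simp [hφ, image_eq_zero_of_notMem_tsupport hx]
  have hφd : ∀ x, fderiv ℝ φ x = (2 * η x * g x) • fderiv ℝ η x + (η x ^ 2 * G x) • fderiv ℝ v x := by
    intro x
    have h1 : HasFDerivAt η (fderiv ℝ η x) x := (hη.differentiable (by simp) x).hasFDerivAt
    have h2 : HasFDerivAt g (fderiv ℝ g x) x := (hg.differentiable (by simp) x).hasFDerivAt
    have h3 := ((h1.pow 2).mul h2).fderiv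
    have : fderiv ℝ φ x = _ := h3
    rw [this, hG]
    ext y; simp; ring
  have key := hw φ hφc hφs
  have hint1 : Integrable (fun x => b x (fderiv ℝ v x) (fderiv ℝ φ x)) := by
    apply Continuous.integrable_of_hasCompactSupport
    · have : Continuous (fderiv ℝ φ) := hφc.continuous_fderiv (by simp)
      exact hb.cont _ _ hvd this
    · refine HasCompactSupport.intro (hφs.fderiv ℝ) fun x hx => ?_
      rw [image_eq_zero_of_notMem_tsupport hx]; simp
  have hint2 : Integrable (fun x => η x ^ 2 * (Q x ^ 2 * ‖fderiv ℝ v x‖ ^ 2)) := by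
    apply Continuous.integrable_of_hasCompactSupport
    · have := hη.continuous
      fun_prop
    · refine HasCompactSupport.intro hηs fun x hx => ?_
      rw [image_eq_zero_of_notMem_tsupport hx]; simp
  have hint3 : Integrable (fun x => P x ^ 2 * ‖fderiv ℝ η x‖ ^ 2) := by
    apply Continuous.integrable_of_hasCompactSupport
    · fun_prop
    · refine HasCompactSupport.intro hηds fun x hx => ?_
      rw [image_eq_zero_of_notMem_tsupport hx]; simp
  have hpt : ∀ x, l / 2 * (η x ^ 2 * (Q x ^ 2 * ‖fderiv ℝ v x‖ ^ 2))
      - 2 * L * (P x ^ 2 * ‖fderiv ℝ η x‖ ^ 2) ≤ b x (fderiv ℝ v x) (fderiv ℝ φ x) := by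
    intro x
    rw [hφd]
    set A := fderiv ℝ v x
    set B := fderiv ℝ η x
    have e1 := hb.low x ((η x * Q x) • A + (2 * P x) • B)
    have e2 := hb.low x A
    have e3 := hb.up x B
    have e0 : 0 ≤ l * ‖((η x * Q x) • A + (2 * P x) • B)‖ ^ 2 := by positivity
    have e4 : 0 ≤ b x A A := le_trans (by positivity) e2
    simp only [map_add, map_smul, LinearMap.add_apply, LinearMap.smul_apply,
      smul_eq_mul] at e1 ⊢
    rw [hb.symm x B A] at e1
    rw [hPQ x]
    have e5 := mul_le_mul_of_nonneg_left (hGQ x) (mul_nonneg (sq_nonneg (η x)) e4)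
    have e6 := mul_le_mul_of_nonneg_left e2 (sq_nonneg (η x * Q x))
    have e7 := mul_le_mul_of_nonneg_left e3 (sq_nonneg (P x))
    nlinarith
  have hI := integral_mono ((hint2.const_mul (l/2)).sub (hint3.const_mul (2 * L))) hint1 hpt
  have hI2 : l / 2 * (∫ x, η x ^ 2 * (Q x ^ 2 * ‖fderiv ℝ v x‖ ^ 2))
      - 2 * L * (∫ x, P x ^ 2 * ‖fderiv ℝ η x‖ ^ 2) ≤ 0 := by
    rw [key] at hI
    simp only [Pi.sub_apply] at hI
    rwa [integral_sub (hint2.const_mul (l/2)) (hint3.const_mul (2 * L)), integral_const_mul,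
      integral_const_mul] at hI
  rw [div_mul_eq_mul_div, le_div_iff₀ hl]
  linarith



variable (E) in
lemma sobolev_real {p : ℝ} (hp : Real.HolderConjugate (Module.finrank ℝ E) p) :
    ∃ S : ℝ, 0 < S ∧ ∀ u : E → ℝ, ContDiff ℝ 1 u → HasCompactSupport u →
      ∫ x, |u x| ^ p ≤ S * (∫ x, ‖fderiv ℝ u x‖) ^ p := by
  refine ⟨lintegralPowLePowLIntegralFDerivConst (volume : Measure E) p + 1, by positivity, ?_⟩
  intro u hu hus
  have hp0 : 0 < p := hp.symm.pos
  have h := lintegral_pow_le_pow_lintegral_fderiv (volume : Measure E) hu hus hp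
  set S := lintegralPowLePowLIntegralFDerivConst (volume : Measure E) p
  have hud : Continuous (fderiv ℝ u) := hu.continuous_fderiv (by simp)
  have hi1 : Integrable (fun x => ‖fderiv ℝ u x‖) := by
    apply Continuous.integrable_of_hasCompactSupport (by fun_prop)
    exact (hus.fderiv ℝ).norm
  have hi2 : Integrable (fun x => |u x| ^ p) := by
    apply Continuous.integrable_of_hasCompactSupport
    · exact (hu.continuous.abs).rpow_const (fun _ => Or.inr hp0.le)
    · refine HasCompactSupport.intro hus fun x hx => ?_
      rw [image_eq_zero_of_notMem_tsupport hx]; simp [hp0.ne']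
  have e1 : ∫⁻ x, ‖fderiv ℝ u x‖ₑ = ENNReal.ofReal (∫ x, ‖fderiv ℝ u x‖) := by
    rw [ofReal_integral_eq_lintegral_ofReal hi1 (Filter.Eventually.of_forall fun _ => norm_nonneg _)]
    simp
  have e2 : ∫⁻ x, ‖u x‖ₑ ^ p = ENNReal.ofReal (∫ x, |u x| ^ p) := by
    rw [ofReal_integral_eq_lintegral_ofReal hi2 (Filter.Eventually.of_forall fun _ => by positivity)]
    congr with x
    rw [← ENNReal.ofReal_rpow_of_nonneg (abs_nonneg _) hp0.le, ← Real.norm_eq_abs, ofReal_norm]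
  have hn : 0 ≤ ∫ x, ‖fderiv ℝ u x‖ := integral_nonneg fun _ => norm_nonneg _
  rw [e1, e2, ENNReal.ofReal_rpow_of_nonneg hn hp0.le, ← ENNReal.ofReal_coe_nnreal,
    ← ENNReal.ofReal_mul (by positivity)] at h
  rw [ENNReal.ofReal_le_ofReal_iff (by positivity)] at h
  refine h.trans ?_
  gcongr
  simp

variable (E) in
lemma moser_step {p : ℝ} (hp : Real.HolderConjugate (Module.finrank ℝ E) p) {l L : ℝ} (hl : 0 < l)
    (hL : 0 < L) :
    ∃ C : ℝ, 1 ≤ C ∧ ∀ (b : E → (E →L[ℝ] ℝ) →ₗ[ℝ] (E →L[ℝ] ℝ) →ₗ[ℝ] ℝ), EllForm b l L →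
    ∀ v : E → ℝ, ContDiff ℝ ∞ v → WeakSol b v →
    ∀ f Q G : E → ℝ, ContDiff ℝ ∞ f → ContDiff ℝ ∞ Q → (∀ x, 0 ≤ f x) →
      (∀ x, fderiv ℝ f x = Q x • fderiv ℝ v x) →
      (∀ x, fderiv ℝ (fun y => f y * Q y) x = G x • fderiv ℝ v x) → (∀ x, Q x ^ 2 ≤ G x) →
    ∀ r R : ℝ, 0 < r → r < R → R ≤ r + 1 →
      ∫ x in closedBall (0:E) r, (f x) ^ (2 * p) ≤
        (C / (R - r) ^ 2 * ∫ x in closedBall (0:E) R, (f x) ^ 2) ^ p := by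
  obtain ⟨S, hS, hSob⟩ := sobolev_real E hp
  obtain ⟨K, hK, hcut⟩ := cutoff_exists E
  have hp0 : 0 < p := hp.symm.pos
  set C0 : ℝ := 2 + (1 + 4 * L / l) * K ^ 2 with hC0
  have hC0p : 0 < C0 := by positivity
  refine ⟨max 1 (S ^ (1 / p) * C0), le_max_left _ _, ?_⟩
  intro b hb v hv hw f Q G hf hQ hf0 hfQ hG hGQ r R hr hrR hR1
  obtain ⟨η, hη, hηs, hη0, hη1, hηr, hηR, hηR', hηd⟩ := hcut r R hr hrR
  have hd : 0 < R - r := by linarith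
  have cac := caccioppoli hb hl hv hw (hf.mul hQ) hf.continuous hQ.continuous (fun x => rfl) hG hGQ hη hηs
  set u : E → ℝ := fun x => (η x * f x) ^ 2 with hu
  have huc : ContDiff ℝ ∞ u := (hη.mul hf).pow 2
  have hus : HasCompactSupport u := by
    refine HasCompactSupport.intro hηs fun x hx => ?_
    simp [hu, image_eq_zero_of_notMem_tsupport hx]
  have hsob := hSob u (huc.of_le (by simp)) hus
  have hηc := hη.continuous
  have hfc := hf.continuous
  have hQc := hQ.continuous
  have hηdc : Continuous (fderiv ℝ η) := hη.continuous_fderiv (by simp)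
  have hvdc : Continuous (fderiv ℝ v) := hv.continuous_fderiv (by simp)
  have hudc : Continuous (fderiv ℝ u) := huc.continuous_fderiv (by simp)
  -- left-hand side
  have hup : ∀ x, |u x| ^ p = (η x * f x) ^ (2 * p) := by
    intro x
    have : 0 ≤ η x * f x := mul_nonneg (hη0 x) (hf0 x)
    rw [abs_of_nonneg (by positivity), Real.rpow_mul this]
    simp [hu]
  have hLint : Integrable (fun x => |u x| ^ p) := by
    apply Continuous.integrable_of_hasCompactSupport
    · exact (huc.continuous.abs).rpow_const (fun _ => Or.inr hp0.le)
    · refine HasCompactSupport.intro hus fun x hx => ?_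
      rw [image_eq_zero_of_notMem_tsupport hx]; simp [hp0.ne']
  have hLHS : ∫ x in closedBall (0:E) r, (f x) ^ (2 * p) ≤ ∫ x, |u x| ^ p := by
    calc _ = ∫ x in closedBall (0:E) r, |u x| ^ p := by
            apply setIntegral_congr_fun measurableSet_closedBall
            intro x hx
            simp only
            rw [hup, hηr x hx, one_mul]
      _ ≤ _ := setIntegral_le_integral hLint (Filter.Eventually.of_forall fun _ => by positivity)
  -- the gradient bound
  have i1 : Integrable (fun x => η x ^ 2 * f x ^ 2) := by
    apply Continuous.integrable_of_hasCompactSupport (by fun_prop)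
    refine HasCompactSupport.intro hηs fun x hx => ?_
    rw [image_eq_zero_of_notMem_tsupport hx]; simp
  have i2 : Integrable (fun x => η x ^ 2 * (Q x ^ 2 * ‖fderiv ℝ v x‖ ^ 2)) := by
    apply Continuous.integrable_of_hasCompactSupport (by fun_prop)
    refine HasCompactSupport.intro hηs fun x hx => ?_
    rw [image_eq_zero_of_notMem_tsupport hx]; simp
  have i3 : Integrable (fun x => f x ^ 2 * ‖fderiv ℝ η x‖ ^ 2) := by
    apply Continuous.integrable_of_hasCompactSupport (by fun_prop)
    refine HasCompactSupport.intro (hηs.fderiv ℝ) fun x hx => ?_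
    rw [image_eq_zero_of_notMem_tsupport hx]; simp
  have i0 : Integrable (fun x => ‖fderiv ℝ u x‖) := by
    apply Continuous.integrable_of_hasCompactSupport (by fun_prop)
    exact (hus.fderiv ℝ).norm
  have hpt : ∀ x, ‖fderiv ℝ u x‖ ≤ 2 * (η x ^ 2 * f x ^ 2) +
      (η x ^ 2 * (Q x ^ 2 * ‖fderiv ℝ v x‖ ^ 2) + f x ^ 2 * ‖fderiv ℝ η x‖ ^ 2) := by
    intro x
    have h1 : HasFDerivAt η (fderiv ℝ η x) x := (hη.differentiable (by simp) x).hasFDerivAt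
    have h2 : HasFDerivAt f (fderiv ℝ f x) x := (hf.differentiable (by simp) x).hasFDerivAt
    have h3 : fderiv ℝ u x = _ := ((h1.mul h2).pow 2).fderiv
    have h4 : fderiv ℝ u x = (2 * (η x * f x)) • ((η x * Q x) • fderiv ℝ v x + f x • fderiv ℝ η x) := by
      rw [h3, hfQ]; ext y; simp [-mul_eq_mul_left_iff]; ring
    rw [h4, norm_smul]
    have h5 : ‖(η x * Q x) • fderiv ℝ v x + f x • fderiv ℝ η x‖ ≤
        |η x * Q x| * ‖fderiv ℝ v x‖ + f x * ‖fderiv ℝ η x‖ := by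
      refine (norm_add_le _ _).trans ?_
      rw [norm_smul, norm_smul, Real.norm_eq_abs, Real.norm_eq_abs, abs_of_nonneg (hf0 x)]
    have h6 : ‖2 * (η x * f x)‖ = 2 * (η x * f x) := by
      rw [Real.norm_of_nonneg]
      have := mul_nonneg (hη0 x) (hf0 x); linarith
    rw [h6]
    have h7 : 0 ≤ η x * f x := mul_nonneg (hη0 x) (hf0 x)
    have h8 := mul_le_mul_of_nonneg_left h5 (by linarith : 0 ≤ 2 * (η x * f x))
    have h9 : (|η x * Q x| * ‖fderiv ℝ v x‖) ^ 2 = η x ^ 2 * (Q x ^ 2 * ‖fderiv ℝ v x‖ ^ 2) := by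
      rw [mul_pow, sq_abs]; ring
    nlinarith [sq_nonneg (η x * f x - |η x * Q x| * ‖fderiv ℝ v x‖),
      sq_nonneg (η x * f x - f x * ‖fderiv ℝ η x‖)]
  have hgr := integral_mono i0 ((i1.const_mul 2).add (i2.add i3)) hpt
  have hsplit : ∫ x, (2 * (η x ^ 2 * f x ^ 2) +
      (η x ^ 2 * (Q x ^ 2 * ‖fderiv ℝ v x‖ ^ 2) + f x ^ 2 * ‖fderiv ℝ η x‖ ^ 2)) =
      2 * (∫ x, η x ^ 2 * f x ^ 2) + ((∫ x, η x ^ 2 * (Q x ^ 2 * ‖fderiv ℝ v x‖ ^ 2)) +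
        ∫ x, f x ^ 2 * ‖fderiv ℝ η x‖ ^ 2) := by
    rw [← integral_const_mul, ← integral_add i2 i3]
    exact integral_add (i1.const_mul 2) (i2.add i3)
  have hgr := hgr.trans_eq hsplit
  set J := ∫ x in closedBall (0:E) R, (f x) ^ 2 with hJ
  have hJ0 : 0 ≤ J := integral_nonneg fun _ => sq_nonneg _
  have hfi : IntegrableOn (fun x => (f x)^2) (closedBall (0:E) R) :=
    (by fun_prop : Continuous fun x => (f x)^2).continuousOn.integrableOn_compact (isCompact_closedBall _ _)
  have j1 : ∫ x, η x ^ 2 * f x ^ 2 ≤ J := by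
    rw [hJ, ← integral_indicator measurableSet_closedBall]
    apply integral_mono i1 (hfi.integrable_indicator measurableSet_closedBall)
    intro x
    by_cases hx : x ∈ closedBall (0:E) R
    · simp only [indicator_of_mem hx]
      have : η x ^ 2 ≤ 1 := by have := hη0 x; have := hη1 x; nlinarith
      nlinarith [sq_nonneg (f x)]
    · simp only [indicator_of_notMem hx]
      rw [hηR x hx]; simp
  have j3 : ∫ x, f x ^ 2 * ‖fderiv ℝ η x‖ ^ 2 ≤ (K / (R - r)) ^ 2 * J := by
    rw [hJ, ← integral_const_mul, ← integral_indicator measurableSet_closedBall]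
    apply integral_mono i3 (IntegrableOn.integrable_indicator (Integrable.const_mul hfi _) measurableSet_closedBall)
    intro x
    by_cases hx : x ∈ closedBall (0:E) R
    · simp only [indicator_of_mem hx]
      rw [mul_comm]
      have := hηd x
      gcongr
    · simp only [indicator_of_notMem hx]
      rw [hηR' x hx]; simp
  have hfin : ∫ x, ‖fderiv ℝ u x‖ ≤ C0 / (R - r) ^ 2 * J := by
    have k1 : ∫ x, ‖fderiv ℝ u x‖ ≤ 2 * J + (1 + 4 * L / l) * ((K / (R - r)) ^ 2 * J) := by
      have : (1 + 4 * L / l) * (∫ x, f x ^ 2 * ‖fderiv ℝ η x‖ ^ 2) ≤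
          (1 + 4 * L / l) * ((K / (R - r)) ^ 2 * J) := by gcongr
      linarith
    refine k1.trans ?_
    have k2 : 1 ≤ 1 / (R - r) ^ 2 := by
      rw [one_le_div (by positivity)]; nlinarith
    have k3 : C0 / (R - r) ^ 2 * J = 2 * J * (1 / (R - r) ^ 2) + (1 + 4 * L / l) * ((K / (R - r)) ^ 2 * J) := by
      rw [hC0]; field_simp
    rw [k3]
    nlinarith
  have hn : 0 ≤ ∫ x, ‖fderiv ℝ u x‖ := integral_nonneg fun _ => norm_nonneg _
  calc _ ≤ _ := hLHS
    _ ≤ _ := hsob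
    _ ≤ S * (C0 / (R - r) ^ 2 * J) ^ p := by gcongr
    _ = (S ^ (1/p) * C0 / (R - r) ^ 2 * J) ^ p := by
        rw [mul_div_assoc, mul_assoc, Real.mul_rpow (x := S ^ (1/p)) (by positivity) (by positivity), ← Real.rpow_mul hS.le]
        simp [hp0.ne']
    _ ≤ _ := by
        gcongr
        exact le_max_right _ _


lemma moser_iter_arith {p C : ℝ} (hp : 1 < p) (hC : 1 ≤ C) : ∃ A : ℝ, 1 ≤ A ∧
    ∀ I : ℕ → ℝ, (∀ k, 0 ≤ I k) → (∀ k, I (k + 1) ≤ (C * 4 ^ k * I k) ^ p) →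
      ∀ k, I k ≤ (A * I 0) ^ (p ^ k) := by
  have hp1 : 0 < p - 1 := by linarith
  have hp0 : 0 < p := by linarith
  set B : ℝ := (4:ℝ) ^ (p / (p - 1)) with hB
  have hB1 : 1 ≤ B := Real.one_le_rpow (by norm_num) (by positivity)
  have hBC : 1 ≤ B * C ^ p := one_le_mul_of_one_le_of_one_le hB1 (Real.one_le_rpow hC hp0.le)
  set A : ℝ := (B * C ^ p) ^ (1 / (p - 1)) with hA
  have hA1 : 1 ≤ A := Real.one_le_rpow hBC (by positivity)
  have hA0 : 0 < A := by linarith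
  have hB0 : 0 < B := by linarith
  have hBp : B ^ p = B * 4 ^ p := by
    have : B ^ (p - 1) = 4 ^ p := by
      rw [hB, ← Real.rpow_mul (by norm_num)]; congr 1; field_simp
    rw [← this, ← Real.rpow_one_add' hB0.le (by simp; positivity)]; congr 1; ring
  have hAp : A ^ p = A * (B * C ^ p) := by
    have : A ^ (p - 1) = B * C ^ p := by
      rw [hA, ← Real.rpow_mul (by positivity)]
      have : 1 / (p - 1) * (p - 1) = 1 := by field_simp
      rw [this, Real.rpow_one]
    rw [← this, ← Real.rpow_one_add' hA0.le (by simp; positivity)]; congr 1; ring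
  refine ⟨A, hA1, fun I hI0 hI => ?_⟩
  have hZ : ∀ k, A * B ^ k * I k ≤ (A * I 0) ^ (p ^ k) := by
    intro k
    induction k with
    | zero => simp
    | succ k ih =>
      have hk := hI0 k
      calc A * B ^ (k + 1) * I (k + 1) ≤ A * B ^ (k + 1) * (C * 4 ^ k * I k) ^ p := by
              gcongr; exact hI k
        _ = (A * B ^ k * I k) ^ p := by
              rw [Real.mul_rpow (by positivity) hk, Real.mul_rpow (by positivity) (by positivity),
                Real.mul_rpow (x := A * B ^ k) (by positivity) hk, Real.mul_rpow hA0.le (by positivity), hAp,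
                ← Real.rpow_pow_comm hB0.le, hBp, ← Real.rpow_pow_comm (by norm_num)]
              ring
        _ ≤ ((A * I 0) ^ (p ^ k)) ^ p := by
              gcongr
        _ = _ := by
              rw [← Real.rpow_mul (mul_nonneg hA0.le (hI0 0)), pow_succ]
  intro k
  refine le_trans ?_ (hZ k)
  have : 1 ≤ A * B ^ k := one_le_mul_of_one_le_of_one_le hA1 (one_le_pow₀ hB1)
  nlinarith [hI0 k]

variable (E) in
lemma moser_sup {p : ℝ} (hp : Real.HolderConjugate (Module.finrank ℝ E) p) {l L : ℝ} (hl : 0 < l)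
    (hL : 0 < L) :
    ∃ A : ℝ, 1 ≤ A ∧ ∀ (b : E → (E →L[ℝ] ℝ) →ₗ[ℝ] (E →L[ℝ] ℝ) →ₗ[ℝ] ℝ), EllForm b l L →
    ∀ v : E → ℝ, ContDiff ℝ ∞ v → WeakSol b v →
    ∀ w m : E → ℝ, ContDiff ℝ ∞ w → ContDiff ℝ ∞ m → (∀ x, 1 ≤ w x) →
      (∀ x, fderiv ℝ w x = m x • fderiv ℝ v x) →
      (∀ x, fderiv ℝ m x = (m x) ^ 2 • fderiv ℝ v x) →
    ∀ x ∈ ball (0:E) 1, (w x) ^ 2 ≤ A * ∫ x in closedBall (0:E) 2, (w x) ^ 2 := by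
  obtain ⟨C, hC, hstep⟩ := moser_step E hp hl hL
  have hp1 : 1 < p := hp.symm.lt
  obtain ⟨A, hA, hiter⟩ := moser_iter_arith hp1 (C := 4 * C) (by linarith)
  refine ⟨A, hA, ?_⟩
  intro b hb v hv hws w m hw hm hw1 hdw hdm x0 hx0
  have hw0 : ∀ x, 0 < w x := fun x => by linarith [hw1 x]
  have hwr : ∀ q : ℝ, ContDiff ℝ ∞ (fun x => w x ^ q) := fun q =>
    hw.rpow_const_of_ne (fun x => (hw0 x).ne')
  set I : ℕ → ℝ := fun k => ∫ x in closedBall (0:E) (1 + (1/2) ^ k), (w x) ^ (2 * p ^ k) with hI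
  have hI0 : ∀ k, 0 ≤ I k := fun k => integral_nonneg fun x => Real.rpow_nonneg (hw0 x).le _
  have hI1 : ∀ k, I (k + 1) ≤ (4 * C * 4 ^ k * I k) ^ p := by
    intro k
    set q : ℝ := p ^ k with hq
    have hq1 : 1 ≤ q := one_le_pow₀ hp1.le
    have hhalf : (0:ℝ) < (1/2) ^ k := by positivity
    have hhalf1 : ((1:ℝ)/2) ^ k ≤ 1 := pow_le_one₀ (by norm_num) (by norm_num)
    have D1 : ∀ (q : ℝ) x, HasFDerivAt (fun x => w x ^ q) ((q * w x ^ (q - 1) * m x) • fderiv ℝ v x) x := by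
      intro q x
      have := ((hw.differentiable (by simp) x).hasFDerivAt).rpow_const (p := q) (Or.inl (hw0 x).ne')
      rw [hdw] at this
      refine this.congr_fderiv ?_
      ext y; simp; ring
    have D2 : ∀ x, HasFDerivAt m ((m x) ^ 2 • fderiv ℝ v x) x := by
      intro x
      have := ((hm.differentiable (by simp) x).hasFDerivAt)
      rwa [hdm] at this
    have := hstep b hb v hv hws (fun x => w x ^ q) (fun x => q * w x ^ (q - 1) * m x)
      (fun x => w x ^ q * (q * ((q - 1) * w x ^ (q - 1 - 1) * m x) * m x + q * w x ^ (q - 1) * m x ^ 2)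
        + (q * w x ^ (q - 1) * m x) ^ 2) (hwr q)
      ((contDiff_const.mul (hwr (q-1))).mul hm) (fun x => Real.rpow_nonneg (hw0 x).le _)
      (fun x => (D1 q x).fderiv) ?_ ?_ (1 + (1/2) ^ (k + 1)) (1 + (1/2) ^ k) (by positivity) ?_ ?_
    · have e1 : (1 + (1/2:ℝ) ^ k - (1 + (1/2) ^ (k + 1))) = (1/2) ^ (k+1) := by ring
      rw [e1] at this
      have e2 : C / ((1/2:ℝ) ^ (k+1)) ^ 2 = 4 * C * 4 ^ k := by
        have e3 : ((1/2:ℝ) ^ (k+1)) ^ 2 = (4 * 4 ^ k)⁻¹ := by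
          rw [← pow_mul, mul_comm (k+1) 2, pow_mul, ← pow_succ', ← inv_pow]; norm_num
        rw [e3, div_inv_eq_mul]; ring
      rw [e2] at this
      have f1 : I (k + 1) = ∫ x in closedBall (0:E) (1 + (1/2) ^ (k + 1)), (w x ^ q) ^ (2 * p) := by
        apply setIntegral_congr_fun measurableSet_closedBall
        intro x hx
        simp only
        rw [← Real.rpow_mul (hw0 x).le, pow_succ]; congr 1; ring
      have f2 : I k = ∫ x in closedBall (0:E) (1 + (1/2) ^ k), (w x ^ q) ^ 2 := by
        apply setIntegral_congr_fun measurableSet_closedBall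
        intro x hx
        simp only
        rw [← Real.rpow_two, ← Real.rpow_mul (hw0 x).le]; congr 1; ring
      rw [f1, f2]; exact this
    · intro x
      have h := (D1 q x).mul (((D1 (q-1) x).const_mul q).mul (D2 x))
      have h' := h.fderiv
      refine Eq.trans ?_ (h'.trans ?_)
      · congr 1
      · ext y; simp [-mul_eq_mul_left_iff, -mul_eq_mul_right_iff]; ring
    · intro x
      have a1 := Real.rpow_nonneg (hw0 x).le q
      have a2 := Real.rpow_nonneg (hw0 x).le (q-1)
      have a3 := Real.rpow_nonneg (hw0 x).le (q-1-1)
      have a4 : 0 ≤ q - 1 := by linarith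
      have a5 : (0:ℝ) ≤ q := by linarith
      have : 0 ≤ w x ^ q * (q * ((q - 1) * w x ^ (q - 1 - 1) * m x) * m x + q * w x ^ (q - 1) * m x ^ 2) := by
        have : q * ((q - 1) * w x ^ (q - 1 - 1) * m x) * m x = q * ((q - 1) * w x ^ (q - 1 - 1)) * m x ^ 2 := by ring
        rw [this]; positivity
      linarith
    · rw [pow_succ]; linarith
    · rw [pow_succ]; linarith
  have hI2 := hiter I hI0 hI1
  have hI00 : I 0 = ∫ x in closedBall (0:E) 2, (w x) ^ 2 := by
    simp only [hI]; norm_num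
  rw [← hI00]
  by_contra! hcon
  set Z := A * I 0 with hZ
  have hZ0 : 0 ≤ Z := mul_nonneg (by linarith) (hI0 0)
  obtain ⟨c, hc1, hc2⟩ := exists_between hcon
  have hc0 : 0 < c := lt_of_le_of_lt hZ0 hc1
  have hnb : {x | c < w x ^ 2} ∩ ball (0:E) 1 ∈ nhds x0 := by
    apply Filter.inter_mem
    · exact (hw.continuous.pow 2).continuousAt.eventually (lt_mem_nhds hc2)
    · exact isOpen_ball.mem_nhds hx0
  obtain ⟨δ, hδ, hsub⟩ := Metric.mem_nhds_iff.1 hnb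
  set μ0 : ℝ := volume.real (ball x0 δ) with hμ0
  have hμpos : 0 < μ0 := by
    rw [hμ0, Measure.real]
    exact ENNReal.toReal_pos (measure_ball_pos _ _ hδ).ne' measure_ball_lt_top.ne
  have hk : ∀ k : ℕ, μ0 ≤ (Z / c) ^ (p ^ k) := by
    intro k
    have hint : IntegrableOn (fun x => (w x) ^ (2 * p ^ k)) (closedBall (0:E) (1 + (1/2) ^ k)) :=
      (hwr _).continuous.continuousOn.integrableOn_compact (isCompact_closedBall _ _)
    have hss : ball x0 δ ⊆ closedBall (0:E) (1 + (1/2) ^ k) := by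
      intro y hy
      have := (hsub hy).2
      simp at this ⊢
      have h2 : (0:ℝ) < (2 ^ k)⁻¹ := by positivity
      linarith
    have h1 : c ^ (p ^ k) * μ0 ≤ ∫ x in ball x0 δ, (w x) ^ (2 * p ^ k) := by
      apply setIntegral_ge_of_const_le_real measurableSet_ball measure_ball_lt_top.ne _ (hint.mono_set hss)
      intro x hx
      have : c ≤ w x ^ 2 := (hsub hx).1.le
      rw [Real.rpow_mul (hw0 x).le]
      have h0 : (0:ℝ) ≤ p ^ k := by positivity
      apply Real.rpow_le_rpow hc0.le _ h0
      simpa using this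
    have h2 : ∫ x in ball x0 δ, (w x) ^ (2 * p ^ k) ≤ I k := by
      apply setIntegral_mono_set hint (Filter.Eventually.of_forall fun x => Real.rpow_nonneg (hw0 x).le _)
      exact hss.eventuallyLE
    have h3 := (h1.trans h2).trans (hI2 k)
    rw [Real.div_rpow hZ0 hc0.le, le_div_iff₀ (by positivity), mul_comm]
    exact h3
  have hlim : Filter.Tendsto (fun k : ℕ => (Z / c) ^ (p ^ k)) Filter.atTop (nhds 0) := by
    have hz1 : Z / c < 1 := (div_lt_one hc0).2 hc1
    have hz0 : 0 ≤ Z / c := by positivity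
    exact (tendsto_rpow_atTop_of_base_lt_one _ (by linarith) hz1).comp (tendsto_pow_atTop_atTop_of_one_lt hp1)
  have := ge_of_tendsto' hlim hk
  linarith


lemma seg_bound {w : E → ℝ} (hw : ContDiff ℝ 1 w) (x y : E) :
    (w x - w y) ^ 2 ≤ ‖x - y‖ ^ 2 * ∫ t in (0:ℝ)..1, ‖fderiv ℝ w (y + t • (x - y))‖ ^ 2 := by
  have hwd : Continuous (fderiv ℝ w) := hw.continuous_fderiv (by simp)
  set h : ℝ → ℝ := fun t => fderiv ℝ w (y + t • (x - y)) (x - y) with hh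
  have hc : Continuous h := by
    have : Continuous fun t : ℝ => fderiv ℝ w (y + t • (x - y)) := by fun_prop
    exact this.clm_apply continuous_const
  have hder : ∀ t ∈ uIcc (0:ℝ) 1, HasDerivAt (fun t : ℝ => w (y + t • (x - y))) (h t) t := by
    intro t _
    have h1 : HasDerivAt (fun t : ℝ => y + t • (x - y)) (x - y) t := by
      simpa using ((hasDerivAt_id t).smul_const (x - y)).const_add y
    exact ((hw.differentiable (by simp) _).hasFDerivAt).comp_hasDerivAt t h1
  have hF := intervalIntegral.integral_eq_sub_of_hasDerivAt hder (hc.intervalIntegrable _ _)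
  have hF' : ∫ t in (0:ℝ)..1, h t = w x - w y := by rw [hF]; simp
  set a := w x - w y with ha
  have h0 : 0 ≤ ∫ t in (0:ℝ)..1, (h t - a) ^ 2 :=
    intervalIntegral.integral_nonneg (by norm_num) fun t _ => sq_nonneg _
  have h1 : ∫ t in (0:ℝ)..1, (h t - a) ^ 2 = (∫ t in (0:ℝ)..1, h t ^ 2) - a ^ 2 := by
    have : ∀ t, (h t - a) ^ 2 = h t ^ 2 - 2 * a * h t + a ^ 2 := fun t => by ring
    simp_rw [this]
    rw [intervalIntegral.integral_add, intervalIntegral.integral_sub, intervalIntegral.integral_const_mul, hF']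
    · simp; ring
    all_goals apply Continuous.intervalIntegrable; fun_prop
  have h2 : ∫ t in (0:ℝ)..1, h t ^ 2 ≤ ∫ t in (0:ℝ)..1, ‖x - y‖ ^ 2 * ‖fderiv ℝ w (y + t • (x - y))‖ ^ 2 := by
    apply intervalIntegral.integral_mono_on (by norm_num)
    · apply Continuous.intervalIntegrable; fun_prop
    · apply Continuous.intervalIntegrable; fun_prop
    · intro t _
      have := (fderiv ℝ w (y + t • (x - y))).le_opNorm (x - y)
      rw [← mul_pow, ← sq_abs (h t), mul_comm]
      exact pow_le_pow_left₀ (abs_nonneg _) this 2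
  rw [intervalIntegral.integral_const_mul] at h2
  linarith

lemma lintegral_affine_le {G : E → ENNReal} (hG : Measurable G) {t : ℝ} (ht : 1 / 2 ≤ t) (a : E) :
    ∫⁻ x, G (a + t • x) ≤ ENNReal.ofReal (2 ^ Module.finrank ℝ E) * ∫⁻ x, G x := by
  have ht0 : 0 < t := by linarith
  have h1 : ∫⁻ x, G (a + t • x) = ∫⁻ z, G (a + z) ∂(Measure.map (fun x : E => t • x) volume) := by
    rw [lintegral_map (by fun_prop) (by fun_prop)]
  rw [h1, Measure.map_addHaar_smul volume ht0.ne', lintegral_smul_measure, lintegral_add_left_eq_self G a,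
    smul_eq_mul]
  gcongr
  rw [abs_of_pos (by positivity), ← inv_pow]
  gcongr
  rw [inv_le_comm₀ ht0 (by norm_num)]; linarith

lemma double_bound {G : E → ENNReal} (hG : Measurable G) (B : Set E) (t : ℝ) :
    ∫⁻ x in B, ∫⁻ y in B, G (y + t • (x - y)) ≤
      ENNReal.ofReal (2 ^ Module.finrank ℝ E) * (∫⁻ x, G x) * volume B := by
  have hle : ∀ (s : ℝ) (a : E), 1/2 ≤ s → ∫⁻ x in B, G (a + s • x) ≤
      ENNReal.ofReal (2 ^ Module.finrank ℝ E) * ∫⁻ x, G x := fun s a hs =>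
    (setLIntegral_le_lintegral _ _).trans (lintegral_affine_le hG hs a)
  rcases le_total (1/2) t with ht | ht
  · rw [lintegral_lintegral_swap (by fun_prop)]
    calc _ ≤ ∫⁻ y in B, ENNReal.ofReal (2 ^ Module.finrank ℝ E) * ∫⁻ x, G x := by
            apply lintegral_mono
            intro y
            refine le_trans (le_of_eq ?_) (hle t ((1 - t) • y) ht)
            refine lintegral_congr fun x => ?_
            congr 1; module
      _ = _ := by rw [lintegral_const]; simp
  · calc _ ≤ ∫⁻ y in B, ENNReal.ofReal (2 ^ Module.finrank ℝ E) * ∫⁻ x, G x := by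
            apply lintegral_mono
            intro x
            refine le_trans (le_of_eq ?_) (hle (1 - t) (t • x) (by linarith))
            refine lintegral_congr fun y => ?_
            congr 1; module
      _ = _ := by rw [lintegral_const]; simp

lemma poincare {w : E → ℝ} (hw : ContDiff ℝ 1 w) {N : Set E} (hN : MeasurableSet N)
    (hNB : N ⊆ closedBall (0:E) 2) {W : ℝ} (hW : ∀ y ∈ N, |w y| ≤ W)
    (hNv : volume.real (closedBall (0:E) 2) ≤ 2 * volume.real N) :
    ∫ x in closedBall (0:E) 2, w x ^ 2 ≤
      64 * 2 ^ Module.finrank ℝ E * (∫ x in closedBall (0:E) 2, ‖fderiv ℝ w x‖ ^ 2)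
        + 2 * W ^ 2 * volume.real (closedBall (0:E) 2) := by
  set B := closedBall (0:E) 2 with hB
  have hBm : MeasurableSet B := measurableSet_closedBall
  have hwd : Continuous (fderiv ℝ w) := hw.continuous_fderiv (by simp)
  have hwc := hw.continuous
  set G : E → ENNReal := B.indicator fun z => ENNReal.ofReal (‖fderiv ℝ w z‖ ^ 2) with hG
  have hGm : Measurable G := Measurable.indicator (by fun_prop) hBm
  have hpt : ∀ x ∈ B, ∀ y ∈ N, ENNReal.ofReal (w x ^ 2) ≤
      32 * (∫⁻ t in Ioc (0:ℝ) 1, G (y + t • (x - y))) + ENNReal.ofReal (2 * W ^ 2) := by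
    intro x hx y hy
    have hyB := hNB hy
    have h1 : w x ^ 2 ≤ 32 * (∫ t in (0:ℝ)..1, ‖fderiv ℝ w (y + t • (x - y))‖ ^ 2) + 2 * W ^ 2 := by
      have a1 := seg_bound hw x y
      have a2 : ‖x - y‖ ^ 2 ≤ 16 := by
        have : ‖x - y‖ ≤ 4 := by
          refine (norm_sub_le _ _).trans ?_
          simp [hB] at hx hyB; linarith
        nlinarith [norm_nonneg (x - y)]
      have a3 : 0 ≤ ∫ t in (0:ℝ)..1, ‖fderiv ℝ w (y + t • (x - y))‖ ^ 2 :=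
        intervalIntegral.integral_nonneg (by norm_num) fun t _ => sq_nonneg _
      have a4 : w y ^ 2 ≤ W ^ 2 := by
        rw [← sq_abs]; exact pow_le_pow_left₀ (abs_nonneg _) (hW y hy) 2
      nlinarith [sq_nonneg (w x - 2 * w y)]
    have h2 : ∫⁻ t in Ioc (0:ℝ) 1, G (y + t • (x - y)) =
        ENNReal.ofReal (∫ t in (0:ℝ)..1, ‖fderiv ℝ w (y + t • (x - y))‖ ^ 2) := by
      rw [intervalIntegral.integral_of_le (by norm_num), ofReal_integral_eq_lintegral_ofReal]
      · apply setLIntegral_congr_fun measurableSet_Ioc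
        intro t ht
        have : y + t • (x - y) ∈ B :=
          (convex_closedBall (0:E) 2).add_smul_sub_mem hyB hx ⟨ht.1.le, ht.2⟩
        simp only [hG, indicator_of_mem this]
      · exact (Continuous.integrableOn_Ioc (by fun_prop))
      · exact Filter.Eventually.of_forall fun t => by positivity
    rw [h2]
    have h3 := ENNReal.ofReal_le_ofReal h1
    rw [ENNReal.ofReal_add (mul_nonneg (by norm_num)
      (intervalIntegral.integral_nonneg (by norm_num) fun t _ => sq_nonneg _)) (by positivity),
      ENNReal.ofReal_mul (by norm_num)] at h3
    simpa using h3
  have hfin : volume B ≠ ⊤ := measure_closedBall_lt_top.ne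
  have hNfin : volume N ≠ ⊤ := ne_top_of_le_ne_top hfin (measure_mono hNB)
  have hmain : (∫⁻ x in B, ENNReal.ofReal (w x ^ 2)) * volume N ≤
      32 * (ENNReal.ofReal (2 ^ Module.finrank ℝ E) * (∫⁻ x, G x) * volume B) +
        ENNReal.ofReal (2 * W ^ 2) * volume N * volume B := by
    calc (∫⁻ x in B, ENNReal.ofReal (w x ^ 2)) * volume N
        = ∫⁻ x in B, ∫⁻ y in N, ENNReal.ofReal (w x ^ 2) := by
          simp only [lintegral_const, Measure.restrict_apply MeasurableSet.univ, univ_inter]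
          rw [lintegral_mul_const _ (by fun_prop)]
      _ ≤ ∫⁻ x in B, ∫⁻ y in N, (32 * (∫⁻ t in Ioc (0:ℝ) 1, G (y + t • (x - y))) + ENNReal.ofReal (2 * W ^ 2)) := by
          apply setLIntegral_mono' hBm
          intro x hx
          apply setLIntegral_mono' hN
          intro y hy
          exact hpt x hx y hy
      _ = ∫⁻ x in B, ((∫⁻ y in N, 32 * (∫⁻ t in Ioc (0:ℝ) 1, G (y + t • (x - y)))) + ENNReal.ofReal (2 * W ^ 2) * volume N) := by
          congr with x
          rw [lintegral_add_right _ measurable_const]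
          simp
      _ = (∫⁻ x in B, ∫⁻ y in N, 32 * (∫⁻ t in Ioc (0:ℝ) 1, G (y + t • (x - y)))) + ENNReal.ofReal (2 * W ^ 2) * volume N * volume B := by
          rw [lintegral_add_right _ measurable_const]
          simp
      _ ≤ _ := by
          gcongr
          calc ∫⁻ x in B, ∫⁻ y in N, 32 * (∫⁻ t in Ioc (0:ℝ) 1, G (y + t • (x - y)))
              ≤ ∫⁻ x in B, ∫⁻ y in B, 32 * (∫⁻ t in Ioc (0:ℝ) 1, G (y + t • (x - y))) := by
                gcongr
            _ = 32 * ∫⁻ x in B, ∫⁻ y in B, (∫⁻ t in Ioc (0:ℝ) 1, G (y + t • (x - y))) := by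
                rw [← lintegral_const_mul' _ _ (by norm_num)]
                congr with x
                rw [← lintegral_const_mul' _ _ (by norm_num)]
            _ = 32 * ∫⁻ x in B, ∫⁻ t in Ioc (0:ℝ) 1, ∫⁻ y in B, G (y + t • (x - y)) := by
                congr with x
                rw [lintegral_lintegral_swap (by fun_prop)]
            _ = 32 * ∫⁻ t in Ioc (0:ℝ) 1, ∫⁻ x in B, ∫⁻ y in B, G (y + t • (x - y)) := by
                rw [lintegral_lintegral_swap]
                apply Measurable.aemeasurable
                apply Measurable.lintegral_prod_right'
                  (f := fun q : (E × ℝ) × E => G (q.2 + q.1.2 • (q.1.1 - q.2)))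
                fun_prop
            _ ≤ 32 * ∫⁻ t in Ioc (0:ℝ) 1, ENNReal.ofReal (2 ^ Module.finrank ℝ E) * (∫⁻ x, G x) * volume B := by
                gcongr with t
                exact double_bound hGm B t
            _ = _ := by
                simp
  have i1 : IntegrableOn (fun x => w x ^ 2) B :=
    (by fun_prop : Continuous fun x => w x ^ 2).continuousOn.integrableOn_compact (isCompact_closedBall _ _)
  have i2 : IntegrableOn (fun x => ‖fderiv ℝ w x‖ ^ 2) B :=
    (by fun_prop : Continuous fun x => ‖fderiv ℝ w x‖ ^ 2).continuousOn.integrableOn_compact (isCompact_closedBall _ _)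
  have e1 : ∫⁻ x in B, ENNReal.ofReal (w x ^ 2) = ENNReal.ofReal (∫ x in B, w x ^ 2) := by
    rw [ofReal_integral_eq_lintegral_ofReal i1 (Filter.Eventually.of_forall fun _ => sq_nonneg _)]
  have e2 : ∫⁻ x, G x = ENNReal.ofReal (∫ x in B, ‖fderiv ℝ w x‖ ^ 2) := by
    rw [ofReal_integral_eq_lintegral_ofReal i2 (Filter.Eventually.of_forall fun _ => sq_nonneg _), hG,
      lintegral_indicator hBm]
  have n1 : 0 ≤ ∫ x in B, w x ^ 2 := integral_nonneg fun _ => sq_nonneg _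
  have n2 : 0 ≤ ∫ x in B, ‖fderiv ℝ w x‖ ^ 2 := integral_nonneg fun _ => sq_nonneg _
  rw [e1, e2] at hmain
  have hreal := ENNReal.toReal_mono (by finiteness) hmain
  rw [ENNReal.toReal_add (by finiteness) (by finiteness)] at hreal
  simp only [ENNReal.toReal_mul, ENNReal.toReal_ofReal n1, ENNReal.toReal_ofReal n2,
    ENNReal.toReal_ofReal (by positivity : (0:ℝ) ≤ 2 ^ Module.finrank ℝ E),
    ENNReal.toReal_ofReal (by positivity : (0:ℝ) ≤ 2 * W ^ 2), ENNReal.toReal_ofNat] at hreal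
  change _ * volume.real N ≤ 32 * (_ * volume.real B) + _ * volume.real N * volume.real B at hreal
  have hBp : 0 < volume.real B :=
    ENNReal.toReal_pos (measure_closedBall_pos _ _ (by norm_num)).ne' hfin
  have hNp : 0 < volume.real N := by linarith
  set X := 2 ^ Module.finrank ℝ E * ∫ x in B, ‖fderiv ℝ w x‖ ^ 2 with hX
  have hX0 : 0 ≤ X := by positivity
  have h5 : 32 * (X * volume.real B) ≤ 64 * X * volume.real N := by nlinarith
  have h6 : (∫ x in B, w x ^ 2) * volume.real N ≤ (64 * X + 2 * W ^ 2 * volume.real B) * volume.real N := by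
    nlinarith
  have := le_of_mul_le_mul_right h6 hNp
  rw [hX] at this
  linarith


variable (E) in
lemma core_decay {p : ℝ} (hp : Real.HolderConjugate (Module.finrank ℝ E) p) {l L : ℝ} (hl : 0 < l)
    (hL : 0 < L) :
    ∃ δ : ℝ, 0 < δ ∧ ∀ (b : E → (E →L[ℝ] ℝ) →ₗ[ℝ] (E →L[ℝ] ℝ) →ₗ[ℝ] ℝ), EllForm b l L →
    ∀ v : E → ℝ, ContDiff ℝ ∞ v → WeakSol b v → (∀ x, -1 ≤ v x) → (∀ x, v x ≤ 1) →
      volume.real (closedBall (0:E) 2) ≤ 2 * volume.real (closedBall (0:E) 2 ∩ {x | v x ≤ 0}) →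
    ∀ x ∈ ball (0:E) 1, v x ≤ 1 - δ := by
  obtain ⟨A, hA, hsup⟩ := moser_sup E hp hl hL
  obtain ⟨K, hK, hcut⟩ := cutoff_exists E
  obtain ⟨η, hη, hηs, hη0, hη1, hηr, hηR, hηR', hηd⟩ := hcut 2 3 (by norm_num) (by norm_num)
  set W : ℝ := 1 + Real.log 3 with hW
  have hlog3 : 0 ≤ Real.log 3 := Real.log_nonneg (by norm_num)
  set M1 : ℝ := 4 * L / l * ∫ x, (1:ℝ) ^ 2 * ‖fderiv ℝ η x‖ ^ 2 with hM1
  set M2 : ℝ := 64 * 2 ^ Module.finrank ℝ E * M1 + 2 * W ^ 2 * volume.real (closedBall (0:E) 2) with hM2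
  refine ⟨Real.exp (W - Real.sqrt (A * M2)), Real.exp_pos _, ?_⟩
  intro b hb v hv hws hv1 hv2 hvol x0 hx0
  have hkey : ∀ ε : ℝ, 0 < ε → ε ≤ 1 → v x0 ≤ 1 - Real.exp (W - Real.sqrt (A * M2)) + ε := by
    intro ε hε hε1
    have hpos : ∀ x, 0 < 1 + ε - v x := fun x => by linarith [hv2 x]
    set m : E → ℝ := fun x => (1 + ε - v x)⁻¹ with hm
    set w : E → ℝ := fun x => W - Real.log (1 + ε - v x) with hw
    have hbase : ContDiff ℝ ∞ fun x => 1 + ε - v x := contDiff_const.sub hv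
    have hmc : ContDiff ℝ ∞ m := hbase.inv fun x => (hpos x).ne'
    have hwc : ContDiff ℝ ∞ w := contDiff_const.sub (hbase.log fun x => (hpos x).ne')
    have hbd : ∀ x, HasFDerivAt (fun x => 1 + ε - v x) (-fderiv ℝ v x) x := fun x =>
      ((hv.differentiable (by simp) x).hasFDerivAt).const_sub _
    have hdm : ∀ x, fderiv ℝ m x = (m x) ^ 2 • fderiv ℝ v x := by
      intro x
      have h1 : HasFDerivAt m _ x := (hasDerivAt_inv (hpos x).ne').comp_hasFDerivAt x (hbd x)
      rw [h1.fderiv]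
      ext y; simp [hm]
    have hdw : ∀ x, fderiv ℝ w x = m x • fderiv ℝ v x := by
      intro x
      have h1 : HasFDerivAt w _ x := ((hbd x).log (hpos x).ne').const_sub W
      rw [h1.fderiv]
      ext y; simp [hm]
    have hw1 : ∀ x, 1 ≤ w x := by
      intro x
      have : Real.log (1 + ε - v x) ≤ Real.log 3 := Real.log_le_log (hpos x) (by linarith [hv1 x])
      simp only [hw, hW]; linarith
    have hcac := caccioppoli hb hl hv hws hmc (P := fun _ => 1) continuous_const hmc.continuous
      (fun x => (one_mul _).symm) hdm (fun x => le_rfl) hη hηs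
    have hvdc : Continuous (fderiv ℝ v) := hv.continuous_fderiv (by simp)
    have hmcc := hmc.continuous
    have hηc := hη.continuous
    have hen : ∫ x in closedBall (0:E) 2, ‖fderiv ℝ w x‖ ^ 2 ≤ M1 := by
      refine le_trans ?_ hcac
      have hint : Integrable (fun x => η x ^ 2 * (m x ^ 2 * ‖fderiv ℝ v x‖ ^ 2)) := by
        apply Continuous.integrable_of_hasCompactSupport (by fun_prop)
        refine HasCompactSupport.intro hηs fun x hx => ?_
        rw [image_eq_zero_of_notMem_tsupport hx]; simp
      calc _ = ∫ x in closedBall (0:E) 2, η x ^ 2 * (m x ^ 2 * ‖fderiv ℝ v x‖ ^ 2) := by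
              apply setIntegral_congr_fun measurableSet_closedBall
              intro x hx
              simp only
              rw [hηr x hx, hdw, norm_smul, mul_pow, Real.norm_eq_abs, sq_abs]; ring
        _ ≤ _ := setIntegral_le_integral hint (Filter.Eventually.of_forall fun _ => by positivity)
    have hNm : MeasurableSet (closedBall (0:E) 2 ∩ {x | v x ≤ 0}) :=
      measurableSet_closedBall.inter (isClosed_le hv.continuous continuous_const).measurableSet
    have hpo := poincare (hwc.of_le (by simp)) hNm inter_subset_left (W := W) (by
      rintro y ⟨_, hy⟩
      have hy : v y ≤ 0 := hy
      rw [abs_of_nonneg (by linarith [hw1 y])]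
      have : 0 ≤ Real.log (1 + ε - v y) := Real.log_nonneg (by linarith)
      simp only [hw]; linarith) hvol
    have hM : ∫ x in closedBall (0:E) 2, w x ^ 2 ≤ M2 := by
      refine hpo.trans ?_
      rw [hM2]; gcongr
    have hfin := hsup b hb v hv hws w m hwc hmc hw1 hdw hdm x0 hx0
    have hfin2 : w x0 ^ 2 ≤ A * M2 := hfin.trans (by gcongr)
    have hfin3 : w x0 ≤ Real.sqrt (A * M2) := Real.le_sqrt_of_sq_le hfin2
    have hfin4 : W - Real.sqrt (A * M2) ≤ Real.log (1 + ε - v x0) := by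
      simp only [hw] at hfin3; linarith
    have hfin5 := (Real.le_log_iff_exp_le (hpos x0)).1 hfin4
    linarith
  by_contra! hcon
  set d := v x0 - (1 - Real.exp (W - Real.sqrt (A * M2)))
  have hd : 0 < d := by simp only [d]; linarith
  have := hkey (min 1 (d / 2)) (by positivity) (min_le_left _ _)
  have h2 : min 1 (d / 2) ≤ d / 2 := min_le_right _ _
  simp only [d] at *
  linarith

lemma weakSol_scale {b : E → (E →L[ℝ] ℝ) →ₗ[ℝ] (E →L[ℝ] ℝ) →ₗ[ℝ] ℝ} {v : E → ℝ}
    (hv : ContDiff ℝ ∞ v) (hw : WeakSol b v) {R : ℝ} (hR : 0 < R) (α β : ℝ) :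
    WeakSol (fun x => b (R • x)) (fun x => α * v (R • x) + β) := by
  intro φ hφ hφs
  set ψ : E → ℝ := fun y => φ (R⁻¹ • y) with hψ
  have hψc : ContDiff ℝ ∞ ψ := hφ.comp (contDiff_const_smul _)
  have hψs : HasCompactSupport ψ := hφs.comp_smul (inv_ne_zero hR.ne')
  have h0 := hw ψ hψc hψs
  have hd1 : ∀ x, fderiv ℝ (fun x => α * v (R • x) + β) x = (α * R) • fderiv ℝ v (R • x) := by
    intro x
    have h1 : HasFDerivAt (fun x : E => R • x) (R • ContinuousLinearMap.id ℝ E) x :=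
      (hasFDerivAt_id x).const_smul R
    have h2 := ((((hv.differentiable (by simp) (R • x)).hasFDerivAt).comp x h1).const_mul α).add_const β
    have h3 : fderiv ℝ (fun x => α * v (R • x) + β) x = _ := h2.fderiv
    rw [h3]; ext y; simp; ring
  have hd2 : ∀ x, fderiv ℝ φ x = R • fderiv ℝ ψ (R • x) := by
    intro x
    have h1 : HasFDerivAt (fun x : E => R • x) (R • ContinuousLinearMap.id ℝ E) x :=
      (hasFDerivAt_id x).const_smul R
    have h2 := ((hψc.differentiable (by simp) (R • x)).hasFDerivAt).comp x h1
    have h3 : φ = ψ ∘ fun x => R • x := by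
      funext y; simp [hψ, hR.ne']
    rw [h3, h2.fderiv]
    ext y; simp
  have : (fun x => b (R • x) (fderiv ℝ (fun x => α * v (R • x) + β) x) (fderiv ℝ φ x)) =
      fun x => (α * R * R) * (fun y => b y (fderiv ℝ v y) (fderiv ℝ ψ y)) (R • x) := by
    funext x
    rw [hd1, hd2]
    simp only [map_smul, LinearMap.smul_apply, smul_eq_mul]; ring
  rw [this, integral_const_mul, Measure.integral_comp_smul volume (fun y => b y (fderiv ℝ v y) (fderiv ℝ ψ y)) R, h0]
  simp

lemma ellForm_scale {b : E → (E →L[ℝ] ℝ) →ₗ[ℝ] (E →L[ℝ] ℝ) →ₗ[ℝ] ℝ} {l L : ℝ}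
    (hb : EllForm b l L) {R : ℝ} (hR : 0 < R) : EllForm (fun x => b (R • x)) l L where
  cont ξ ζ hξ hζ := by
    have h := hb.cont (fun y => ξ (R⁻¹ • y)) (fun y => ζ (R⁻¹ • y)) (by fun_prop) (by fun_prop)
    have h2 := h.comp (continuous_const_smul R)
    refine h2.congr fun x => ?_
    simp [smul_smul, hR.ne']
  symm x := hb.symm (R • x)
  low x := hb.low (R • x)
  up x := hb.up (R • x)

lemma liouville_linear {p : ℝ} (hp : Real.HolderConjugate (Module.finrank ℝ E) p) {l L : ℝ} (hl : 0 < l)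
    (hL : 0 < L) {b : E → (E →L[ℝ] ℝ) →ₗ[ℝ] (E →L[ℝ] ℝ) →ₗ[ℝ] ℝ} (hb : EllForm b l L)
    {v : E → ℝ} (hv : ContDiff ℝ ∞ v) (hw : WeakSol b v) {C : ℝ} (hC : ∀ x, |v x| ≤ C) (x y : E) :
    v x = v y := by
  obtain ⟨δ, hδ, hcore⟩ := core_decay E hp hl hL
  by_contra hne
  have hba : BddAbove (range v) := ⟨C, by rintro _ ⟨z, rfl⟩; exact (abs_le.1 (hC z)).2⟩
  have hbb : BddBelow (range v) := ⟨-C, by rintro _ ⟨z, rfl⟩; exact (abs_le.1 (hC z)).1⟩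
  have hne' : (range v).Nonempty := ⟨v x, x, rfl⟩
  set M := sSup (range v) with hM
  set m := sInf (range v) with hm
  have hvM : ∀ z, v z ≤ M := fun z => le_csSup hba ⟨z, rfl⟩
  have hvm : ∀ z, m ≤ v z := fun z => csInf_le hbb ⟨z, rfl⟩
  have hMm : 0 < M - m := by
    rcases lt_or_gt_of_ne hne with h | h
    · linarith [hvM y, hvm x]
    · linarith [hvM x, hvm y]
  obtain ⟨_, ⟨x1, rfl⟩, hx1⟩ := exists_lt_of_lt_csSup hne' (show M - (M - m) * δ / 2 < M by
    have : 0 < (M - m) * δ := by positivity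
    linarith)
  obtain ⟨_, ⟨x2, rfl⟩, hx2⟩ := exists_lt_of_csInf_lt hne' (show m < m + (M - m) * δ / 2 by
    have : 0 < (M - m) * δ := by positivity
    linarith)
  set R : ℝ := ‖x1‖ + ‖x2‖ + 1 with hR
  have hR0 : 0 < R := by positivity
  have hb1 : ∀ z : E, ‖z‖ < R → R⁻¹ • z ∈ ball (0:E) 1 := by
    intro z hz
    rw [mem_ball_zero_iff, norm_smul, norm_inv, Real.norm_of_nonneg hR0.le, inv_mul_lt_iff₀ hR0]
    linarith
  have hx1b := hb1 x1 (by rw [hR]; linarith [norm_nonneg x2])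
  have hx2b := hb1 x2 (by rw [hR]; linarith [norm_nonneg x1])
  set α : ℝ := 2 / (M - m) with hα
  set β : ℝ := -(M + m) / (M - m) with hβ
  have hV : ∀ t : ℝ, α * t + β = (2 * t - M - m) / (M - m) := by intro t; rw [hα, hβ]; field_simp; ring
  have hV' : ∀ t : ℝ, -α * t + -β = -((2 * t - M - m) / (M - m)) := by intro t; rw [← hV]; ring
  have hVl : ∀ z, -1 ≤ (2 * v z - M - m) / (M - m) := by
    intro z; rw [le_div_iff₀ hMm]; linarith [hvm z]
  have hVu : ∀ z, (2 * v z - M - m) / (M - m) ≤ 1 := by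
    intro z; rw [div_le_iff₀ hMm]; linarith [hvM z]
  have hvs : ContDiff ℝ ∞ fun x : E => v (R • x) := hv.comp (contDiff_const_smul _)
  have c1 := hcore _ (ellForm_scale hb hR0) (fun x => α * v (R • x) + β)
    ((contDiff_const.mul hvs).add contDiff_const) (weakSol_scale hv hw hR0 α β)
    (fun x => by simp only [hV]; exact hVl _) (fun x => by simp only [hV]; exact hVu _)
  have c2 := hcore _ (ellForm_scale hb hR0) (fun x => -α * v (R • x) + -β)
    ((contDiff_const.mul hvs).add contDiff_const) (weakSol_scale hv hw hR0 (-α) (-β))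
    (fun x => by simp only [hV']; linarith [hVu (R • x)]) (fun x => by simp only [hV']; linarith [hVl (R • x)])
  set S1 := closedBall (0:E) 2 ∩ {x | α * v (R • x) + β ≤ 0}
  set S2 := closedBall (0:E) 2 ∩ {x | -α * v (R • x) + -β ≤ 0}
  have hcov : closedBall (0:E) 2 ⊆ S1 ∪ S2 := by
    intro z hz
    rcases le_total (α * v (R • z) + β) 0 with h | h
    · exact Or.inl ⟨hz, h⟩
    · exact Or.inr ⟨hz, by show -α * v (R • z) + -β ≤ 0; linarith⟩
  have hfin : volume (closedBall (0:E) 2) ≠ ⊤ := measure_closedBall_lt_top.ne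
  have f1 : volume S1 ≠ ⊤ := ne_top_of_le_ne_top hfin (measure_mono inter_subset_left)
  have f2 : volume S2 ≠ ⊤ := ne_top_of_le_ne_top hfin (measure_mono inter_subset_left)
  have hmeas : volume.real (closedBall (0:E) 2) ≤ volume.real S1 + volume.real S2 :=
    (measureReal_mono hcov (measure_union_ne_top f1 f2)).trans (measureReal_union_le _ _)
  rcases le_total (volume.real S1) (volume.real S2) with h | h
  · have := c2 (by linarith) _ hx2b
    simp only [hV', smul_smul, mul_inv_cancel₀ hR0.ne', one_smul] at this
    have h3 : δ - 1 ≤ (2 * v x2 - M - m) / (M - m) := by linarith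
    rw [le_div_iff₀ hMm] at h3
    nlinarith
  · have := c1 (by linarith) _ hx1b
    simp only [hV, smul_smul, mul_inv_cancel₀ hR0.ne', one_smul] at this
    rw [div_le_iff₀ hMm] at this
    nlinarith


abbrev Eu (n : ℕ) := EuclideanSpace ℝ (Fin n)

noncomputable def eb {n : ℕ} (i : Fin n) : Eu n := EuclideanSpace.single i 1

noncomputable def TT (n : ℕ) : (Eu n →L[ℝ] ℝ) →L[ℝ] Eu n :=
  ∑ i, (ContinuousLinearMap.apply ℝ ℝ (eb i)).smulRight (eb i)

lemma TT_apply {n : ℕ} (ℓ : Eu n →L[ℝ] ℝ) : TT n ℓ = ∑ i, ℓ (eb i) • eb i := by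
  simp [TT]

lemma TT_coord {n : ℕ} (ℓ : Eu n →L[ℝ] ℝ) (i : Fin n) : (TT n ℓ) i = ℓ (eb i) := by
  simp [TT_apply, eb, Finset.sum_apply, Pi.single_apply]

lemma TT_eq {n : ℕ} (ℓ : Eu n →L[ℝ] ℝ) : TT n ℓ = (InnerProductSpace.toDual ℝ (Eu n)).symm ℓ := by
  ext i
  rw [TT_coord, ← InnerProductSpace.toDual_symm_apply (𝕜 := ℝ) (x := eb i) (y := ℓ), eb,
    EuclideanSpace.inner_single_right]
  simp

lemma TT_norm {n : ℕ} (ℓ : Eu n →L[ℝ] ℝ) : ‖TT n ℓ‖ = ‖ℓ‖ := by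
  rw [TT_eq]; simp

lemma grad_eq {n : ℕ} (u : Eu n → ℝ) (x : Eu n) : gradient u x = TT n (fderiv ℝ u x) := by
  rw [TT_eq]; rfl

lemma eu_sum {n : ℕ} (x : Eu n) : x = ∑ i, x i • eb i := by
  ext j
  simp [eb, Finset.sum_apply, Pi.single_apply]

lemma hess_apply {n : ℕ} {f : Eu n → ℝ} (hf : ContDiff ℝ ∞ f) (p : Eu n) (i j : Fin n) :
    hessianMatrix f p i j = fderiv ℝ (fderiv ℝ f) p (eb i) (eb j) := by
  have hd : DifferentiableAt ℝ (fderiv ℝ f) p :=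
    ((hf.fderiv_right (m := ∞) (by simp)).differentiable (by simp)) p
  simp only [hessianMatrix, Matrix.of_apply]
  rw [fderiv_clm_apply hd (differentiableAt_const _)]
  simp [eb]

lemma d2_symm {n : ℕ} {f : Eu n → ℝ} (hf : ContDiff ℝ ∞ f) (p v w : Eu n) :
    fderiv ℝ (fderiv ℝ f) p v w = fderiv ℝ (fderiv ℝ f) p w v :=
  (hf.contDiffAt.isSymmSndFDerivAt (by simp only [minSmoothness_of_isRCLikeNormedField]; exact WithTop.coe_le_coe.2 le_top)) v w

lemma d2_pos {n : ℕ} {f : Eu n → ℝ} (hf : ContDiff ℝ ∞ f) (p v : Eu n) (hp : (hessianMatrix f p).PosDef)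
    (hv : v ≠ 0) : 0 < fderiv ℝ (fderiv ℝ f) p v v := by
  have h := hp.dotProduct_mulVec_pos (x := (v : Fin n → ℝ)) (by
    intro h; apply hv; ext i; simpa using congrFun h i)
  have e : fderiv ℝ (fderiv ℝ f) p v v = ∑ i, ∑ j, v i * v j * fderiv ℝ (fderiv ℝ f) p (eb i) (eb j) := by
    conv_lhs => rw [eu_sum v]
    simp only [map_sum, map_smul, _root_.sum_apply, _root_.smul_apply, smul_eq_mul,
      Finset.mul_sum]
    rw [Finset.sum_comm]
    refine Finset.sum_congr rfl fun i _ => Finset.sum_congr rfl fun j _ => ?_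
    ring
  rw [e]
  refine lt_of_lt_of_eq h (Eq.symm ?_)
  simp only [dotProduct, Matrix.mulVec, Finset.mul_sum]
  refine Finset.sum_congr rfl fun i _ => Finset.sum_congr rfl fun j _ => ?_
  rw [hess_apply hf]
  simp only [Pi.star_apply, star_trivial]; ring

noncomputable def bform {n : ℕ} (H u : Eu n → ℝ) (x : Eu n) :
    (Eu n →L[ℝ] ℝ) →ₗ[ℝ] (Eu n →L[ℝ] ℝ) →ₗ[ℝ] ℝ :=
  LinearMap.mk₂ ℝ (fun ℓ k => fderiv ℝ (fderiv ℝ H) (TT n (fderiv ℝ u x)) (TT n ℓ) (TT n k))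
    (by intros; simp) (by intros; simp) (by intros; simp) (by intros; simp)

lemma bform_apply {n : ℕ} (H u : Eu n → ℝ) (x : Eu n) (ℓ k) :
  bform H u x ℓ k = fderiv ℝ (fderiv ℝ H) (TT n (fderiv ℝ u x)) (TT n ℓ) (TT n k) := rfl

lemma bform_ell {n : ℕ} (hn : 0 < n) {H u : Eu n → ℝ} (hH : ContDiff ℝ ∞ H) (hu : ContDiff ℝ ∞ u)
    (hHconv : ∀ p, (hessianMatrix H p).PosDef) {C : ℝ} (hC : ∀ x, ‖gradient u x‖ ≤ C) :
    ∃ l L : ℝ, 0 < l ∧ 0 < L ∧ EllForm (bform H u) l L := by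
  have hc2 : Continuous (fderiv ℝ (fderiv ℝ H)) :=
    ((hH.fderiv_right (m := ∞) (by simp)).fderiv_right (m := ∞) (by simp)).continuous
  have hcu : Continuous (fderiv ℝ u) := (hu.fderiv_right (m := ∞) (by simp)).continuous
  have hmem : ∀ x, TT n (fderiv ℝ u x) ∈ closedBall (0 : Eu n) C := fun x => by
    rw [mem_closedBall_zero_iff, ← grad_eq]; exact hC x
  have : Nonempty (Fin n) := ⟨⟨0, hn⟩⟩
  have : Nontrivial (Eu n) := inferInstance
  have hK : IsCompact (closedBall (0 : Eu n) C ×ˢ sphere (0 : Eu n) 1) :=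
    (isCompact_closedBall _ _).prod (isCompact_sphere _ _)
  have hKne : (closedBall (0 : Eu n) C ×ˢ sphere (0 : Eu n) 1).Nonempty :=
    Set.Nonempty.prod ⟨_, hmem 0⟩ (NormedSpace.sphere_nonempty.2 zero_le_one)
  have hq : Continuous fun z : Eu n × Eu n => fderiv ℝ (fderiv ℝ H) z.1 z.2 z.2 := by fun_prop
  obtain ⟨z, hz, hzmin⟩ := hK.exists_isMinOn hKne hq.continuousOn
  obtain ⟨B, hB⟩ := (isCompact_closedBall (0 : Eu n) C).exists_bound_of_continuousOn (f := fderiv ℝ (fderiv ℝ H)) hc2.continuousOn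
  refine ⟨fderiv ℝ (fderiv ℝ H) z.1 z.2 z.2, max B 1, ?_, by positivity, ?_, ?_, ?_, ?_⟩
  · refine d2_pos hH _ _ (hHconv _) ?_
    have := hz.2
    intro h0
    simp [h0] at this
  · intro ξ ζ hξ hζ
    simp only [bform_apply]
    fun_prop
  · intro x ξ ζ
    exact d2_symm hH _ _ _
  · intro x ξ
    rw [bform_apply]
    by_cases h0 : ξ = 0
    · simp [h0]
    have hn0 : 0 < ‖TT n ξ‖ := by rw [TT_norm]; exact norm_pos_iff.2 h0
    have := hzmin (show (TT n (fderiv ℝ u x), ‖TT n ξ‖⁻¹ • TT n ξ) ∈ _ from ⟨hmem x, by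
      simp [norm_smul, hn0.ne']⟩)
    simp only [mem_ofPred_eq, map_smul, _root_.smul_apply, smul_eq_mul] at this
    rw [← TT_norm]
    calc _ ≤ _ := mul_le_mul_of_nonneg_right this (sq_nonneg _)
      _ = _ := by field_simp
  · intro x ξ
    rw [bform_apply]
    refine (le_abs_self _).trans ?_
    have h1 := (fderiv ℝ (fderiv ℝ H) (TT n (fderiv ℝ u x))).le_opNorm₂ (TT n ξ) (TT n ξ)
    rw [Real.norm_eq_abs] at h1
    refine h1.trans ?_
    rw [TT_norm, mul_assoc, ← sq]
    exact mul_le_mul_of_nonneg_right ((hB _ (hmem x)).trans (le_max_left _ _)) (sq_nonneg _)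

lemma ibp {n : ℕ} {f φ : Eu n → ℝ} (hf : ContDiff ℝ ∞ f) (hφ : ContDiff ℝ ∞ φ) (hs : HasCompactSupport φ)
    (w : Eu n) : ∫ x, f x * fderiv ℝ φ x w = - ∫ x, fderiv ℝ f x w * φ x := by
  have cf := hf.continuous
  have cφ := hφ.continuous
  have cf' : Continuous fun x => fderiv ℝ f x w := (hf.continuous_fderiv (by simp)).clm_apply continuous_const
  have cφ' : Continuous fun x => fderiv ℝ φ x w := (hφ.continuous_fderiv (by simp)).clm_apply continuous_const
  have hs' : HasCompactSupport fun x => fderiv ℝ φ x w := hs.fderiv_apply ℝ w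
  apply integral_mul_fderiv_eq_neg_fderiv_mul_of_integrable
  · exact (cf'.mul cφ).integrable_of_hasCompactSupport hs.mul_left
  · exact (cf.mul cφ').integrable_of_hasCompactSupport hs'.mul_left
  · exact (cf.mul cφ).integrable_of_hasCompactSupport hs.mul_left
  · exact fun x _ => hf.differentiable (by simp) x
  · exact fun x _ => hφ.differentiable (by simp) x

lemma weakSol_deriv {n : ℕ} {H u : Eu n → ℝ} (hH : ContDiff ℝ ∞ H) (hu : ContDiff ℝ ∞ u)
    (hEqn : ∀ x, ∑ i, ∑ j, hessianMatrix H (gradient u x) i j * hessianMatrix u x i j = 0) (k : Fin n) :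
    WeakSol (bform H u) (fun x => fderiv ℝ u x (eb k)) := by
  have hDH : ContDiff ℝ ∞ (fderiv ℝ H) := hH.fderiv_right (m := ∞) (by simp)
  have hDu : ContDiff ℝ ∞ (fderiv ℝ u) := hu.fderiv_right (m := ∞) (by simp)
  have hDud : Differentiable ℝ (fderiv ℝ u) := hDu.differentiable (by simp)
  have hg : ContDiff ℝ ∞ fun x => TT n (fderiv ℝ u x) := (TT n).contDiff.comp hDu
  let F : Fin n → Eu n → ℝ := fun i x => fderiv ℝ H (TT n (fderiv ℝ u x)) (eb i)
  have hF : ∀ i, ContDiff ℝ ∞ (F i) := fun i => (hDH.comp hg).clm_apply contDiff_const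
  have hF' : ∀ i x w, fderiv ℝ (F i) x w =
      fderiv ℝ (fderiv ℝ H) (TT n (fderiv ℝ u x)) (TT n (fderiv ℝ (fderiv ℝ u) x w)) (eb i) := by
    intro i x w
    have h1 : HasFDerivAt (fun x => TT n (fderiv ℝ u x)) ((TT n).comp (fderiv ℝ (fderiv ℝ u) x)) x :=
      (TT n).hasFDerivAt.comp x (hDud x).hasFDerivAt
    have h2 : HasFDerivAt (fun x => fderiv ℝ H (TT n (fderiv ℝ u x)))
        ((fderiv ℝ (fderiv ℝ H) (TT n (fderiv ℝ u x))).comp ((TT n).comp (fderiv ℝ (fderiv ℝ u) x))) x :=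
      HasFDerivAt.comp x ((hDH.differentiable (by simp)) _).hasFDerivAt h1
    have h3 := h2.clm_apply (hasFDerivAt_const (eb i) x)
    rw [show F i = fun x => fderiv ℝ H (TT n (fderiv ℝ u x)) (eb i) from rfl, h3.fderiv]
    simp
  have hdiv : ∀ x, ∑ i, fderiv ℝ (F i) x (eb i) = 0 := by
    intro x
    refine Eq.trans ?_ (hEqn x)
    refine Finset.sum_congr rfl fun i _ => ?_
    rw [hF', TT_apply (fderiv ℝ (fderiv ℝ u) x (eb i))]
    simp only [map_sum, map_smul, _root_.sum_apply, _root_.smul_apply, smul_eq_mul]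
    refine Finset.sum_congr rfl fun j _ => ?_
    rw [hess_apply hH, hess_apply hu, grad_eq, mul_comm, d2_symm hH]
  have int1 : ∀ (f φ : Eu n → ℝ) (w : Eu n), Continuous f → ContDiff ℝ ∞ φ → HasCompactSupport φ →
      Integrable (fun x => f x * fderiv ℝ φ x w) := by
    intro f φ w hf hφ hs
    have hs' : HasCompactSupport fun x => fderiv ℝ φ x w := hs.fderiv_apply ℝ w
    exact (hf.mul ((hφ.continuous_fderiv (by simp)).clm_apply continuous_const)).integrable_of_hasCompactSupport
      hs'.mul_left
  have key : ∀ φ : Eu n → ℝ, ContDiff ℝ ∞ φ → HasCompactSupport φ →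
      ∑ i, ∫ x, F i x * fderiv ℝ φ x (eb i) = 0 := by
    intro φ hφ hs
    have : ∀ i, ∫ x, F i x * fderiv ℝ φ x (eb i) = - ∫ x, fderiv ℝ (F i) x (eb i) * φ x :=
      fun i => ibp (hF i) hφ hs _
    simp only [this]
    rw [Finset.sum_neg_distrib, ← integral_finsetSum]
    · simp [← Finset.sum_mul, hdiv]
    · intro i _
      exact ((((hF i).continuous_fderiv (by simp)).clm_apply continuous_const).mul
        hφ.continuous).integrable_of_hasCompactSupport hs.mul_left
  intro ψ hψ hs
  have hψk : ContDiff ℝ ∞ fun x => fderiv ℝ ψ x (eb k) :=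
    (hψ.fderiv_right (m := ∞) (by simp)).clm_apply contDiff_const
  have hψks : HasCompactSupport fun x => fderiv ℝ ψ x (eb k) := hs.fderiv_apply ℝ _
  have dd : ∀ {f : Eu n → ℝ}, ContDiff ℝ ∞ f → ∀ x a w,
      fderiv ℝ (fun y => fderiv ℝ f y a) x w = fderiv ℝ (fderiv ℝ f) x w a := by
    intro f hf x a w
    have hd : DifferentiableAt ℝ (fderiv ℝ f) x :=
      ((hf.fderiv_right (m := ∞) (by simp)).differentiable (by simp)) x
    rw [fderiv_clm_apply hd (differentiableAt_const _)]
    simp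
  have hpt : ∀ x, bform H u x (fderiv ℝ (fun x => fderiv ℝ u x (eb k)) x) (fderiv ℝ ψ x) =
      ∑ i, fderiv ℝ (F i) x (eb k) * fderiv ℝ ψ x (eb i) := by
    intro x
    have e1 : fderiv ℝ (fun x => fderiv ℝ u x (eb k)) x = fderiv ℝ (fderiv ℝ u) x (eb k) := by
      ext w; rw [dd hu, d2_symm hu]
    rw [e1, bform_apply, TT_apply (fderiv ℝ ψ x), map_sum]
    refine Finset.sum_congr rfl fun i _ => ?_
    rw [hF', map_smul, smul_eq_mul, mul_comm]
  simp only [hpt]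
  rw [integral_finsetSum _ (fun i _ => int1 _ _ _
    (((hF i).continuous_fderiv (by simp)).clm_apply continuous_const) hψ hs)]
  have e2 : ∀ i, ∫ x, fderiv ℝ (F i) x (eb k) * fderiv ℝ ψ x (eb i) =
      - ∫ x, F i x * fderiv ℝ (fun y => fderiv ℝ ψ y (eb k)) x (eb i) := by
    intro i
    have h := ibp (hF i) ((hψ.fderiv_right (m := ∞) (by simp)).clm_apply contDiff_const)
      (hs.fderiv_apply ℝ (eb i)) (eb k)
    have h' : ∀ x, fderiv ℝ (fun y => fderiv ℝ ψ y (eb k)) x (eb i)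
        = fderiv ℝ (fun y => fderiv ℝ ψ y (eb i)) x (eb k) := by
      intro x; rw [dd hψ, dd hψ, d2_symm hψ]
    simp only [h']
    rw [h, neg_neg]
  simp only [e2]
  rw [Finset.sum_neg_distrib, key _ hψk hψks, neg_zero]

lemma grad_comp_const {n : ℕ} {H u : Eu n → ℝ} (hH : ContDiff ℝ ∞ H) (hu : ContDiff ℝ ∞ u)
    (hHconv : ∀ p, (hessianMatrix H p).PosDef) {C : ℝ} (hC : ∀ x, ‖gradient u x‖ ≤ C)
    (hEqn : ∀ x, ∑ i, ∑ j, hessianMatrix H (gradient u x) i j * hessianMatrix u x i j = 0) (k : Fin n)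
    (x y : Eu n) : fderiv ℝ u x (eb k) = fderiv ℝ u y (eb k) := by
  have hv : ContDiff ℝ ∞ fun x => fderiv ℝ u x (eb k) :=
    (hu.fderiv_right (m := ∞) (by simp)).clm_apply contDiff_const
  have hn : 0 < n := k.pos
  rcases Nat.lt_or_ge 1 n with h1 | h1
  · obtain ⟨l, L, hl, hL, hb⟩ := bform_ell hn hH hu hHconv hC
    have hp : Real.HolderConjugate (Module.finrank ℝ (Eu n)) (Real.conjExponent n) := by
      rw [finrank_euclideanSpace_fin]
      exact Real.HolderConjugate.conjExponent (by exact_mod_cast h1)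
    refine liouville_linear hp hl hL hb hv (weakSol_deriv hH hu hEqn k) (C := C) (fun z => ?_) x y
    have := (fderiv ℝ u z).le_opNorm (eb k)
    rw [← TT_norm, ← grad_eq] at this
    simpa [eb] using this.trans (mul_le_mul_of_nonneg_right (hC z) (norm_nonneg _))
  · obtain rfl : n = 1 := by omega
    refine is_const_of_fderiv_eq_zero (𝕜 := ℝ) (hv.differentiable (by simp)) (fun z => ?_) x y
    have h := hEqn z
    simp only [Fin.sum_univ_one, Fin.isValue] at h
    have h0 : hessianMatrix u z 0 0 = 0 :=
      (mul_eq_zero.1 h).resolve_left (hHconv _).diag_pos.ne'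
    have hk : k = 0 := Subsingleton.elim _ _
    subst hk
    ext w
    rw [eu_sum w]
    simp only [Fin.sum_univ_one, map_smul]
    have : fderiv ℝ (fun y => fderiv ℝ u y (eb 0)) z (eb 0) = 0 := h0
    rw [this]; simp

theorem liouville_aux {n : ℕ} {H u : Eu n → ℝ} (hH : ContDiff ℝ ∞ H) (hu : ContDiff ℝ ∞ u)
    (hHconv : ∀ p, (hessianMatrix H p).PosDef) {C : ℝ} (hC : ∀ x, ‖gradient u x‖ ≤ C)
    (hEqn : ∀ x, ∑ i, ∑ j, hessianMatrix H (gradient u x) i j * hessianMatrix u x i j = 0) :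
    ∃ (b : Fin n → ℝ) (c : ℝ), ∀ x, u x = (∑ i, b i * x i) + c := by
  have hud : Differentiable ℝ u := hu.differentiable (by simp)
  have hD : ∀ x, fderiv ℝ u x = fderiv ℝ u 0 := by
    intro x
    ext w
    rw [eu_sum w]
    simp only [map_sum, map_smul]
    exact Finset.sum_congr rfl fun i _ => by rw [grad_comp_const hH hu hHconv hC hEqn i x 0]
  refine ⟨fun i => fderiv ℝ u 0 (eb i), u 0, fun x => ?_⟩
  have h := is_const_of_fderiv_eq_zero (𝕜 := ℝ) (f := fun x => u x - fderiv ℝ u 0 x)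
    (hud.sub (fderiv ℝ u 0).differentiable) (fun z => by
      rw [fderiv_fun_sub (hud z) (fderiv ℝ u 0).differentiableAt, hD z]; simp) x 0
  have h2 : fderiv ℝ u 0 x = ∑ i, fderiv ℝ u 0 (eb i) * x i := by
    conv_lhs => rw [eu_sum x]
    simp only [map_sum, map_smul, smul_eq_mul]
    exact Finset.sum_congr rfl fun i _ => mul_comm _ _
  simp only [map_zero, sub_zero] at h
  linarith

end LinearTheory

/-- Liouville theorem for quasilinear equations: if `H` is smooth and uniformly
convex in the sense `D²H > 0`, and `u` is an entire smooth solution of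
`div(∇H(∇u)) = ∑ᵢⱼ Hᵢⱼ(∇u) uᵢⱼ = 0` with bounded gradient, then `u` is affine. -/
theorem liouville_quasilinear (n : ℕ)
    (H : EuclideanSpace ℝ (Fin n) → ℝ)
    (hH : ContDiff ℝ (⊤ : ℕ∞) H)
    (hHconv : ∀ p, (hessianMatrix H p).PosDef)
    (u : EuclideanSpace ℝ (Fin n) → ℝ)
    (hu : ContDiff ℝ (⊤ : ℕ∞) u)
    (hgrad : ∃ C : ℝ, ∀ x, ‖gradient u x‖ ≤ C)
    (hEqn : ∀ x, ∑ i, ∑ j, hessianMatrix H (gradient u x) i j * hessianMatrix u x i j = 0) :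
    ∃ (b : Fin n → ℝ) (c : ℝ), ∀ x, u x = (∑ i, b i * x i) + c := by
  obtain ⟨C, hC⟩ := hgrad
  exact liouville_aux hH hu hHconv hC hEqn
end

section
/- (Liouville theorem for supersolutions of divergence-form elliptic equations in the plane) Let λ ∈ (0,1] and let A : ℝ² → (2×2 symmetric matrices) be smooth with all eigenvalues of A(x) contained in [λ, λ^{-1}] for every x. Let w : ℝ² → ℝ be a smooth function with w ≥ 0 on ℝ² and div(A(x)∇w(x)) ≤ 0 for every x ∈ ℝ². Then w is constant. -/
open Real
open MeasureTheory
abbrev EE := EuclideanSpace ℝ (Fin 2)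

theorem int_deriv_zero (f : EE → ℝ) (hf : ContDiff ℝ 1 f) (hc : HasCompactSupport f) (v : EE) :
    Integrable (fun x => fderiv ℝ f x v) ∧ ∫ x, fderiv ℝ f x v = 0 := by
  have hI : Integrable (fun x => fderiv ℝ f x v) := by
    apply Continuous.integrable_of_hasCompactSupport
    · exact (hf.continuous_fderiv (by norm_num)).clm_apply continuous_const
    · exact hc.fderiv_apply (𝕜 := ℝ) v
  refine ⟨hI, ?_⟩
  have hfi : Integrable f := hf.continuous.integrable_of_hasCompactSupport hc
  have := integral_mul_fderiv_eq_neg_fderiv_mul_of_integrable (μ := (volume : Measure EE))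
    (f := fun _ : EE => (1:ℝ)) (g := f) (v := v) (by simp) (by simpa using hI) (by simpa using hfi)
    (fun _ _ => by fun_prop) (fun _ _ => hf.differentiable (by norm_num) _)
  simpa using this

theorem sq_sum_disj (N : ℕ) (a : ℕ → ℝ) (h : ∀ j k, j < k → a j * a k = 0) :
    (∑ k ∈ Finset.range N, a k) ^ 2 = ∑ k ∈ Finset.range N, a k ^ 2 := by
  induction N with
  | zero => simp
  | succ n ih =>
    rw [Finset.sum_range_succ, Finset.sum_range_succ, add_sq, ih]
    have : (∑ k ∈ Finset.range n, a k) * a n = 0 := by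
      rw [Finset.sum_mul]
      exact Finset.sum_eq_zero fun k hk => h k n (Finset.mem_range.1 hk)
    rw [mul_assoc, this]; ring

theorem cutoff : ∃ C : ℝ, ∀ R : ℝ, 0 < R → ∀ N : ℕ, 0 < N → ∃ η : EE → ℝ,
    ContDiff ℝ 1 η ∧ HasCompactSupport η ∧ (∀ x, ‖x‖ ≤ R → η x = 1) ∧
    ∫ x, ∑ i, (fderiv ℝ η x (EuclideanSpace.single i 1)) ^ 2 ≤ C / N := by
  let φ : ContDiffBump (0 : EE) := ⟨1, 2, by norm_num, by norm_num⟩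
  have hφ : ContDiff ℝ 1 φ := φ.contDiff
  have hφc : HasCompactSupport φ := φ.hasCompactSupport
  let e : Fin 2 → EE := fun i => EuclideanSpace.single i 1
  let g : Fin 2 → EE → ℝ := fun i x => fderiv ℝ φ x (e i)
  have hg0 : ∀ i x, g i x ≠ 0 → 1 ≤ ‖x‖ ∧ ‖x‖ ≤ 2 := by
    intro i x hx
    constructor
    · by_contra! hlt
      apply hx
      have : (φ : EE → ℝ) =ᶠ[nhds x] fun _ => 1 := by
        apply φ.eventuallyEq_one_of_mem_ball
        simpa [φ] using hlt
      simp [g, this.fderiv_eq]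
    · by_contra! hlt
      apply hx
      have : x ∉ tsupport (φ : EE → ℝ) := by
        rw [φ.tsupport_eq]; simpa [φ] using hlt
      have h2 : x ∉ tsupport (fderiv ℝ (φ : EE → ℝ)) := fun h => this (tsupport_fderiv_subset ℝ h)
      simp [g, image_eq_zero_of_notMem_tsupport h2]
  have hgi : ∀ i, Integrable (fun x => g i x ^ 2) := by
    intro i
    apply Continuous.integrable_of_hasCompactSupport
    · exact ((hφ.continuous_fderiv (by norm_num)).clm_apply continuous_const).pow 2
    · have : HasCompactSupport (g i) := hφc.fderiv_apply (𝕜 := ℝ) (e i)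
      exact this.comp_left (g := fun t : ℝ => t ^ 2) (by simp)
  refine ⟨∑ i, ∫ x, g i x ^ 2, fun R hR N hN => ?_⟩
  let c : ℕ → ℝ := fun k => (R * 3 ^ k)⁻¹
  have hc : ∀ k, 0 < c k := fun k => by positivity
  have hN' : (0:ℝ) < N := by exact_mod_cast hN
  have hd : ∀ k x, HasFDerivAt (fun x => φ (c k • x)) (c k • fderiv ℝ φ (c k • x)) x := by
    intro k x
    have h : Differentiable ℝ (fun x => φ (c k • x)) :=
      (hφ.differentiable (by norm_num)).comp (differentiable_id.const_smul (c k))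
    rw [← fderiv_comp_smul]
    exact (h x).hasFDerivAt
  refine ⟨fun x => (N:ℝ)⁻¹ * ∑ k ∈ Finset.range N, φ (c k • x), ?_, ?_, ?_, ?_⟩
  · refine contDiff_const.mul (ContDiff.sum fun k _ => hφ.comp (contDiff_id.const_smul (c k)))
  · apply HasCompactSupport.intro (isCompact_closedBall (0:EE) (2 * (R * 3 ^ N)))
    intro x hx
    have hx' : 2 * (R * 3 ^ N) < ‖x‖ := by simpa using hx
    rw [Finset.sum_eq_zero, mul_zero]
    intro k hk
    apply φ.zero_of_le_dist
    have h3 : (3:ℝ) ^ k ≤ 3 ^ N := pow_le_pow_right₀ (by norm_num) (Finset.mem_range.1 hk).le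
    have : 2 * (R * 3 ^ k) ≤ ‖x‖ := by
      have := mul_le_mul_of_nonneg_left h3 hR.le
      linarith
    simp only [dist_zero_right, norm_smul, Real.norm_eq_abs, abs_of_pos (hc k), φ, c]
    rw [inv_mul_eq_div, le_div_iff₀ (by positivity)]
    exact this
  · intro x hx
    have : ∀ k ∈ Finset.range N, φ (c k • x) = 1 := by
      intro k hk
      apply φ.one_of_mem_closedBall
      simp only [mem_closedBall_zero_iff, norm_smul, Real.norm_eq_abs, abs_of_pos (hc k), φ, c]
      rw [inv_mul_eq_div, div_le_one (by positivity)]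
      have : (1:ℝ) ≤ 3 ^ k := one_le_pow₀ (by norm_num)
      nlinarith
    beta_reduce
    rw [Finset.sum_congr rfl this]
    simp; field_simp
  · have hD : ∀ x i, fderiv ℝ (fun x => (N:ℝ)⁻¹ * ∑ k ∈ Finset.range N, φ (c k • x)) x (e i)
        = (N:ℝ)⁻¹ * ∑ k ∈ Finset.range N, c k * g i (c k • x) := by
      intro x i
      have := (HasFDerivAt.fun_sum (u := Finset.range N) fun k _ => hd k x).const_mul ((N:ℝ)⁻¹)
      rw [this.fderiv]
      simp [g]
    have hsq : ∀ x i, (fderiv ℝ (fun x => (N:ℝ)⁻¹ * ∑ k ∈ Finset.range N, φ (c k • x)) x (e i)) ^ 2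
        = ((N:ℝ)⁻¹) ^ 2 * ∑ k ∈ Finset.range N, c k ^ 2 * g i (c k • x) ^ 2 := by
      intro x i
      rw [hD, mul_pow, sq_sum_disj]
      · simp only [mul_pow]
      intro j k hjk
      by_contra hne
      have h1 : g i (c j • x) ≠ 0 := by
        intro h; simp [h] at hne
      have h2 : g i (c k • x) ≠ 0 := by
        intro h; simp [h] at hne
      have h1 := (hg0 _ _ h1).2
      have h2 := (hg0 _ _ h2).1
      simp only [norm_smul, Real.norm_eq_abs, abs_of_pos (hc _), c] at h1 h2
      rw [inv_mul_eq_div, div_le_iff₀ (by positivity)] at h1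
      rw [inv_mul_eq_div, le_div_iff₀ (by positivity)] at h2
      have h3 : (3:ℝ) ^ (j+1) ≤ 3 ^ k := pow_le_pow_right₀ (by norm_num) hjk
      rw [pow_succ] at h3
      have := mul_le_mul_of_nonneg_left h3 hR.le
      have : 0 < R * 3 ^ j := by positivity
      nlinarith
    have hint : ∀ i k, Integrable (fun x => c k ^ 2 * g i (c k • x) ^ 2) := fun i k =>
      ((hgi i).comp_smul (hc k).ne').const_mul _
    have hval : ∀ i k, ∫ x, c k ^ 2 * g i (c k • x) ^ 2 = ∫ x, g i x ^ 2 := by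
      intro i k
      rw [integral_const_mul, Measure.integral_comp_smul volume (fun x => g i x ^ 2) (c k)]
      simp only [finrank_euclideanSpace, Fintype.card_fin, smul_eq_mul]
      rw [abs_of_pos (by have := hc k; positivity), ← mul_assoc,
        mul_inv_cancel₀ (by have := hc k; positivity), one_mul]
    apply le_of_eq
    simp only [e] at hsq
    simp only [hsq]
    rw [integral_finsetSum]
    · simp only [integral_const_mul]
      rw [Finset.sum_div]
      refine Finset.sum_congr rfl fun i _ => ?_
      rw [integral_finsetSum _ (fun k _ => hint i k)]
      simp only [hval]
      simp; field_simp
    · intro i _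
      exact (integrable_finsetSum _ (fun k _ => hint i k)).const_mul _

theorem caccioppoli_s10 (lam : ℝ)
    (hlam : lam ∈ Set.Ioc (0 : ℝ) 1)
    (A : EE → Matrix (Fin 2) (Fin 2) ℝ)
    (hAsmooth : ∀ i j, ContDiff ℝ (⊤ : ℕ∞) (fun x => A x i j))
    (hAsym : ∀ x, (A x).IsSymm)
    (hAelliptic : ∀ x (ξ : Fin 2 → ℝ),
      lam * (∑ i, ξ i ^ 2) ≤ ∑ i, ∑ j, A x i j * ξ i * ξ j ∧
      ∑ i, ∑ j, A x i j * ξ i * ξ j ≤ lam⁻¹ * (∑ i, ξ i ^ 2))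
    (w : EE → ℝ)
    (hw : ContDiff ℝ (⊤ : ℕ∞) w)
    (hwpos : ∀ x, 0 ≤ w x)
    (hsuper : ∀ x, ∑ i, fderiv ℝ
        (fun y => ∑ j, A y i j * fderiv ℝ w y (EuclideanSpace.single j 1)) x
        (EuclideanSpace.single i 1) ≤ 0)
    (η : EE → ℝ) (hη : ContDiff ℝ 1 η) (hηc : HasCompactSupport η) :
    Integrable (fun x => η x ^ 2 *
      ∑ i, (fderiv ℝ w x (EuclideanSpace.single i 1) * (w x + 1)⁻¹) ^ 2) ∧
    lam / 2 * ∫ x, η x ^ 2 *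
      ∑ i, (fderiv ℝ w x (EuclideanSpace.single i 1) * (w x + 1)⁻¹) ^ 2
    ≤ 2 * lam⁻¹ * ∫ x, ∑ i, (fderiv ℝ η x (EuclideanSpace.single i 1)) ^ 2 := by
  let e : Fin 2 → EE := fun i => EuclideanSpace.single i 1
  let G : Fin 2 → EE → ℝ := fun i y => ∑ j, A y i j * fderiv ℝ w y (e j)
  let F : Fin 2 → EE → ℝ := fun i y => G i y * (η y ^ 2 * (w y + 1)⁻¹)
  have hu : ∀ x, w x + 1 ≠ 0 := fun x => by have := hwpos x; positivity
  have hw1 : ContDiff ℝ 1 w := hw.of_le (by exact_mod_cast le_top)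
  have hdw : ∀ j, ContDiff ℝ 1 (fun y => fderiv ℝ w y (e j)) := fun j =>
    (hw.fderiv_right (m := 1) (WithTop.coe_le_coe.2 (le_top : (1 + 1 : ℕ∞) ≤ ⊤))).clm_apply contDiff_const
  have hG : ∀ i, ContDiff ℝ 1 (G i) := fun i =>
    ContDiff.sum fun j _ => ((hAsmooth i j).of_le (by exact_mod_cast le_top)).mul (hdw j)
  have hinv : ContDiff ℝ 1 (fun y => (w y + 1)⁻¹) := (hw1.add contDiff_const).inv hu
  have hF : ∀ i, ContDiff ℝ 1 (F i) := fun i => (hG i).mul ((hη.pow 2).mul hinv)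
  have hη2c : HasCompactSupport (fun x => η x ^ 2) :=
    hηc.comp_left (g := fun t : ℝ => t ^ 2) (by simp)
  have hFc : ∀ i, HasCompactSupport (F i) := fun i =>
    (hη2c.mul_right (f' := fun x => (w x + 1)⁻¹)).mul_left (f := G i)
  have hdη : ∀ i, Continuous (fun x => fderiv ℝ η x (e i)) := fun i =>
    (hη.continuous_fderiv (by norm_num)).clm_apply continuous_const
  have hI1 : Integrable (fun x => η x ^ 2 * ∑ i, (fderiv ℝ w x (e i) * (w x + 1)⁻¹) ^ 2) := by
    apply Continuous.integrable_of_hasCompactSupport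
    · exact (hη.continuous.pow 2).mul (continuous_finsetSum _ fun i _ =>
        ((hdw i).continuous.mul hinv.continuous).pow 2)
    · exact hη2c.mul_right
  have hI2 : Integrable (fun x => ∑ i, (fderiv ℝ η x (e i)) ^ 2) := by
    apply integrable_finsetSum
    intro i _
    apply Continuous.integrable_of_hasCompactSupport
    · exact (hdη i).pow 2
    · have : HasCompactSupport (fun x => fderiv ℝ η x (e i)) := hηc.fderiv_apply (𝕜 := ℝ) (e i)
      exact this.comp_left (g := fun t : ℝ => t ^ 2) (by simp)
  refine ⟨hI1, ?_⟩
  have hpt : ∀ x, ∑ i, fderiv ℝ (F i) x (e i) ≤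
      2 * lam⁻¹ * (∑ i, (fderiv ℝ η x (e i)) ^ 2) -
      lam / 2 * (η x ^ 2 * ∑ i, (fderiv ℝ w x (e i) * (w x + 1)⁻¹) ^ 2) := by
    intro x
    have hd : ∀ i, fderiv ℝ (F i) x (e i) = fderiv ℝ (G i) x (e i) * (η x ^ 2 * (w x + 1)⁻¹) +
        G i x * (2 * η x * fderiv ℝ η x (e i) * (w x + 1)⁻¹
          - η x ^ 2 * fderiv ℝ w x (e i) * ((w x + 1)⁻¹) ^ 2) := by
      intro i
      have h1 := ((hG i).differentiable (by norm_num) x).hasFDerivAt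
      have h2 := (hη.differentiable (by norm_num) x).hasFDerivAt
      have h3 := (hw1.differentiable (by norm_num) x).hasFDerivAt
      have h4 := (hasDerivAt_inv (hu x)).comp_hasFDerivAt x (h3.add_const 1)
      have h5 := h1.mul ((h2.pow 2).mul h4)
      have h6 : fderiv ℝ (F i) x = _ := HasFDerivAt.fderiv h5
      rw [h6]
      simp
      ring
    have hs : ∑ i, fderiv ℝ (G i) x (e i) ≤ 0 := hsuper x
    have hpos : 0 ≤ η x ^ 2 * (w x + 1)⁻¹ := by have := hwpos x; positivity
    have hprod := mul_nonpos_of_nonpos_of_nonneg hs hpos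
    have hsym : A x 1 0 = A x 0 1 := (hAsym x).apply 0 1
    simp only [hd]
    have hp := (hAelliptic x (fun i => fderiv ℝ w x (e i) * (w x + 1)⁻¹)).1
    have hq := (hAelliptic x (fun i => fderiv ℝ η x (e i))).2
    have hr := (hAelliptic x (fun i => η x * (fderiv ℝ w x (e i) * (w x + 1)⁻¹)
      - 2 * fderiv ℝ η x (e i))).1
    have hr0 : 0 ≤ lam * ∑ i, (η x * (fderiv ℝ w x (e i) * (w x + 1)⁻¹)
      - 2 * fderiv ℝ η x (e i)) ^ 2 :=
      mul_nonneg hlam.1.le (Finset.sum_nonneg fun i _ => sq_nonneg _)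
    have hr := hr0.trans hr
    have hp := mul_le_mul_of_nonneg_left hp (sq_nonneg (η x))
    simp only [G, Fin.sum_univ_two] at hp hq hr hprod ⊢
    rw [hsym] at hp hq hr ⊢
    generalize fderiv ℝ w x (e 0) = a0 at *
    generalize fderiv ℝ w x (e 1) = a1 at *
    generalize fderiv ℝ η x (e 0) = b0 at *
    generalize fderiv ℝ η x (e 1) = b1 at *
    generalize (w x + 1)⁻¹ = v at *
    linarith
  have hint : ∀ i, Integrable (fun x => fderiv ℝ (F i) x (e i)) := fun i =>
    (int_deriv_zero (F i) (hF i) (hFc i) (e i)).1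
  have h0 : ∫ x, ∑ i, fderiv ℝ (F i) x (e i) = 0 := by
    rw [integral_finsetSum _ fun i _ => hint i]
    exact Finset.sum_eq_zero fun i _ => (int_deriv_zero (F i) (hF i) (hFc i) (e i)).2
  have hmono := integral_mono (integrable_finsetSum _ fun i _ => hint i)
    ((hI2.const_mul (2 * lam⁻¹)).sub (hI1.const_mul (lam / 2))) hpt
  rw [h0] at hmono
  have heq := integral_sub (hI2.const_mul (2 * lam⁻¹)) (hI1.const_mul (lam / 2))
  rw [integral_const_mul, integral_const_mul] at heq
  have := hmono.trans_eq heq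
  linarith

/-- Liouville theorem for nonnegative supersolutions of divergence-form uniformly
elliptic equations in the plane: such functions are constant. -/
theorem liouville_supersolution_divergence_form_plane (lam : ℝ)
    (hlam : lam ∈ Set.Ioc (0 : ℝ) 1)
    (A : EuclideanSpace ℝ (Fin 2) → Matrix (Fin 2) (Fin 2) ℝ)
    (hAsmooth : ∀ i j, ContDiff ℝ (⊤ : ℕ∞) (fun x => A x i j))
    (hAsym : ∀ x, (A x).IsSymm)
    (hAelliptic : ∀ x (ξ : Fin 2 → ℝ),
      lam * (∑ i, ξ i ^ 2) ≤ ∑ i, ∑ j, A x i j * ξ i * ξ j ∧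
      ∑ i, ∑ j, A x i j * ξ i * ξ j ≤ lam⁻¹ * (∑ i, ξ i ^ 2))
    (w : EuclideanSpace ℝ (Fin 2) → ℝ)
    (hw : ContDiff ℝ (⊤ : ℕ∞) w)
    (hwpos : ∀ x, 0 ≤ w x)
    (hsuper : ∀ x, ∑ i, fderiv ℝ
        (fun y => ∑ j, A y i j * fderiv ℝ w y (EuclideanSpace.single j 1)) x
        (EuclideanSpace.single i 1) ≤ 0) :
    ∃ c : ℝ, ∀ x, w x = c := by
  obtain ⟨C, hC⟩ := cutoff
  let P : EE → ℝ := fun x => ∑ i, (fderiv ℝ w x (EuclideanSpace.single i 1) * (w x + 1)⁻¹) ^ 2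
  have hu : ∀ x, w x + 1 ≠ 0 := fun x => by have := hwpos x; positivity
  have hP0 : ∀ x, 0 ≤ P x := fun x => Finset.sum_nonneg fun i _ => sq_nonneg _
  have hPc : Continuous P := continuous_finsetSum _ fun i _ =>
    (((hw.continuous_fderiv (by simp)).clm_apply continuous_const).mul
      ((hw.continuous.add continuous_const).inv₀ hu)).pow 2
  have hl := hlam.1
  have hP : ∀ x, P x = 0 := by
    intro x
    by_contra hne
    let ψ : ContDiffBump x := ⟨1, 2, by norm_num, by norm_num⟩
    have hψc : HasCompactSupport (fun y => ψ y * P y) := ψ.hasCompactSupport.mul_right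
    have hψcont : Continuous (fun y => ψ y * P y) := ψ.continuous.mul hPc
    have hpos : 0 < ∫ y, ψ y * P y := by
      apply hψcont.integral_pos_of_hasCompactSupport_nonneg_nonzero hψc (x := x)
      · exact fun y => mul_nonneg ψ.nonneg (hP0 y)
      · have : ψ x = 1 := ψ.one_of_mem_closedBall (by simp [ψ])
        simpa [this] using hne
    have hbd : ∀ N : ℕ, 0 < N → (N : ℝ) * (lam / 2 * ∫ y, ψ y * P y) ≤ 2 * lam⁻¹ * C := by
      intro N hN
      obtain ⟨η, h1, h2, h3, h4⟩ := hC (‖x‖ + 2) (by positivity) N hN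
      obtain ⟨hI, hle⟩ := caccioppoli_s10 lam hlam A hAsmooth hAsym hAelliptic w hw hwpos hsuper η h1 h2
      have hm : ∫ y, ψ y * P y ≤ ∫ y, η y ^ 2 * P y := by
        apply integral_mono (hψcont.integrable_of_hasCompactSupport hψc) hI
        intro y
        apply mul_le_mul_of_nonneg_right _ (hP0 y)
        by_cases hy : dist y x < 2
        · rw [h3 y]
          · simpa using ψ.le_one
          · have := norm_le_norm_add_norm_sub' y x
            rw [dist_eq_norm] at hy
            linarith
        · rw [ψ.zero_of_le_dist (not_lt.1 hy)]
          positivity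
      have hN' : (0:ℝ) < N := by exact_mod_cast hN
      have h5 : lam / 2 * ∫ y, ψ y * P y ≤ 2 * lam⁻¹ * (C / N) :=
        (mul_le_mul_of_nonneg_left hm (by positivity)).trans
          (hle.trans (mul_le_mul_of_nonneg_left h4 (by positivity)))
      calc (N : ℝ) * (lam / 2 * ∫ y, ψ y * P y) ≤ N * (2 * lam⁻¹ * (C / N)) :=
            mul_le_mul_of_nonneg_left h5 hN'.le
        _ = 2 * lam⁻¹ * C := by field_simp
    have hpos' : 0 < lam / 2 * ∫ y, ψ y * P y := by positivity
    obtain ⟨n, hn⟩ := exists_nat_gt (2 * lam⁻¹ * C / (lam / 2 * ∫ y, ψ y * P y))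
    rw [div_lt_iff₀ hpos'] at hn
    have := hbd (n + 1) n.succ_pos
    push_cast at this
    linarith
  refine ⟨w 0, fun x => is_const_of_fderiv_eq_zero (𝕜 := ℝ) (hw.differentiable (by simp)) ?_ x 0⟩
  intro y
  have hy : ∀ i, fderiv ℝ w y (EuclideanSpace.single i 1) = 0 := by
    intro i
    have := (Finset.sum_eq_zero_iff_of_nonneg (fun i _ => sq_nonneg _)).1 (hP y) i (Finset.mem_univ i)
    have := pow_eq_zero_iff (two_ne_zero) |>.1 this
    exact (mul_eq_zero.1 this).resolve_right (inv_ne_zero (hu y))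
  apply ContinuousLinearMap.coe_injective
  apply (EuclideanSpace.basisFun (Fin 2) ℝ).toBasis.ext
  intro i
  simpa using hy i
end

section
/- (Nitsche-type constancy for the two-dimensional minimal surface system) Let m ≥ 1 and let u : ℝ² → ℝ^m be a smooth map solving the minimal surface system on all of ℝ². Then the matrix-valued map x ↦ √(det g(x)) · g(x)^{-1} is constant on ℝ², where g(x) = I₂ + (Du(x))ᵀ Du(x). -/
open Real Matrix

/-- Jacobian matrix of a map `u : ℝⁿ → ℝᵐ` at `x`. -/
noncomputable def jacobianMatrix {n m : ℕ}
    (u : EuclideanSpace ℝ (Fin n) → EuclideanSpace ℝ (Fin m))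
    (x : EuclideanSpace ℝ (Fin n)) : Matrix (Fin m) (Fin n) ℝ :=
  Matrix.of fun α i => fderiv ℝ (fun y => u y α) x (EuclideanSpace.single i 1)

/-- The induced metric `g = Iₙ + (Du)ᵀ Du` of the graph of `u`. -/
noncomputable def inducedMetric {n m : ℕ}
    (u : EuclideanSpace ℝ (Fin n) → EuclideanSpace ℝ (Fin m))
    (x : EuclideanSpace ℝ (Fin n)) : Matrix (Fin n) (Fin n) ℝ :=
  (1 : Matrix (Fin n) (Fin n) ℝ) + (jacobianMatrix u x)ᵀ * jacobianMatrix u x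

/-- `u` solves the minimal surface system: `∑ᵢⱼ gⁱʲ ∂ᵢ∂ⱼuᵅ = 0` for all `α`. -/
def SolvesMSS {n m : ℕ}
    (u : EuclideanSpace ℝ (Fin n) → EuclideanSpace ℝ (Fin m)) : Prop :=
  ∀ x, ∀ α : Fin m, ∑ i, ∑ j, (inducedMetric u x)⁻¹ i j *
    fderiv ℝ (fun y => fderiv ℝ (fun z => u z α) y (EuclideanSpace.single j 1)) x
      (EuclideanSpace.single i 1) = 0

abbrev E2 := EuclideanSpace ℝ (Fin 2)

lemma E2_decomp (v : E2) : v = v 0 • EuclideanSpace.single 0 (1:ℝ) + v 1 • EuclideanSpace.single 1 (1:ℝ) := by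
  ext i; fin_cases i <;> simp

lemma potential (a b : E2 → ℝ) (ha : Differentiable ℝ a) (hb : Differentiable ℝ b)
    (h : ∀ x, fderiv ℝ a x (EuclideanSpace.single 1 1) = fderiv ℝ b x (EuclideanSpace.single 0 1)) :
    ∃ A : E2 → ℝ, ∀ x, HasFDerivAt A
      (a x • (EuclideanSpace.proj 0 : E2 →L[ℝ] ℝ) + b x • (EuclideanSpace.proj 1 : E2 →L[ℝ] ℝ)) x := by
  have hω : ∀ x, HasFDerivAt (fun x => a x • (EuclideanSpace.proj 0 : E2 →L[ℝ] ℝ) +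
      b x • (EuclideanSpace.proj 1 : E2 →L[ℝ] ℝ))
      ((fderiv ℝ a x).smulRight (EuclideanSpace.proj 0 : E2 →L[ℝ] ℝ) +
       (fderiv ℝ b x).smulRight (EuclideanSpace.proj 1 : E2 →L[ℝ] ℝ)) x := fun x =>
    ((ha x).hasFDerivAt.smul_const (EuclideanSpace.proj 0 : E2 →L[ℝ] ℝ)).add
      ((hb x).hasFDerivAt.smul_const (EuclideanSpace.proj 1 : E2 →L[ℝ] ℝ))
  obtain ⟨A, hA⟩ := Convex.exists_forall_hasFDerivAt_of_fderiv_symmetric (s := Set.univ)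
    (ω := fun x => a x • (EuclideanSpace.proj 0 : E2 →L[ℝ] ℝ) +
      b x • (EuclideanSpace.proj 1 : E2 →L[ℝ] ℝ)) convex_univ isOpen_univ
    (fun x _ => (hω x).differentiableAt.differentiableWithinAt) (by
      intro x _ v w
      rw [(hω x).fderiv]
      have hx := h x
      have e1 : ∀ (l : E2 →L[ℝ] ℝ) (v : E2), l v = v 0 * l (EuclideanSpace.single 0 1) +
          v 1 * l (EuclideanSpace.single 1 1) := by
        intro l v
        conv_lhs => rw [E2_decomp v]
        simp
      have goal : fderiv ℝ a x v * w 0 + fderiv ℝ b x v * w 1 =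
          fderiv ℝ a x w * v 0 + fderiv ℝ b x w * v 1 := by
        rw [e1 (fderiv ℝ a x) v, e1 (fderiv ℝ a x) w, e1 (fderiv ℝ b x) v, e1 (fderiv ℝ b x) w, hx]
        ring
      exact goal)
  exact ⟨A, fun x => hA x trivial⟩

/-- real-linear map `E2 → ℂ` with given matrix -/
noncomputable def linC (p q r s : ℝ) : E2 →L[ℝ] ℂ :=
  Complex.ofRealCLM.comp (p • (EuclideanSpace.proj 0 : E2 →L[ℝ] ℝ) + q • (EuclideanSpace.proj 1 : E2 →L[ℝ] ℝ))
  + (r • (EuclideanSpace.proj 0 : E2 →L[ℝ] ℝ) + s • (EuclideanSpace.proj 1 : E2 →L[ℝ] ℝ)).smulRight Complex.I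

lemma linC_re (p q r s : ℝ) (v : E2) : (linC p q r s v).re = p * v 0 + q * v 1 := by
  simp [linC]
lemma linC_im (p q r s : ℝ) (v : E2) : (linC p q r s v).im = r * v 0 + s * v 1 := by
  simp [linC]

lemma linC_hasFDerivAt (f g : E2 → ℝ) (p q r s : ℝ) (x : E2)
    (hf : HasFDerivAt f (p • (EuclideanSpace.proj 0 : E2 →L[ℝ] ℝ) + q • (EuclideanSpace.proj 1 : E2 →L[ℝ] ℝ)) x)
    (hg : HasFDerivAt g (r • (EuclideanSpace.proj 0 : E2 →L[ℝ] ℝ) + s • (EuclideanSpace.proj 1 : E2 →L[ℝ] ℝ)) x) :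
    HasFDerivAt (fun x => ((f x : ℝ) : ℂ) + (g x) • Complex.I) (linC p q r s) x :=
  (Complex.ofRealCLM.hasFDerivAt.comp x hf).add (hg.smul_const Complex.I)

lemma linC_equiv (p q r s : ℝ) (h : p * s - q * r ≠ 0) :
    ∃ e : E2 ≃L[ℝ] ℂ, (e : E2 →L[ℝ] ℂ) = linC p q r s := by
  have hinj : Function.Injective (linC p q r s) := by
    rw [injective_iff_map_eq_zero]
    intro v hv
    have h1 := linC_re p q r s v
    have h2 := linC_im p q r s v
    rw [hv] at h1 h2
    simp only [Complex.zero_re, Complex.zero_im] at h1 h2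
    have h0 : v 0 = 0 := by
      apply (mul_eq_zero.1 (_ : (p*s-q*r) * v 0 = 0)).resolve_left h
      linear_combination (-s) * h1 + q * h2
    have h1 : v 1 = 0 := by
      apply (mul_eq_zero.1 (_ : (p*s-q*r) * v 1 = 0)).resolve_left h
      linear_combination r * h1 - p * h2
    ext i; fin_cases i <;> simp [h0, h1]
  let e := LinearEquiv.ofInjectiveOfFinrankEq (linC p q r s : E2 →ₗ[ℝ] ℂ) hinj (by simp)
  refine ⟨e.toContinuousLinearEquiv, ?_⟩
  ext v
  exact congrArg (fun l : E2 →ₗ[ℝ] ℂ => l v)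
    (LinearEquiv.coe_ofInjectiveOfFinrankEq (linC p q r s : E2 →ₗ[ℝ] ℂ) hinj (by simp))

theorem jorgens (a b c : E2 → ℝ) (ha : Differentiable ℝ a) (hb : Differentiable ℝ b)
    (hc : Differentiable ℝ c) (ha0 : ∀ x, 0 < a x) (hc0 : ∀ x, 0 < c x)
    (hdet : ∀ x, a x * c x - b x ^ 2 = 1)
    (h1 : ∀ x, fderiv ℝ a x (EuclideanSpace.single 1 1) = fderiv ℝ b x (EuclideanSpace.single 0 1))
    (h2 : ∀ x, fderiv ℝ b x (EuclideanSpace.single 1 1) = fderiv ℝ c x (EuclideanSpace.single 0 1)) :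
    ∀ x y, a x = a y ∧ b x = b y ∧ c x = c y := by
  obtain ⟨A, hA⟩ := potential a b ha hb h1
  obtain ⟨B, hB⟩ := potential b c hb hc h2
  have hP0 : ∀ x : E2, HasFDerivAt (fun x : E2 => x 0) (EuclideanSpace.proj 0 : E2 →L[ℝ] ℝ) x :=
    fun x => (EuclideanSpace.proj 0 : E2 →L[ℝ] ℝ).hasFDerivAt
  have hP1 : ∀ x : E2, HasFDerivAt (fun x : E2 => x 1) (EuclideanSpace.proj 1 : E2 →L[ℝ] ℝ) x :=
    fun x => (EuclideanSpace.proj 1 : E2 →L[ℝ] ℝ).hasFDerivAt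
  set L : E2 → ℂ := fun x => ((x 0 + A x : ℝ) : ℂ) + (x 1 + B x) • Complex.I with hLdef
  set h : E2 → ℂ := fun x => ((x 0 - A x : ℝ) : ℂ) + (-(x 1 - B x)) • Complex.I with hhdef
  have hL : ∀ x, HasFDerivAt L (linC (1 + a x) (b x) (b x) (1 + c x)) x := by
    intro x
    apply linC_hasFDerivAt
    · exact ((hP0 x).add (hA x)).congr_fderiv (by module)
    · exact ((hP1 x).add (hB x)).congr_fderiv (by module)
  have hh : ∀ x, HasFDerivAt h (linC (1 - a x) (- b x) (b x) (-(1 - c x))) x := by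
    intro x
    apply linC_hasFDerivAt
    · exact ((hP0 x).sub (hA x)).congr_fderiv (by module)
    · exact (((hP1 x).sub (hB x)).neg).congr_fderiv (by module)
  have hex : ∀ x, ∃ e : E2 ≃L[ℝ] ℂ, (e : E2 →L[ℝ] ℂ) = linC (1 + a x) (b x) (b x) (1 + c x) := by
    intro x
    apply linC_equiv
    have := hdet x; have := ha0 x; have := hc0 x
    nlinarith
  choose e he using hex
  have hcont : Continuous (fun x => linC (1 + a x) (b x) (b x) (1 + c x)) := by
    have := ha.continuous; have := hb.continuous; have := hc.continuous
    have key : (fun x => linC (1 + a x) (b x) (b x) (1 + c x)) = fun x =>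
      (1 + a x) • linC 1 0 0 0 + b x • linC 0 1 1 0 + (1 + c x) • linC 0 0 0 1 := by
      funext x; ext v
      apply Complex.ext <;> simp [linC_re, linC_im]
    rw [key]
    fun_prop
  have hLs : ∀ x, HasStrictFDerivAt L ((e x : E2 ≃L[ℝ] ℂ) : E2 →L[ℝ] ℂ) x := by
    intro x
    rw [he]
    exact hasStrictFDerivAt_of_hasFDerivAt_of_continuousAt (.of_forall hL) hcont.continuousAt
  have hopen : IsOpenMap L := isOpenMap_of_hasStrictFDerivAt_equiv hLs
  have hmono : ∀ p q : E2, ‖p - q‖ ≤ ‖L p - L q‖ := by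
    intro p q
    set v := p - q with hv
    let k : ℝ → ℝ := fun t => v 0 * (L (q + t • v)).re + v 1 * (L (q + t • v)).im - t * (v 0 ^ 2 + v 1 ^ 2)
    have hk : ∀ t, HasDerivAt k (v 0 * (linC (1 + a (q + t • v)) (b (q + t • v)) (b (q + t • v)) (1 + c (q + t • v)) v).re + v 1 * (linC (1 + a (q + t • v)) (b (q + t • v)) (b (q + t • v)) (1 + c (q + t • v)) v).im - (v 0 ^ 2 + v 1 ^ 2)) t := by
      intro t
      have hl : HasDerivAt (fun t : ℝ => q + t • v) v t := by
        simpa using ((hasDerivAt_id t).smul_const v).const_add q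
      have hc1 := (hL (q + t • v)).comp_hasDerivAt t hl
      have hr := Complex.reCLM.hasFDerivAt.comp_hasDerivAt t hc1
      have hi := Complex.imCLM.hasFDerivAt.comp_hasDerivAt t hc1
      have : HasDerivAt k _ t := ((hr.const_mul (v 0)).add (hi.const_mul (v 1))).sub
        ((hasDerivAt_id t).mul_const (v 0 ^ 2 + v 1 ^ 2))
      exact this.congr_deriv (by simp)
    have hmk : Monotone k := by
      apply monotone_of_deriv_nonneg (fun t => (hk t).differentiableAt)
      intro t
      rw [(hk t).deriv, linC_re, linC_im]
      have d := hdet (q + t • v); have da := ha0 (q + t • v)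
      generalize a (q + t • v) = a' at *
      generalize b (q + t • v) = b' at *
      generalize c (q + t • v) = c' at *
      have : a' * (a' * v 0 ^ 2 + 2 * b' * v 0 * v 1 + c' * v 1 ^ 2) ≥ 0 := by
        have : a' * (a' * v 0 ^ 2 + 2 * b' * v 0 * v 1 + c' * v 1 ^ 2) = (a' * v 0 + b' * v 1)^2 + v 1 ^ 2 := by
          linear_combination (v 1)^2 * d
        rw [this]; positivity
      have := nonneg_of_mul_nonneg_right this da
      linarith
    have h01 := hmk (zero_le_one (α := ℝ))
    have hq : q + (1:ℝ) • v = p := by simp [hv]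
    simp only [k, hq] at h01
    simp only [zero_smul, add_zero, zero_mul, one_mul, sub_zero] at h01
    have hn : ‖v‖ ^ 2 = v 0 ^ 2 + v 1 ^ 2 := by
      rw [EuclideanSpace.norm_sq_eq]; simp
    have hm : ‖L p - L q‖ ^ 2 = (L p - L q).re ^ 2 + (L p - L q).im ^ 2 := by
      rw [← Complex.normSq_eq_norm_sq, Complex.normSq_apply]; ring
    simp only [Complex.sub_re, Complex.sub_im] at hm
    refine abs_le_of_sq_le_sq' ?_ (norm_nonneg _) |>.2
    rw [hn, hm]
    nlinarith [sq_nonneg ((L p).re - (L q).re - v 0), sq_nonneg ((L p).im - (L q).im - v 1)]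
  have hanti : AntilipschitzWith 1 L := by
    apply AntilipschitzWith.of_le_mul_dist
    intro p q
    simpa [dist_eq_norm] using hmono p q
  have hLc : Continuous L := continuous_iff_continuousAt.2 fun x => (hL x).continuousAt
  have hemb : Topology.IsClosedEmbedding L := by
    refine Topology.IsClosedEmbedding.of_continuous_injective_isClosedMap hLc hanti.injective ?_
    have hp : Filter.Tendsto L (Filter.cocompact E2) (Filter.cocompact ℂ) := by
      rw [← Metric.cobounded_eq_cocompact, ← Metric.cobounded_eq_cocompact]
      exact hanti.tendsto_cobounded
    exact (isProperMap_iff_tendsto_cocompact.2 ⟨hLc, hp⟩).isClosedMap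
  have hsurj : Function.Surjective L := by
    rw [← Set.range_eq_univ]
    exact IsClopen.eq_univ ⟨hemb.isClosed_range, hopen.isOpen_range⟩ (Set.range_nonempty L)
  choose g hg using hsurj
  have hgl : ∀ x, g (L x) = x := fun x => hanti.injective (hg (L x))
  have hgc : Continuous g := (hanti.to_rightInverse hg).continuous
  have hgd : ∀ z, HasFDerivAt g ((e (g z)).symm : ℂ →L[ℝ] E2) z := fun z =>
    HasFDerivAt.of_local_left_inverse hgc.continuousAt (hLs (g z)).hasFDerivAt (.of_forall hg)
  let κ : E2 → ℂ := fun x => ⟨(c x - a x) / (2 + a x + c x), 2 * b x / (2 + a x + c x)⟩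
  have hf : ∀ z, HasDerivAt (fun z => h (g z)) (κ (g z)) z := by
    intro z
    have hz := (hh (g z)).comp z (hgd z)
    refine (hasFDerivAt_of_restrictScalars ℝ hz (f' := (ContinuousLinearMap.toSpanSingleton ℂ (κ (g z)))) ?_).hasDerivAt.congr_deriv ?_
    swap
    · simp
    ext1 w
    obtain ⟨v, rfl⟩ := (e (g z)).surjective w
    have hev : e (g z) v = linC (1 + a (g z)) (b (g z)) (b (g z)) (1 + c (g z)) v := by
      rw [← he]; rfl
    have d := hdet (g z); have da := ha0 (g z); have dc := hc0 (g z)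
    simp only [ContinuousLinearMap.coe_restrictScalars', ContinuousLinearMap.toSpanSingleton_apply,
      ContinuousLinearMap.comp_apply, ContinuousLinearEquiv.coe_coe,
      ContinuousLinearEquiv.symm_apply_apply, smul_eq_mul]
    rw [hev]
    have hne : 2 + a (g z) + c (g z) ≠ 0 := by positivity
    apply Complex.ext
    · rw [Complex.mul_re, linC_re, linC_re, linC_im]
      simp only [κ]
      field_simp
      linear_combination (2 * v 0) * d
    · rw [Complex.mul_im, linC_im, linC_re, linC_im]
      simp only [κ]
      field_simp
      linear_combination (-2 * v 1) * d
  have hdiff : Differentiable ℂ (fun z => h (g z)) := fun z => (hf z).differentiableAt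
  have hderiv : deriv (fun z => h (g z)) = fun z => κ (g z) := funext fun z => (hf z).deriv
  have hκd : Differentiable ℂ (fun z => κ (g z)) := by
    rw [← hderiv]
    exact hdiff.deriv
  have hκb : ∀ x, ‖κ x‖ ≤ 1 := by
    intro x
    have d := hdet x; have da := ha0 x; have dc := hc0 x
    have hne : 0 < 2 + a x + c x := by positivity
    rw [← abs_of_nonneg (norm_nonneg (κ x)), ← sq_le_one_iff_abs_le_one,
      ← Complex.normSq_eq_norm_sq, Complex.normSq_apply]
    simp only [κ]
    rw [show ∀ t s r: ℝ, t/r * (t/r) + s/r*(s/r) = (t^2+s^2)/r^2 by intros; ring, div_le_one (by positivity)]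
    nlinarith
  have hconst : ∀ x y, κ x = κ y := by
    intro x y
    have := hκd.apply_eq_apply_of_bounded (by
      refine (Metric.isBounded_closedBall (x := (0:ℂ)) (r := 1)).subset ?_
      rintro _ ⟨z, rfl⟩
      simpa using hκb (g z)) (L x) (L y)
    simpa only [hgl] using this
  intro x y
  have hxy := hconst x y
  have hX : (c x - a x) / (2 + a x + c x) = (c y - a y) / (2 + a y + c y) := congrArg Complex.re hxy
  have hY : 2 * b x / (2 + a x + c x) = 2 * b y / (2 + a y + c y) := congrArg Complex.im hxy
  have key : ∀ x, ∃ X Y : ℝ, (c x - a x) / (2 + a x + c x) = X ∧ 2 * b x / (2 + a x + c x) = Y ∧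
      c x - a x = X * (2 + a x + c x) ∧ 2 * b x = Y * (2 + a x + c x) ∧
      (2 + a x + c x) * (1 - X^2 - Y^2) = 4 := by
    intro x
    have d := hdet x; have da := ha0 x; have dc := hc0 x
    have hne : 2 + a x + c x ≠ 0 := by positivity
    refine ⟨_, _, rfl, rfl, by field_simp, by field_simp, ?_⟩
    field_simp
    linear_combination 4 * d
  obtain ⟨X, Y, hX1, hY1, e1, e2, e3⟩ := key x
  obtain ⟨X', Y', hX2, hY2, e1', e2', e3'⟩ := key y
  obtain rfl : X = X' := by rw [← hX1, ← hX2, hX]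
  obtain rfl : Y = Y' := by rw [← hY1, ← hY2, hY]
  have hne : (1 - X^2 - Y^2) ≠ 0 := by
    intro h0; rw [h0] at e3; norm_num at e3
  have ht : 2 + a x + c x = 2 + a y + c y := mul_right_cancel₀ hne (e3.trans e3'.symm)
  rw [ht] at e1 e2
  refine ⟨by linarith, by linarith, by linarith⟩

lemma diff_quot (N Q : E2 → ℝ) (hN : Differentiable ℝ N) (hQ : Differentiable ℝ Q)
    (hQ0 : ∀ x, 0 < Q x) (x : E2) : DifferentiableAt ℝ (fun x => N x / √(Q x)) x := by
  simp only [div_eq_mul_inv]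
  exact (hN x).fun_mul (((hQ x).sqrt (hQ0 x).ne').fun_inv (Real.sqrt_pos.2 (hQ0 x)).ne')

lemma quot_fderiv (N Q : E2 → ℝ) (hN : Differentiable ℝ N) (hQ : Differentiable ℝ Q)
    (hQ0 : ∀ x, 0 < Q x) (x v : E2) :
    fderiv ℝ (fun x => N x / √(Q x)) x v =
      (2 * Q x * fderiv ℝ N x v - N x * fderiv ℝ Q x v) / (2 * Q x * √(Q x)) := by
  have hl : HasDerivAt (fun t : ℝ => x + t • v) v 0 := by
    simpa using ((hasDerivAt_id (0:ℝ)).smul_const v).const_add x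
  have hs : 0 < √(Q x) := Real.sqrt_pos.2 (hQ0 x)
  have hd : DifferentiableAt ℝ (fun x => N x / √(Q x)) x :=
    diff_quot N Q hN hQ hQ0 x
  have hx : x + (0:ℝ) • v = x := by simp
  have c1 : HasDerivAt (fun t : ℝ => N (x + t • v) / √(Q (x + t • v)))
      (fderiv ℝ (fun x => N x / √(Q x)) x v) 0 := by
    rw [← hx] at hd
    have := hd.hasFDerivAt.comp_hasDerivAt (0:ℝ) hl
    rwa [hx] at this
  have c2 : HasDerivAt (fun t : ℝ => N (x + t • v)) (fderiv ℝ N x v) 0 := by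
    have := (hN (x + (0:ℝ) • v)).hasFDerivAt.comp_hasDerivAt (0:ℝ) hl
    rwa [hx] at this
  have c3 : HasDerivAt (fun t : ℝ => Q (x + t • v)) (fderiv ℝ Q x v) 0 := by
    have := (hQ (x + (0:ℝ) • v)).hasFDerivAt.comp_hasDerivAt (0:ℝ) hl
    rwa [hx] at this
  have c4 := c2.div (c3.sqrt (by rw [hx]; exact (hQ0 x).ne')) (by rw [hx]; exact hs.ne')
  rw [c1.unique c4, hx]
  have hq := Real.sq_sqrt (hQ0 x).le
  generalize √(Q x) = w at *
  rw [← hq]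
  field_simp

/-- Nitsche-type constancy for the two-dimensional minimal surface system:
`√(det g) g⁻¹` is constant for entire solutions in the plane. -/
theorem nitsche_constancy_mss (m : ℕ) (hm : 1 ≤ m)
    (u : EuclideanSpace ℝ (Fin 2) → EuclideanSpace ℝ (Fin m))
    (hu : ContDiff ℝ (⊤ : ℕ∞) u)
    (hMSS : SolvesMSS u) :
    ∃ M : Matrix (Fin 2) (Fin 2) ℝ,
      ∀ x, Real.sqrt (inducedMetric u x).det • (inducedMetric u x)⁻¹ = M := by
  have huα : ∀ α, ContDiff ℝ (⊤ : ℕ∞) (fun y => u y α) := fun α =>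
    (EuclideanSpace.proj α : EuclideanSpace ℝ (Fin m) →L[ℝ] ℝ).contDiff.comp hu
  let D : Fin 2 → Fin m → E2 → ℝ := fun i α x =>
    fderiv ℝ (fun y => u y α) x (EuclideanSpace.single i 1)
  have hfd : ∀ α, Differentiable ℝ (fderiv ℝ (fun y => u y α)) := fun α =>
    ((huα α).fderiv_right (m := 1) (WithTop.coe_le_coe.2 (le_top : (2:ℕ∞) ≤ ⊤))).differentiable (by norm_num)
  have hD : ∀ i α, Differentiable ℝ (D i α) := fun i α =>
    (hfd α).clm_apply (differentiable_const _)
  have hDD : ∀ i α x v, fderiv ℝ (D i α) x v =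
      fderiv ℝ (fderiv ℝ (fun y => u y α)) x v (EuclideanSpace.single i 1) := by
    intro i α x v
    have := ((hfd α x).hasFDerivAt.clm_apply (hasFDerivAt_const (EuclideanSpace.single i (1:ℝ)) x)).fderiv
    rw [show fderiv ℝ (D i α) x = _ from this]
    simp
  have hsymm : ∀ α x, fderiv ℝ (D 0 α) x (EuclideanSpace.single 1 1) =
      fderiv ℝ (D 1 α) x (EuclideanSpace.single 0 1) := by
    intro α x
    rw [hDD, hDD]
    exact ((huα α).contDiffAt.isSymmSndFDerivAt (by
      rw [minSmoothness_of_isRCLikeNormedField]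
      exact WithTop.coe_le_coe.2 (le_top : (2:ℕ∞) ≤ ⊤))) _ _
  let S : Fin 2 → Fin 2 → E2 → ℝ := fun i j x => ∑ α, D i α x * D j α x
  have hS : ∀ i j, Differentiable ℝ (S i j) := fun i j =>
    Differentiable.fun_sum fun α _ => (hD i α).mul (hD j α)
  have hSd : ∀ i j x v, fderiv ℝ (S i j) x v =
      ∑ α, D i α x * fderiv ℝ (D j α) x v + ∑ α, D j α x * fderiv ℝ (D i α) x v := by
    intro i j x v
    have : HasFDerivAt (S i j) _ x := HasFDerivAt.fun_sum (u := Finset.univ) fun α _ =>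
      (hD i α x).hasFDerivAt.mul (hD j α x).hasFDerivAt
    rw [this.fderiv, ← Finset.sum_add_distrib]
    simp
  let E : E2 → ℝ := fun x => 1 + S 0 0 x
  let F : E2 → ℝ := fun x => S 0 1 x
  let G : E2 → ℝ := fun x => 1 + S 1 1 x
  let Q : E2 → ℝ := fun x => E x * G x - F x ^ 2
  have hE : Differentiable ℝ E := (hS 0 0).const_add 1
  have hF : Differentiable ℝ F := hS 0 1
  have hG : Differentiable ℝ G := (hS 1 1).const_add 1
  have hQ : Differentiable ℝ Q := (hE.mul hG).sub (hF.pow 2)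
  have hS0 : ∀ i x, 0 ≤ S i i x := fun i x => Finset.sum_nonneg fun α _ => mul_self_nonneg _
  have hE0 : ∀ x, 0 < E x := fun x => by have := hS0 0 x; simp only [E]; linarith
  have hG0 : ∀ x, 0 < G x := fun x => by have := hS0 1 x; simp only [G]; linarith
  have hQ0 : ∀ x, 0 < Q x := by
    intro x
    have cs : S 0 1 x ^ 2 ≤ S 0 0 x * S 1 1 x := by
      have := Finset.sum_mul_sq_le_sq_mul_sq Finset.univ (fun α => D 0 α x) (fun α => D 1 α x)
      simpa only [S, ← sq] using this
    have := hS0 0 x; have := hS0 1 x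
    simp only [Q, E, F, G]
    nlinarith
  have hEd : ∀ x v, fderiv ℝ E x v = 2 * ∑ α, D 0 α x * fderiv ℝ (D 0 α) x v := by
    intro x v
    rw [show fderiv ℝ E x = fderiv ℝ (S 0 0) x from fderiv_const_add 1, hSd]; ring
  have hGd : ∀ x v, fderiv ℝ G x v = 2 * ∑ α, D 1 α x * fderiv ℝ (D 1 α) x v := by
    intro x v
    rw [show fderiv ℝ G x = fderiv ℝ (S 1 1) x from fderiv_const_add 1, hSd]; ring
  have hQd : ∀ x v, fderiv ℝ Q x v =
      E x * fderiv ℝ G x v + G x * fderiv ℝ E x v - 2 * F x * fderiv ℝ F x v := by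
    intro x v
    have : HasFDerivAt Q _ x := ((hE x).hasFDerivAt.mul (hG x).hasFDerivAt).sub ((hF x).hasFDerivAt.pow 2)
    rw [this.fderiv]
    simp
  have hg : ∀ x, inducedMetric u x = !![E x, F x; F x, G x] := by
    intro x
    ext i j
    fin_cases i <;> fin_cases j <;>
      simp [inducedMetric, jacobianMatrix, Matrix.mul_apply, E, F, G, S, D, mul_comm]
  have hgdet : ∀ x, (inducedMetric u x).det = Q x := by
    intro x
    rw [hg, Matrix.det_fin_two_of]; simp only [Q]; ring
  have hginv : ∀ x, (inducedMetric u x)⁻¹ = (Q x)⁻¹ • !![G x, -F x; -F x, E x] := by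
    intro x
    rw [Matrix.inv_def, hgdet, hg, Matrix.adjugate_fin_two_of, Ring.inverse_eq_inv']
  have hmss : ∀ x α, G x * fderiv ℝ (D 0 α) x (EuclideanSpace.single 0 1)
      - 2 * F x * fderiv ℝ (D 1 α) x (EuclideanSpace.single 0 1)
      + E x * fderiv ℝ (D 1 α) x (EuclideanSpace.single 1 1) = 0 := by
    intro x α
    have h := hMSS x α
    rw [hginv] at h
    have h' : ∑ i, ∑ j, ((Q x)⁻¹ • !![G x, -F x; -F x, E x]) i j *
      fderiv ℝ (D j α) x (EuclideanSpace.single i 1) = 0 := h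
    simp only [Fin.sum_univ_two, Matrix.smul_apply, smul_eq_mul, Matrix.of_apply, Matrix.cons_val_zero, Matrix.cons_val_one, Matrix.cons_val', Matrix.cons_val_fin_one] at h'
    rw [hsymm] at h'
    have hq := (hQ0 x).ne'
    field_simp at h'
    linear_combination h'
  -- contracted equations
  have hcon : ∀ i x, G x * (∑ α, D i α x * fderiv ℝ (D 0 α) x (EuclideanSpace.single 0 1))
      - 2 * F x * (∑ α, D i α x * fderiv ℝ (D 1 α) x (EuclideanSpace.single 0 1))
      + E x * (∑ α, D i α x * fderiv ℝ (D 1 α) x (EuclideanSpace.single 1 1)) = 0 := by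
    intro i x
    have hm' := hmss x
    generalize E x = E' at *
    generalize F x = F' at *
    generalize G x = G' at *
    rw [Finset.mul_sum, Finset.mul_sum, Finset.mul_sum, ← Finset.sum_sub_distrib,
      ← Finset.sum_add_distrib]
    apply Finset.sum_eq_zero
    intro α _
    linear_combination D i α x * hm' α
  have hdet : ∀ x, (E x / √(Q x)) * (G x / √(Q x)) - (F x / √(Q x)) ^ 2 = 1 := by
    intro x
    have hs : 0 < √(Q x) := Real.sqrt_pos.2 (hQ0 x)
    have hq := Real.sq_sqrt (hQ0 x).le
    field_simp
    rw [hq]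
  have hd : ∀ N : E2 → ℝ, Differentiable ℝ N → Differentiable ℝ (fun x => N x / √(Q x)) :=
    fun N hN x => diff_quot N Q hN hQ hQ0 x
  have key := jorgens (fun x => E x / √(Q x)) (fun x => F x / √(Q x)) (fun x => G x / √(Q x))
    (hd E hE) (hd F hF) (hd G hG)
    (fun x => div_pos (hE0 x) (Real.sqrt_pos.2 (hQ0 x)))
    (fun x => div_pos (hG0 x) (Real.sqrt_pos.2 (hQ0 x))) hdet
    (by
      intro x
      rw [quot_fderiv E Q hE hQ hQ0, quot_fderiv F Q hF hQ hQ0]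
      congr 1
      rw [hQd, hQd, hEd, hGd, hEd, hGd, show ∀ v, fderiv ℝ F x v = _ from hSd 0 1 x,
        show ∀ v, fderiv ℝ F x v = _ from hSd 0 1 x]
      simp only [hsymm]
      have c0 := hcon 0 x
      have c1 := hcon 1 x
      simp only [Q]
      linear_combination (2 * F x) * c0 - (2 * E x) * c1)
    (by
      intro x
      rw [quot_fderiv G Q hG hQ hQ0, quot_fderiv F Q hF hQ hQ0]
      congr 1
      rw [hQd, hQd, hEd, hGd, hEd, hGd, show ∀ v, fderiv ℝ F x v = _ from hSd 0 1 x,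
        show ∀ v, fderiv ℝ F x v = _ from hSd 0 1 x]
      simp only [hsymm]
      have c0 := hcon 0 x
      have c1 := hcon 1 x
      simp only [Q]
      linear_combination (2 * G x) * c0 - (2 * F x) * c1)
  refine ⟨√(inducedMetric u 0).det • (inducedMetric u 0)⁻¹, fun x => ?_⟩
  obtain ⟨k1, k2, k3⟩ := key x 0
  have hform : ∀ x, √(inducedMetric u x).det • (inducedMetric u x)⁻¹ =
      !![G x / √(Q x), -(F x / √(Q x)); -(F x / √(Q x)), E x / √(Q x)] := by
    intro x
    rw [hginv, hgdet, smul_smul]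
    have hw : √(Q x) * (Q x)⁻¹ = (√(Q x))⁻¹ := by
      have hs : 0 < √(Q x) := Real.sqrt_pos.2 (hQ0 x)
      have hq := Real.sq_sqrt (hQ0 x).le
      have := hQ0 x
      field_simp
      exact hq
    rw [hw]
    ext i j
    fin_cases i <;> fin_cases j <;> simp [div_eq_mul_inv, mul_comm]
  rw [hform, hform]
  rw [k1, k2, k3]
end

section
/- Let m ≥ 1 and let u : ℝ² → ℝ^m be a smooth map with sup_{x ∈ ℝ²} ‖Du(x)‖ < ∞ solving the minimal surface system on all of ℝ². Then u is affine, i.e. there exist an m×2 matrix B and c ∈ ℝ^m with u(x) = Bx + c for all x ∈ ℝ². -/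
open Real Matrix

/-- The coordinate plane. -/
abbrev Pl := EuclideanSpace ℝ (Fin 2)

/-- Coordinate functional. -/
noncomputable def pj (i : Fin 2) : Pl →L[ℝ] ℝ := EuclideanSpace.proj i

/-- Coordinate vector. -/
noncomputable def ee (i : Fin 2) : Pl := EuclideanSpace.single i 1

@[simp] lemma pj_apply (i : Fin 2) (x : Pl) : pj i x = x i := rfl

@[simp] lemma ee_apply (i j : Fin 2) : (ee i) j = if j = i then 1 else 0 := by
  simp [ee]

lemma pl_decomp (x : Pl) : x = x 0 • ee 0 + x 1 • ee 1 := by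
  ext i
  fin_cases i <;> simp

lemma clm_decomp {F : Type*} [NormedAddCommGroup F] [NormedSpace ℝ F] (L : Pl →L[ℝ] F) (x : Pl) :
    L x = x 0 • L (ee 0) + x 1 • L (ee 1) := by
  conv_lhs => rw [pl_decomp x]
  simp

lemma pl_norm_sq (x : Pl) : ‖x‖ ^ 2 = x 0 ^ 2 + x 1 ^ 2 := by
  simp [EuclideanSpace.norm_sq_eq]

lemma poincare2 (P Q : Pl → ℝ) (hP : Differentiable ℝ P) (hQ : Differentiable ℝ Q)
    (h : ∀ x, fderiv ℝ P x (ee 1) = fderiv ℝ Q x (ee 0)) :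
    ∃ f : Pl → ℝ, ∀ x, HasFDerivAt f (P x • pj 0 + Q x • pj 1) x := by
  have key : ∀ x, HasFDerivAt (fun x => P x • pj 0 + Q x • pj 1)
      ((fderiv ℝ P x).smulRight (pj 0) + (fderiv ℝ Q x).smulRight (pj 1)) x := fun x =>
    ((hP x).hasFDerivAt.smul_const (pj 0)).add ((hQ x).hasFDerivAt.smul_const (pj 1))
  obtain ⟨f, hf⟩ := Convex.exists_forall_hasFDerivAt_of_fderiv_symmetric (s := Set.univ)
    (ω := fun x => P x • pj 0 + Q x • pj 1) convex_univ isOpen_univ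
    (fun x _ => (key x).differentiableAt.differentiableWithinAt) (by
      intro a _ x y
      rw [(key a).fderiv]
      simp only [_root_.add_apply, ContinuousLinearMap.smulRight_apply,
        _root_.smul_apply, smul_eq_mul, pj_apply]
      rw [clm_decomp _ x, clm_decomp _ y, clm_decomp (fderiv ℝ Q a) x, clm_decomp (fderiv ℝ Q a) y, h a]
      simp only [smul_eq_mul]
      ring)
  exact ⟨f, fun x => hf x trivial⟩

lemma liouville_re (f : ℂ → ℂ) (hf : Differentiable ℂ f) (K : ℝ)
    (hK : ∀ z w, |(f z).re - (f w).re| ≤ K * ‖z - w‖) :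
    ∃ a b : ℂ, ∀ z, f z = a * z + b := by
  have hK0 : 0 ≤ K := by
    have := hK 1 0
    simp at this
    exact (abs_nonneg _).trans this
  have hbd : ∀ z, ‖deriv f z‖ ≤ K := by
    intro z
    by_cases h0 : deriv f z = 0
    · simpa [h0] using hK0
    have h1 : HasFDerivAt (fun w => (f w).re)
        (Complex.reCLM.comp ((ContinuousLinearMap.toSpanSingleton ℂ (deriv f z)).restrictScalars ℝ)) z :=
      Complex.reCLM.hasFDerivAt.comp z ((hf z).hasDerivAt.hasFDerivAt.restrictScalars ℝ)
    have h2 := h1.le_of_lip' hK0 (.of_forall fun w => by simpa using hK w z)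
    have h3 := ContinuousLinearMap.le_of_opNorm_le _ h2 ((starRingEnd ℂ) (deriv f z))
    have h4 : (Complex.reCLM.comp ((ContinuousLinearMap.toSpanSingleton ℂ (deriv f z)).restrictScalars ℝ))
        ((starRingEnd ℂ) (deriv f z)) = ‖deriv f z‖ ^ 2 := by
      rw [← Complex.normSq_eq_norm_sq, Complex.normSq_apply]
      simp
    rw [h4, RCLike.norm_conj, Real.norm_of_nonneg (by positivity), sq] at h3
    exact le_of_mul_le_mul_right h3 (norm_pos_iff.2 h0)
  have hd : Differentiable ℂ (deriv f) := by
    exact (hf.contDiff (n := 2)).differentiable_deriv_two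
  obtain ⟨a, ha⟩ : ∃ a, ∀ z, deriv f z = a := by
    refine ⟨deriv f 0, fun z => hd.apply_eq_apply_of_bounded ?_ z 0⟩
    refine (Metric.isBounded_closedBall (x := (0:ℂ)) (r := K)).subset ?_
    rintro _ ⟨z, rfl⟩
    simpa using hbd z
  refine ⟨a, f 0, fun z => ?_⟩
  have h2 : ∀ z, HasDerivAt (fun z => f z - a * z) 0 z := fun z => by
    have := (hf z).hasDerivAt.sub ((hasDerivAt_id z).const_mul a)
    simp only [ha z, mul_one, sub_self] at this
    exact this
  have := is_const_of_deriv_eq_zero (fun z => (h2 z).differentiableAt) (fun z => (h2 z).deriv) z 0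
  simp at this
  linear_combination this

lemma inverse_exists (ζ : Pl → ℂ) (ζ' : Pl → Pl →L[ℝ] ℂ) (hζ : ∀ x, HasFDerivAt ζ (ζ' x) x)
    (hc : Continuous ζ')
    (hm : ∀ x v, v 0 ^ 2 + v 1 ^ 2 ≤ (ζ' x v).re * v 0 + (ζ' x v).im * v 1) :
    ∃ ψ : ℂ → Pl, (∀ x, ψ (ζ x) = x) ∧ (∀ z, ζ (ψ z) = z) ∧ (∀ z w, ‖ψ z - ψ w‖ ≤ ‖z - w‖) ∧
      ∀ z, ∃ L : Pl ≃L[ℝ] ℂ, (∀ v, L v = ζ' (ψ z) v) ∧ HasFDerivAt ψ (L.symm : ℂ →L[ℝ] Pl) z := by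
  have hcs : ∀ (z : ℂ) (v : Pl), z.re * v 0 + z.im * v 1 ≤ ‖z‖ * ‖v‖ := by
    intro z v
    apply le_of_sq_le_sq _ (by positivity)
    rw [mul_pow, pl_norm_sq, ← Complex.normSq_eq_norm_sq, Complex.normSq_apply]
    nlinarith [sq_nonneg (z.re * v 1 - z.im * v 0)]
  have hexp : ∀ x y, ‖x - y‖ ≤ ‖ζ x - ζ y‖ := by
    intro x y
    set v := x - y with hv
    let φ : ℝ → ℝ := fun t => (ζ (y + t • v)).re * v 0 + (ζ (y + t • v)).im * v 1
    have hφ : ∀ t, HasDerivAt φ ((ζ' (y + t • v) v).re * v 0 + (ζ' (y + t • v) v).im * v 1) t := by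
      intro t
      have h1 : HasDerivAt (fun t : ℝ => y + t • v) v t := by
        simpa using ((hasDerivAt_id t).smul_const v).const_add y
      have h2 := (hζ (y + t • v)).comp_hasDerivAt t h1
      have h3 := (Complex.reCLM.hasFDerivAt (x := ζ (y + t • v))).comp_hasDerivAt t h2
      have h4 := (Complex.imCLM.hasFDerivAt (x := ζ (y + t • v))).comp_hasDerivAt t h2
      exact (h3.mul_const (v 0)).add (h4.mul_const (v 1))
    obtain ⟨t, _, ht⟩ := exists_hasDerivAt_eq_slope φ _ (zero_lt_one)
      (fun t _ => (hφ t).continuousAt.continuousWithinAt) (fun t _ => hφ t)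
    have h5 := hm (y + t • v) v
    rw [ht] at h5
    have h6 : φ 1 - φ 0 = (ζ x - ζ y).re * v 0 + (ζ x - ζ y).im * v 1 := by
      simp [φ, hv]; ring
    rw [← pl_norm_sq, sub_zero, div_one, h6] at h5
    have h7 := h5.trans (hcs _ _)
    by_contra hlt
    push Not at hlt
    have : 0 < ‖v‖ := lt_of_le_of_lt (norm_nonneg _) hlt
    nlinarith
  have hinj : Function.Injective ζ := by
    intro x y h
    have := hexp x y
    rw [h, sub_self, norm_zero] at this
    exact sub_eq_zero.1 (norm_le_zero_iff.1 this)
  have hcont : Continuous ζ := continuous_iff_continuousAt.2 fun x => (hζ x).continuousAt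
  have hequiv : ∀ x, ∃ L : Pl ≃L[ℝ] ℂ, (L : Pl →L[ℝ] ℂ) = ζ' x := by
    intro x
    have hi : Function.Injective (ζ' x : Pl →ₗ[ℝ] ℂ) := by
      rw [← LinearMap.ker_eq_bot, LinearMap.ker_eq_bot']
      intro v hv
      have := hm x v
      have hv' : ζ' x v = 0 := hv
      rw [hv'] at this
      rw [← pl_norm_sq] at this
      simp at this
      simpa using this
    refine ⟨(LinearEquiv.ofInjectiveOfFinrankEq (ζ' x : Pl →ₗ[ℝ] ℂ) hi (by simp)).toContinuousLinearEquiv, ?_⟩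
    ext v
    rfl
  have hstrict : ∀ x, HasStrictFDerivAt ζ (ζ' x) x := fun x =>
    hasStrictFDerivAt_of_hasFDerivAt_of_continuousAt (.of_forall hζ) hc.continuousAt
  have hopen : IsOpen (Set.range ζ) := by
    have : IsOpenMap ζ := by
      choose L hL using hequiv
      exact isOpenMap_of_hasStrictFDerivAt_equiv (f' := L) fun x => by rw [hL]; exact hstrict x
    exact this.isOpen_range
  have hclosed : IsClosed (Set.range ζ) := by
    have hal : AntilipschitzWith 1 ζ := AntilipschitzWith.of_le_mul_dist fun x y => by
      simpa [dist_eq_norm] using hexp x y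
    have : IsProperMap ζ := by
      rw [isProperMap_iff_tendsto_cocompact]
      refine ⟨hcont, ?_⟩
      rw [← Metric.cobounded_eq_cocompact, ← Metric.cobounded_eq_cocompact]
      exact hal.tendsto_cobounded
    exact this.isClosedMap.isClosed_range
  have hsurj : Function.Surjective ζ := Set.range_eq_univ.1
    (IsClopen.eq_univ ⟨hclosed, hopen⟩ (Set.range_nonempty ζ))
  choose ψ hψ using hsurj
  have hlip : ∀ z w, ‖ψ z - ψ w‖ ≤ ‖z - w‖ := fun z w => by
    simpa [hψ] using hexp (ψ z) (ψ w)
  have hψc : Continuous ψ := (LipschitzWith.of_dist_le_mul (K := 1) fun z w => by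
    simpa [dist_eq_norm] using hlip z w).continuous
  refine ⟨ψ, fun x => hinj (hψ _), hψ, hlip, fun z => ?_⟩
  obtain ⟨L, hL⟩ := hequiv (ψ z)
  refine ⟨L, fun v => by rw [← hL]; rfl, ?_⟩
  exact HasFDerivAt.of_local_left_inverse hψc.continuousAt (by rw [hL]; exact hζ _)
    (.of_forall hψ)

lemma entire_affine (ζ : Pl → ℂ) (ζ' : Pl → Pl →L[ℝ] ℂ) (ψ : ℂ → Pl)
    (h1 : ∀ x, ψ (ζ x) = x) (hlip : ∀ z w, ‖ψ z - ψ w‖ ≤ ‖z - w‖)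
    (hL : ∀ z, ∃ L : Pl ≃L[ℝ] ℂ, (∀ v, L v = ζ' (ψ z) v) ∧
      HasFDerivAt ψ (L.symm : ℂ →L[ℝ] Pl) z)
    (f : Pl → ℂ) (f' : Pl → Pl →L[ℝ] ℂ) (hf : ∀ x, HasFDerivAt f (f' x) x)
    (hμ : ∀ x, ∃ μ : ℂ, ∀ v, f' x v = μ * ζ' x v) (K : ℝ) (hK0 : 0 ≤ K)
    (hK : ∀ x y, |(f x).re - (f y).re| ≤ K * ‖x - y‖) :
    ∃ a b : ℂ, ∀ x, f x = a * ζ x + b := by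
  obtain ⟨a, b, hab⟩ := liouville_re (f ∘ ψ) (fun z => by
    obtain ⟨L, hL1, hL2⟩ := hL z
    obtain ⟨μ, hμ⟩ := hμ (ψ z)
    have h := (hf (ψ z)).comp z hL2
    refine (hasFDerivAt_of_restrictScalars ℝ (f' := ContinuousLinearMap.toSpanSingleton ℂ μ) h
      ?_).differentiableAt
    ext w
    all_goals simp [hμ, ← hL1, mul_comm]) K (fun z w => (hK _ _).trans
      (mul_le_mul_of_nonneg_left (hlip z w) hK0))
  exact ⟨a, b, fun x => by simpa [h1] using hab (ζ x)⟩

lemma affine_zeta (ζ : Pl → ℂ) (ψ : ℂ → Pl) (h2 : ∀ z, ζ (ψ z) = z) (a b a' b' : ℂ)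
    (ha : ∀ x, x 0 = (a * ζ x + b).re) (ha' : ∀ x, x 1 = (a' * ζ x + b').re) :
    ∃ (A : Pl →ₗ[ℝ] ℂ) (d : ℂ), ∀ x, ζ x = A x + d := by
  let T : ℂ →ₗ[ℝ] Pl :=
    { toFun := fun z => !₂[(a * z).re, (a' * z).re]
      map_add' := fun z w => by ext i; fin_cases i <;> simp <;> ring
      map_smul' := fun c z => by ext i; fin_cases i <;> simp <;> ring }
  have hT0 : ∀ z, (T z) 0 = (a * z).re := fun z => rfl
  have hT1 : ∀ z, (T z) 1 = (a' * z).re := fun z => rfl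
  have hζ : ∀ x, T (ζ x) = x - !₂[b.re, b'.re] := by
    intro x
    ext i
    fin_cases i
    · have := ha x
      rw [Complex.add_re] at this
      change (T (ζ x)) 0 = x 0 - b.re
      rw [hT0]; linarith
    · have := ha' x
      rw [Complex.add_re] at this
      change (T (ζ x)) 1 = x 1 - b'.re
      rw [hT1]; linarith
  have hinj : Function.Injective T := by
    intro z w h
    rw [← h2 z, ← h2 w, hζ, hζ] at h
    have := sub_left_injective h
    rw [← h2 z, ← h2 w, this]
  let e := LinearEquiv.ofInjectiveOfFinrankEq T hinj (by simp)
  have he : ∀ z, e z = T z := fun z => rfl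
  refine ⟨e.symm.toLinearMap, - e.symm !₂[b.re, b'.re], fun x => ?_⟩
  rw [← sub_eq_add_neg]
  change _ = e.symm x - e.symm _
  rw [← map_sub, ← hζ, ← he, LinearEquiv.symm_apply_apply]

/-- Abstract Liouville theorem for divergence-free coefficients. -/
lemma abstract_affine (P Q R : Pl → ℝ) (hP : Differentiable ℝ P) (hQ : Differentiable ℝ Q)
    (hR : Differentiable ℝ R) (hPpos : ∀ x, 0 < P x) (hdet : ∀ x, P x * R x - Q x ^ 2 = 1)
    (hPQ : ∀ x, fderiv ℝ P x (ee 1) = fderiv ℝ Q x (ee 0))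
    (hQR : ∀ x, fderiv ℝ Q x (ee 1) = fderiv ℝ R x (ee 0))
    (f p q : Pl → ℝ) (hf : ∀ x, HasFDerivAt f (p x • pj 0 + q x • pj 1) x)
    (hp : Differentiable ℝ p) (hq : Differentiable ℝ q)
    (hpq : ∀ x, fderiv ℝ p x (ee 1) = fderiv ℝ q x (ee 0))
    (heq : ∀ x, R x * fderiv ℝ p x (ee 0) - 2 * Q x * fderiv ℝ p x (ee 1)
      + P x * fderiv ℝ q x (ee 1) = 0)
    (K : ℝ) (hK0 : 0 ≤ K) (hK : ∀ x y, |f x - f y| ≤ K * ‖x - y‖) :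
    ∃ (B : Fin 2 → ℝ) (c : ℝ), ∀ x, f x = (∑ i, B i * x i) + c := by
  obtain ⟨F₁, hF₁⟩ := poincare2 P Q hP hQ hPQ
  obtain ⟨F₂, hF₂⟩ := poincare2 Q R hQ hR hQR
  -- complex-valued map from real and imaginary parts
  have mk : ∀ (X Y : Pl → ℝ) (X' Y' : Pl →L[ℝ] ℝ) (x : Pl), HasFDerivAt X X' x →
      HasFDerivAt Y Y' x → HasFDerivAt (fun x => ((X x : ℂ) + (Y x : ℂ) * Complex.I))
        (X'.smulRight (1 : ℂ) + Y'.smulRight Complex.I) x := by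
    intro X Y X' Y' x hX hY
    have := (hX.smul_const (1 : ℂ)).add (hY.smul_const Complex.I)
    refine this.congr_of_eventuallyEq (.of_forall fun y => ?_)
    simp
  have hpj : ∀ i x, HasFDerivAt (fun x : Pl => x i) (pj i) x := fun i x => (pj i).hasFDerivAt
  let ζ : Pl → ℂ := fun x => ((x 0 + F₁ x : ℝ) : ℂ) + ((x 1 + F₂ x : ℝ) : ℂ) * Complex.I
  let ζ' : Pl → Pl →L[ℝ] ℂ := fun x => (pj 0 + (P x • pj 0 + Q x • pj 1)).smulRight (1 : ℂ)
    + (pj 1 + (Q x • pj 0 + R x • pj 1)).smulRight Complex.I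
  have hζ : ∀ x, HasFDerivAt ζ (ζ' x) x := fun x =>
    mk _ _ _ _ x ((hpj 0 x).add (hF₁ x)) ((hpj 1 x).add (hF₂ x))
  have hζre : ∀ x v, (ζ' x v).re = v 0 + (P x * v 0 + Q x * v 1) := by
    intro x v; simp [ζ']
  have hζim : ∀ x v, (ζ' x v).im = v 1 + (Q x * v 0 + R x * v 1) := by
    intro x v; simp [ζ']
  have hPc := hP.continuous
  have hQc := hQ.continuous
  have hRc := hR.continuous
  have hζc : Continuous ζ' := by
    have h : ∀ (S T : Pl → ℝ) (L : Pl →L[ℝ] ℝ) (w : ℂ), Continuous S → Continuous T →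
        Continuous fun x => (L + (S x • pj 0 + T x • pj 1)).smulRight w := by
      intro S T L w hS hT
      have : (fun x => (L + (S x • pj 0 + T x • pj 1)).smulRight w) =
          fun x => L.smulRight w + (S x • (pj 0).smulRight w + T x • (pj 1).smulRight w) := by
        funext x
        ext v
        all_goals simp
        all_goals ring
      rw [this]
      fun_prop
    exact (h P Q _ _ hPc hQc).add (h Q R _ _ hQc hRc)
  obtain ⟨ψ, h1, h2, hlip, hL⟩ := inverse_exists ζ ζ' hζ hζc (by
    intro x v
    rw [hζre, hζim]
    have : 0 ≤ P x * (P x * v 0 ^ 2 + 2 * Q x * v 0 * v 1 + R x * v 1 ^ 2) := by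
      have : P x * (P x * v 0 ^ 2 + 2 * Q x * v 0 * v 1 + R x * v 1 ^ 2)
        = (P x * v 0 + Q x * v 1) ^ 2 + v 1 ^ 2 := by linear_combination (v 1 ^ 2) * hdet x
      rw [this]; positivity
    have := nonneg_of_mul_nonneg_right this (hPpos x)
    linarith)
  have main : ∀ (f p q : Pl → ℝ) (_ : ∀ x, HasFDerivAt f (p x • pj 0 + q x • pj 1) x)
      (_ : Differentiable ℝ p) (_ : Differentiable ℝ q)
      (_ : ∀ x, fderiv ℝ p x (ee 1) = fderiv ℝ q x (ee 0))
      (_ : ∀ x, R x * fderiv ℝ p x (ee 0) - 2 * Q x * fderiv ℝ p x (ee 1)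
        + P x * fderiv ℝ q x (ee 1) = 0)
      (K : ℝ) (_ : 0 ≤ K) (_ : ∀ x y, |f x - f y| ≤ K * ‖x - y‖),
      ∃ a b : ℂ, ∀ x, f x = (a * ζ x + b).re := by
    intro f p q hf hp hq hpq heq K hK0 hK
    obtain ⟨v, hv⟩ := poincare2 (fun x => Q x * p x - P x * q x) (fun x => R x * p x - Q x * q x)
      ((hQ.mul hp).sub (hP.mul hq)) ((hR.mul hp).sub (hQ.mul hq)) (by
        intro x
        have e1 := ((hQ x).hasFDerivAt.mul (hp x).hasFDerivAt).sub
          ((hP x).hasFDerivAt.mul (hq x).hasFDerivAt)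
        have e2 := ((hR x).hasFDerivAt.mul (hp x).hasFDerivAt).sub
          ((hQ x).hasFDerivAt.mul (hq x).hasFDerivAt)
        have e1' : fderiv ℝ (fun x => Q x * p x - P x * q x) x = _ := e1.fderiv
        have e2' : fderiv ℝ (fun x => R x * p x - Q x * q x) x = _ := e2.fderiv
        rw [e1', e2']
        simp only [_root_.add_apply, _root_.sub_apply, _root_.smul_apply, smul_eq_mul]
        linear_combination (p x) * hQR x - (q x) * hPQ x - heq x - Q x * hpq x)
    obtain ⟨a, b, hab⟩ := entire_affine ζ ζ' ψ h1 hlip hL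
      (fun x => (f x : ℂ) + (v x : ℂ) * Complex.I) _ (fun x => mk _ _ _ _ x (hf x) (hv x)) (by
        intro x
        have hne : ζ' x (ee 0) ≠ 0 := by
          intro h
          have := hζre x (ee 0)
          rw [h] at this
          simp at this
          linarith [hPpos x]
        refine ⟨((p x : ℂ) + (Q x * p x - P x * q x : ℝ) * Complex.I) / ζ' x (ee 0), fun w => ?_⟩
        rw [div_mul_eq_mul_div, eq_div_iff hne]
        have := hdet x
        apply Complex.ext
        · simp only [Complex.mul_re, Complex.mul_im, hζre, hζim]
          simp
          linear_combination (-w 1 * q x) * hdet x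
        · simp only [Complex.mul_re, Complex.mul_im, hζre, hζim]
          simp
          linear_combination (w 1 * p x) * hdet x) K hK0 (by simpa using hK)
    exact ⟨a, b, fun x => by rw [← hab x]; simp⟩
  have hcoord : ∀ i (x y : Pl), |x i - y i| ≤ 1 * ‖x - y‖ := by
    intro i x y
    simpa using PiLp.norm_apply_le (x - y) i
  obtain ⟨a, b, hab⟩ := main (fun x => x 0) (fun _ => 1) (fun _ => 0) (by
    intro x; simpa using hpj 0 x) (by fun_prop) (by fun_prop) (by simp) (by simp) 1 zero_le_one
    (hcoord 0)
  obtain ⟨a', b', hab'⟩ := main (fun x => x 1) (fun _ => 0) (fun _ => 1) (by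
    intro x; simpa using hpj 1 x) (by fun_prop) (by fun_prop) (by simp) (by simp) 1 zero_le_one
    (hcoord 1)
  obtain ⟨A, d, hA⟩ := affine_zeta ζ ψ h2 a b a' b' hab hab'
  obtain ⟨α, β, hαβ⟩ := main f p q hf hp hq hpq heq K hK0 hK
  refine ⟨fun i => (α * A (ee i)).re, (α * d + β).re, fun x => ?_⟩
  rw [hαβ x, hA x]
  conv_lhs => rw [pl_decomp x]
  simp [Fin.sum_univ_two]
  ring

lemma mss_alg (E F G W Wx Wy Ex Ey Fx Fy Gx Gy pr ps pt qr qs qt : ℝ) (hW : 0 < W)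
    (hWs : W ^ 2 = E * G - F ^ 2)
    (hWx : 2 * W * Wx = Ex * G + E * Gx - 2 * F * Fx)
    (hWy : 2 * W * Wy = Ey * G + E * Gy - 2 * F * Fy)
    (hEx : Ex = 2 * pr) (hEy : Ey = 2 * ps) (hFx : Fx = qr + ps) (hFy : Fy = qs + pt)
    (hGx : Gx = 2 * qs) (hGy : Gy = 2 * qt)
    (h1 : G * pr - 2 * F * ps + E * pt = 0) (h2 : G * qr - 2 * F * qs + E * qt = 0) :
    Ey * W - E * Wy = Fx * W - F * Wx ∧ Fy * W - F * Wy = Gx * W - G * Wx := by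
  subst hEx hEy hFx hFy hGx hGy
  constructor
  · apply mul_left_cancel₀ hW.ne'
    linear_combination (ps - qr) * hWs - E / 2 * hWy + F / 2 * hWx + F * h1 - E * h2
  · apply mul_left_cancel₀ hW.ne'
    linear_combination (pt - qs) * hWs - F / 2 * hWy + G / 2 * hWx + G * h1 - F * h2

theorem mss_two_dim_lipschitz_rigidity (m : ℕ) (hm : 1 ≤ m)
    (u : EuclideanSpace ℝ (Fin 2) → EuclideanSpace ℝ (Fin m))
    (hu : ContDiff ℝ (⊤ : ℕ∞) u)
    (hgrad : ∃ C : ℝ, ∀ x, ‖fderiv ℝ u x‖ ≤ C)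
    (hMSS : SolvesMSS u) :
    ∃ (B : Matrix (Fin m) (Fin 2) ℝ) (c : Fin m → ℝ),
      ∀ x, ∀ α : Fin m, u x α = (∑ i, B α i * x i) + c α := by
  obtain ⟨C, hC⟩ := hgrad
  have hC0 : 0 ≤ C := (norm_nonneg _).trans (hC 0)
  have huα : ∀ α, ContDiff ℝ (⊤ : ℕ∞) (fun y => u y α) := fun α =>
    (contDiff_euclidean.1 hu) α
  let d : Fin 2 → Fin m → Pl → ℝ := fun i α x => fderiv ℝ (fun y => u y α) x (ee i)
  have hd : ∀ i α, Differentiable ℝ (d i α) := fun i α =>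
    (((huα α).fderiv_right (m := 1) (by norm_cast)).clm_apply
      contDiff_const).differentiable one_ne_zero
  have hsymm : ∀ α x, fderiv ℝ (d 0 α) x (ee 1) = fderiv ℝ (d 1 α) x (ee 0) := by
    intro α x
    have hdd : DifferentiableAt ℝ (fderiv ℝ (fun y => u y α)) x :=
      ((huα α).fderiv_right (m := 1) (by norm_cast)).differentiable one_ne_zero x
    have e : ∀ i v, fderiv ℝ (d i α) x v = fderiv ℝ (fderiv ℝ (fun y => u y α)) x v (ee i) := by
      intro i v
      have := (hdd.hasFDerivAt.clm_apply (hasFDerivAt_const (ee i) x)).fderiv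
      have h' : fderiv ℝ (d i α) x = _ := this
      rw [h']; simp
    rw [e, e]
    have := ((huα α).contDiffAt (x := x)).isSymmSndFDerivAt (by
      simp only [minSmoothness_of_isRCLikeNormedField]; exact WithTop.coe_le_coe.2 le_top)
    exact this _ _
  have hfd : ∀ α x, HasFDerivAt (fun y => u y α) (d 0 α x • pj 0 + d 1 α x • pj 1) x := by
    intro α x
    have h := ((huα α).differentiable (by simp) x).hasFDerivAt
    have e : d 0 α x • pj 0 + d 1 α x • pj 1 = fderiv ℝ (fun y => u y α) x := by
      refine ContinuousLinearMap.ext fun v => ?_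
      rw [clm_decomp (fderiv ℝ (fun y => u y α) x) v]
      simp [d, mul_comm]
    rw [e]
    exact h
  let E : Pl → ℝ := fun x => 1 + ∑ α, d 0 α x * d 0 α x
  let F : Pl → ℝ := fun x => ∑ α, d 0 α x * d 1 α x
  let G : Pl → ℝ := fun x => 1 + ∑ α, d 1 α x * d 1 α x
  let W : Pl → ℝ := fun x => √(E x * G x - F x ^ 2)
  have hsum : ∀ i j x, HasFDerivAt (fun x => ∑ α, d i α x * d j α x)
      (∑ α, (d i α x • fderiv ℝ (d j α) x + d j α x • fderiv ℝ (d i α) x)) x := fun i j x =>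
    HasFDerivAt.fun_sum fun α _ => ((hd i α x).hasFDerivAt.mul (hd j α x).hasFDerivAt)
  have hE := fun x => (hsum 0 0 x).const_add 1
  have hF := fun x => (hsum 0 1 x)
  have hG := fun x => (hsum 1 1 x).const_add 1
  have hE1 : ∀ x, 1 ≤ E x := fun x => by
    have : 0 ≤ ∑ α, d 0 α x * d 0 α x := Finset.sum_nonneg fun α _ => mul_self_nonneg _
    simp only [E]; linarith
  have hG1 : ∀ x, 1 ≤ G x := fun x => by
    have : 0 ≤ ∑ α, d 1 α x * d 1 α x := Finset.sum_nonneg fun α _ => mul_self_nonneg _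
    simp only [G]; linarith
  have hD : ∀ x, 0 < E x * G x - F x ^ 2 := fun x => by
    have h0 := Finset.sum_mul_sq_le_sq_mul_sq Finset.univ (fun α => d 0 α x) (fun α => d 1 α x)
    simp only [sq] at h0
    have h1 := hE1 x
    have h2 := hG1 x
    simp only [E, G, F, sq] at h1 h2 ⊢
    nlinarith
  have hW : ∀ x, 0 < W x := fun x => Real.sqrt_pos.2 (hD x)
  have hWs : ∀ x, W x ^ 2 = E x * G x - F x ^ 2 := fun x => Real.sq_sqrt (hD x).le
  have hEd : Differentiable ℝ E := fun x => (hE x).differentiableAt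
  have hFd : Differentiable ℝ F := fun x => (hF x).differentiableAt
  have hGd : Differentiable ℝ G := fun x => (hG x).differentiableAt
  have hWd : Differentiable ℝ W := fun x =>
    (((hEd x).mul (hGd x)).sub ((hFd x).pow 2)).sqrt (hD x).ne'
  have hWder : ∀ x v, 2 * W x * fderiv ℝ W x v = fderiv ℝ E x v * G x + E x * fderiv ℝ G x v
      - 2 * F x * fderiv ℝ F x v := by
    intro x v
    have e1 := (hWd x).hasFDerivAt.mul (hWd x).hasFDerivAt
    have e2 := ((hEd x).hasFDerivAt.mul (hGd x).hasFDerivAt).sub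
      ((hFd x).hasFDerivAt.mul (hFd x).hasFDerivAt)
    have e3 : (W * W) = (E * G - F * F) := by
      funext y
      have := hWs y
      simp only [Pi.mul_apply, Pi.sub_apply]
      linarith
    rw [e3] at e1
    have := congrArg (fun L : Pl →L[ℝ] ℝ => L v) (e1.unique e2)
    simp only [_root_.add_apply, _root_.sub_apply, _root_.smul_apply, smul_eq_mul] at this
    linarith
  -- the scalar equations
  have heqn : ∀ x α, G x * fderiv ℝ (d 0 α) x (ee 0) - 2 * F x * fderiv ℝ (d 0 α) x (ee 1)
      + E x * fderiv ℝ (d 1 α) x (ee 1) = 0 := by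
    intro x α
    have h := hMSS x α
    have hgm : inducedMetric u x = !![E x, F x; F x, G x] := by
      ext i j
      fin_cases i <;> fin_cases j <;>
        simp [inducedMetric, jacobianMatrix, Matrix.mul_apply, E, F, G, d, ee, mul_comm]
    have hdet : (!![E x, F x; F x, G x]).det = E x * G x - F x ^ 2 := by
      rw [Matrix.det_fin_two_of]; ring
    rw [hgm, Matrix.inv_def, hdet, Matrix.adjugate_fin_two_of, Ring.inverse_eq_inv'] at h
    simp only [Fin.sum_univ_two] at h
    change _ * fderiv ℝ (d 0 α) x (ee 0) + _ * fderiv ℝ (d 1 α) x (ee 0) +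
      (_ * fderiv ℝ (d 0 α) x (ee 1) + _ * fderiv ℝ (d 1 α) x (ee 1)) = 0 at h
    simp at h
    have hs := hsymm α x
    have hne := (hD x).ne'
    have h3 : (E x * G x - F x ^ 2)⁻¹ * (G x * fderiv ℝ (d 0 α) x (ee 0)
        - 2 * F x * fderiv ℝ (d 0 α) x (ee 1) + E x * fderiv ℝ (d 1 α) x (ee 1)) = 0 := by
      linear_combination h - (E x * G x - F x ^ 2)⁻¹ * F x * hs
    exact (mul_eq_zero.1 h3).resolve_left (inv_ne_zero hne)
  let S : Fin 2 → Fin 2 → Fin 2 → Pl → ℝ := fun i j k x =>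
    ∑ α, d i α x * fderiv ℝ (d j α) x (ee k)
  have hS : ∀ i x, G x * S i 0 0 x - 2 * F x * S i 0 1 x + E x * S i 1 1 x = 0 := by
    intro i x
    simp only [S, Finset.mul_sum]
    rw [← Finset.sum_sub_distrib, ← Finset.sum_add_distrib]
    refine Finset.sum_eq_zero fun α _ => ?_
    linear_combination d i α x * heqn x α
  have hSs : ∀ i x, S i 1 0 x = S i 0 1 x := fun i x =>
    Finset.sum_congr rfl fun α _ => by rw [hsymm]
  have hval : ∀ i j k x, (∑ α, (d i α x • fderiv ℝ (d j α) x + d j α x • fderiv ℝ (d i α) x)) (ee k)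
      = S i j k x + S j i k x := by
    intro i j k x
    simp [S, Finset.sum_add_distrib]
  have hEv : ∀ k x, fderiv ℝ E x (ee k) = S 0 0 k x + S 0 0 k x := fun k x => by
    rw [← hval]; exact congrArg (fun L : Pl →L[ℝ] ℝ => L (ee k)) (hE x).fderiv
  have hFv : ∀ k x, fderiv ℝ F x (ee k) = S 0 1 k x + S 1 0 k x := fun k x => by
    rw [← hval]; exact congrArg (fun L : Pl →L[ℝ] ℝ => L (ee k)) (hF x).fderiv
  have hGv : ∀ k x, fderiv ℝ G x (ee k) = S 1 1 k x + S 1 1 k x := fun k x => by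
    rw [← hval]; exact congrArg (fun L : Pl →L[ℝ] ℝ => L (ee k)) (hG x).fderiv
  have halg : ∀ x, _ := fun x => mss_alg (E x) (F x) (G x) (W x) (fderiv ℝ W x (ee 0))
    (fderiv ℝ W x (ee 1)) _ _ _ _ _ _ (S 0 0 0 x) (S 0 0 1 x) (S 0 1 1 x)
    (S 1 0 0 x) (S 1 0 1 x) (S 1 1 1 x) (hW x) (hWs x) (hWder x (ee 0)) (hWder x (ee 1))
    (by rw [hEv]; ring) (by rw [hEv]; ring) (by rw [hFv, hSs]; ring) (by rw [hFv]; ring)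
    (by rw [hGv, hSs]; ring) (by rw [hGv]; ring) (hS 0 x) (hS 1 x)
  have hqd : ∀ (H : Pl → ℝ), Differentiable ℝ H → Differentiable ℝ (fun x => H x / W x) := by
    intro H hH x
    have := (hH x).mul ((hWd x).inv (hW x).ne')
    simp only [div_eq_mul_inv]
    exact this
  have hquot : ∀ (H : Pl → ℝ), Differentiable ℝ H → ∀ x v, fderiv ℝ (fun x => H x / W x) x v =
      (fderiv ℝ H x v * W x - H x * fderiv ℝ W x v) / W x ^ 2 := by
    intro H hH x v
    have h := (hqd H hH x).hasFDerivAt.mul (hWd x).hasFDerivAt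
    have e3 : (fun x => H x / W x) * W = H := by
      funext y
      have := (hW y).ne'
      simp only [Pi.mul_apply]
      field_simp
    rw [e3] at h
    rw [h.fderiv]
    have := (hW x).ne'
    simp only [_root_.add_apply, _root_.smul_apply, smul_eq_mul]
    field_simp
    ring
  have hfin : ∀ α, ∃ (B : Fin 2 → ℝ) (c : ℝ), ∀ x, u x α = (∑ i, B i * x i) + c := by
    intro α
    refine abstract_affine (fun x => E x / W x) (fun x => F x / W x) (fun x => G x / W x)
      (hqd E hEd) (hqd F hFd) (hqd G hGd)
      (fun x => div_pos (by linarith [hE1 x]) (hW x)) ?_ ?_ ?_ (fun x => u x α) (d 0 α) (d 1 α)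
      (hfd α) (hd 0 α) (hd 1 α) (hsymm α) ?_ C hC0 ?_
    · intro x
      have := hWs x
      have := (hW x).ne'
      field_simp
      linarith
    · intro x
      rw [hquot E hEd, hquot F hFd, (halg x).1]
    · intro x
      rw [hquot F hFd, hquot G hGd, (halg x).2]
    · intro x
      linear_combination (heqn x α) / W x
    · intro x y
      have h1 := Convex.norm_image_sub_le_of_norm_fderiv_le (𝕜 := ℝ) (f := u) (s := Set.univ)
        (fun x _ => hu.differentiable (by simp) x) (fun x _ => hC x) convex_univ
        (Set.mem_univ y) (Set.mem_univ x)
      refine le_trans ?_ h1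
      simpa using PiLp.norm_apply_le (u x - u y) α
  choose B c hB using hfin
  exact ⟨Matrix.of B, c, fun x α => hB α x⟩
end

section
/- (The Lawson–Osserman cone is minimal) Identify ℝ⁴ with ℂ² via z = (z₁, z₂) and ℝ³ with ℝ × ℂ, and define u : ℝ⁴ ∖ {0} → ℝ³ by u(z) = (√5 / (2|z|)) · (|z₁|² − |z₂|², −2i z₁ z₂), where |z|² = |z₁|² + |z₂|². Then u solves the minimal surface system at every point z ≠ 0: with g(z) = I₄ + (Du(z))ᵀ Du(z) and (g^{ij}) = g⁻¹, one has ∑_{i,j} g^{ij}(z) ∂ᵢ∂ⱼu^α(z) = 0 for α = 1, 2, 3. -/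
open Real Matrix

/-- The Lawson–Osserman map `u(z) = (√5/(2|z|)) (|z₁|² − |z₂|², −2i z₁ z₂)`,
where `ℝ⁴ ≅ ℂ²` via `z₁ = x₀ + i x₁`, `z₂ = x₂ + i x₃`, and `ℝ³ ≅ ℝ × ℂ`
(the last two components are the real and imaginary parts of `−2i z₁ z₂`). -/
noncomputable def lawsonOsserman (z : EuclideanSpace ℝ (Fin 4)) :
    EuclideanSpace ℝ (Fin 3) :=
  (EuclideanSpace.equiv (Fin 3) ℝ).symm
    ![Real.sqrt 5 / (2 * ‖z‖) * (z 0 ^ 2 + z 1 ^ 2 - z 2 ^ 2 - z 3 ^ 2),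
      Real.sqrt 5 / (2 * ‖z‖) * (2 * (z 0 * z 3 + z 1 * z 2)),
      Real.sqrt 5 / (2 * ‖z‖) * (-2 * (z 0 * z 2 - z 1 * z 3))]

namespace LO

noncomputable def A : Fin 3 → Matrix (Fin 4) (Fin 4) ℝ :=
  ![!![1,0,0,0;0,1,0,0;0,0,-1,0;0,0,0,-1],
    !![0,0,0,1;0,0,1,0;0,1,0,0;1,0,0,0],
    !![0,0,-1,0;0,0,0,1;-1,0,0,0;0,1,0,0]]

noncomputable def a (α : Fin 3) (n : Fin 4 → ℝ) (j : Fin 4) : ℝ := ∑ i, A α j i * n i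

noncomputable def q (α : Fin 3) (n : Fin 4 → ℝ) : ℝ := ∑ j, a α n j * n j

noncomputable def nu (n : Fin 4 → ℝ) : Fin 4 → ℝ := ![-n 1, n 0, n 3, -n 2]

lemma jac_id (n : Fin 4 → ℝ) (h : n 0 ^ 2 + n 1 ^ 2 + n 2 ^ 2 + n 3 ^ 2 = 1) (i j : Fin 4) :
    ∑ α, (2 * a α n i - q α n * n i) * (2 * a α n j - q α n * n j)
      = 4 * ((1 : Matrix (Fin 4) (Fin 4) ℝ) i j - nu n i * nu n j) - 3 * n i * n j := by
  have key : ∑ α, (2 * a α n i - q α n * n i) * (2 * a α n j - q α n * n j)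
      - (4 * ((1 : Matrix (Fin 4) (Fin 4) ℝ) i j - nu n i * nu n j) - 3 * n i * n j)
      = (4 * (1 : Matrix (Fin 4) (Fin 4) ℝ) i j - 4 * n i * n j +
        ((n 0 ^ 2 + n 1 ^ 2 + n 2 ^ 2 + n 3 ^ 2) + 1) * n i * n j) *
          (n 0 ^ 2 + n 1 ^ 2 + n 2 ^ 2 + n 3 ^ 2 - 1) := by
    fin_cases i <;> fin_cases j <;>
      simp [Fin.sum_univ_succ, a, q, A, nu] <;> ring
  rw [h] at key
  linarith

noncomputable def ginv (n : Fin 4 → ℝ) : Matrix (Fin 4) (Fin 4) ℝ :=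
  Matrix.of fun i j => 1 / 6 * (1 : Matrix (Fin 4) (Fin 4) ℝ) i j + 5 / 6 * nu n i * nu n j
    + 5 / 18 * n i * n j

lemma g_mul (n : Fin 4 → ℝ) (h : n 0 ^ 2 + n 1 ^ 2 + n 2 ^ 2 + n 3 ^ 2 = 1)
    (g : Matrix (Fin 4) (Fin 4) ℝ)
    (hg : ∀ i j, g i j = 6 * (1 : Matrix (Fin 4) (Fin 4) ℝ) i j - 5 * nu n i * nu n j
      - 15 / 4 * n i * n j) : g * ginv n = 1 := by
  ext i j
  have key : (g * ginv n) i j - (1 : Matrix (Fin 4) (Fin 4) ℝ) i j =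
      (25 / 6 * nu n i * nu n j + 25 / 24 * n i * n j) *
        (1 - (n 0 ^ 2 + n 1 ^ 2 + n 2 ^ 2 + n 3 ^ 2)) := by
    simp only [Matrix.mul_apply, hg]
    fin_cases i <;> fin_cases j <;>
      simp [Fin.sum_univ_four, Matrix.one_apply, ginv, nu] <;> ring
  rw [h] at key
  linarith

lemma tr_id (n : Fin 4 → ℝ) (h : n 0 ^ 2 + n 1 ^ 2 + n 2 ^ 2 + n 3 ^ 2 = 1) (α : Fin 3) :
    ∑ i, ∑ j, ginv n i j * (2 * A α i j - 2 * a α n i * n j - 2 * a α n j * n i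
      - q α n * (1 : Matrix (Fin 4) (Fin 4) ℝ) i j + 3 * q α n * n i * n j) = 0 := by
  have key : ∑ i, ∑ j, ginv n i j * (2 * A α i j - 2 * a α n i * n j - 2 * a α n j * n i
      - q α n * (1 : Matrix (Fin 4) (Fin 4) ℝ) i j + 3 * q α n * n i * n j) =
      q α n * (1 / 3 + 5 / 18 * (2 - 3 * (n 0 ^ 2 + n 1 ^ 2 + n 2 ^ 2 + n 3 ^ 2))) *
        (1 - (n 0 ^ 2 + n 1 ^ 2 + n 2 ^ 2 + n 3 ^ 2)) := by
    fin_cases α <;>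
      simp [Fin.sum_univ_succ, a, q, A, nu, ginv] <;> ring
  rw [h] at key
  linarith

abbrev E := EuclideanSpace ℝ (Fin 4)

lemma hinv (y : E) (hy : y ≠ 0) :
    HasFDerivAt (fun w : E => ‖w‖⁻¹) (-(‖y‖⁻¹ ^ 3) • innerSL ℝ y) y := by
  have h1 : HasFDerivAt (fun w : E => ‖w‖ ^ 2) (2 • innerSL ℝ y) y :=
    (hasStrictFDerivAt_norm_sq y).hasFDerivAt
  have hn : ‖y‖ ≠ 0 := norm_ne_zero_iff.mpr hy
  have h2 := h1.sqrt (pow_ne_zero 2 hn)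
  simp only [Real.sqrt_sq (norm_nonneg _)] at h2
  have h3 := (hasDerivAt_inv hn).comp_hasFDerivAt y h2
  refine h3.congr_fderiv ?_
  ext v
  simp
  field_simp

lemma hcoord (y : E) (i : Fin 4) :
    HasFDerivAt (fun w : E => w i) (EuclideanSpace.proj i : E →L[ℝ] ℝ) y :=
  (EuclideanSpace.proj i : E →L[ℝ] ℝ).hasFDerivAt

lemma ha (y : E) (α : Fin 3) (j : Fin 4) :
    HasFDerivAt (fun w : E => a α w j) (∑ i, A α j i • (EuclideanSpace.proj i : E →L[ℝ] ℝ)) y := by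
  unfold a
  exact HasFDerivAt.fun_sum fun i _ => (hcoord y i).const_mul _

lemma Asymm (α : Fin 3) (i j : Fin 4) : A α i j = A α j i := by
  fin_cases α <;> fin_cases i <;> fin_cases j <;> simp [A]

lemma hq (y : E) (α : Fin 3) :
    HasFDerivAt (fun w : E => q α w)
      (∑ j, (2 * a α y j) • (EuclideanSpace.proj j : E →L[ℝ] ℝ)) y := by
  have : HasFDerivAt (fun w : E => q α w) _ y :=
    HasFDerivAt.fun_sum fun j _ => (ha y α j).mul (hcoord y j)
  refine this.congr_fderiv ?_
  ext v
  fin_cases α <;> simp [a, A, Fin.sum_univ_succ] <;> ring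

noncomputable def c : ℝ := √5 / 2

lemma lo_eq (α : Fin 3) (w : E) : lawsonOsserman w α = c * (q α w * ‖w‖⁻¹) := by
  fin_cases α <;>
    simp [lawsonOsserman, c, q, a, A, Fin.sum_univ_succ] <;> ring

lemma proj_single (i j : Fin 4) :
    (EuclideanSpace.single i (1 : ℝ) : E) j = (1 : Matrix (Fin 4) (Fin 4) ℝ) i j := by
  simp [Matrix.one_apply, eq_comm]

lemma first (α : Fin 3) (j : Fin 4) (y : E) (hy : y ≠ 0) :
    fderiv ℝ (fun w => lawsonOsserman w α) y (EuclideanSpace.single j 1) =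
      c * (2 * (a α y j * ‖y‖⁻¹) - q α y * (y j * ‖y‖⁻¹ ^ 3)) := by
  simp only [lo_eq]
  rw [(((hq y α).fun_mul (hinv y hy)).const_mul c).fderiv]
  simp [Matrix.one_apply, EuclideanSpace.inner_single_right]
  ring

lemma second (α : Fin 3) (i j : Fin 4) (y : E) (hy : y ≠ 0) :
    fderiv ℝ (fun y => fderiv ℝ (fun w => lawsonOsserman w α) y
          (EuclideanSpace.single j 1)) y (EuclideanSpace.single i 1) =
      c * (2 * A α i j * ‖y‖⁻¹ - 2 * a α y i * y j * ‖y‖⁻¹ ^ 3 - 2 * a α y j * y i * ‖y‖⁻¹ ^ 3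
      - q α y * (1 : Matrix (Fin 4) (Fin 4) ℝ) i j * ‖y‖⁻¹ ^ 3
      + 3 * q α y * y i * y j * ‖y‖⁻¹ ^ 5) := by
  have he : (fun y => fderiv ℝ (fun w => lawsonOsserman w α) y (EuclideanSpace.single j 1))
      =ᶠ[nhds y] fun y => c * (2 * (a α y j * ‖y‖⁻¹) - q α y * (y j * ‖y‖⁻¹ ^ 3)) := by
    filter_upwards [isOpen_ne.mem_nhds hy] with w hw
    exact first α j w hw
  rw [he.fderiv_eq]
  rw [(((((ha y α j).fun_mul (hinv y hy)).const_mul 2).fun_sub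
    ((hq y α).fun_mul ((hcoord y j).fun_mul ((hinv y hy).pow 3)))).const_mul c).fderiv]
  have hs : ∀ f : Fin 4 → ℝ,
      ∑ x, f x * (EuclideanSpace.single i (1 : ℝ) : E) x = f i := by
    intro f
    simp
  have hp : ∀ (x : Fin 4) (v : E), (EuclideanSpace.proj x : E →L[ℝ] ℝ) v = v x :=
    fun _ _ => rfl
  have hin : inner ℝ y (EuclideanSpace.single i (1 : ℝ) : E) = y i := by
    simp [EuclideanSpace.inner_single_right]
  simp only [_root_.add_apply, _root_.sub_apply, _root_.smul_apply, _root_.sum_apply, smul_eq_mul,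
    hp, hs, innerSL_apply_apply, hin, nsmul_eq_mul]
  rw [proj_single, Asymm α j i]
  push_cast
  ring

end LO

/-- The Lawson–Osserman cone is minimal: the map `u` solves the minimal surface
system `∑ᵢⱼ gⁱʲ ∂ᵢ∂ⱼuᵅ = 0` at every point `z ≠ 0`. -/
theorem lawson_osserman_minimal :
    ∀ z : EuclideanSpace ℝ (Fin 4), z ≠ 0 → ∀ α : Fin 3,
      ∑ i, ∑ j, (inducedMetric lawsonOsserman z)⁻¹ i j *
        fderiv ℝ (fun y => fderiv ℝ (fun w => lawsonOsserman w α) y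
          (EuclideanSpace.single j 1)) z (EuclideanSpace.single i 1) = 0 := by
  intro z hz α
  have hn : ‖z‖ ≠ 0 := norm_ne_zero_iff.mpr hz
  obtain ⟨n, hnd⟩ : ∃ n : Fin 4 → ℝ, ∀ i, z i = ‖z‖ * n i :=
    ⟨fun i => ‖z‖⁻¹ * z i, fun i => by field_simp⟩
  have h1 : n 0 ^ 2 + n 1 ^ 2 + n 2 ^ 2 + n 3 ^ 2 = 1 := by
    have h := EuclideanSpace.real_norm_sq_eq z
    simp only [Fin.sum_univ_four, hnd] at h
    have h2 : ‖z‖ ^ 2 * (n 0 ^ 2 + n 1 ^ 2 + n 2 ^ 2 + n 3 ^ 2 - 1) = 0 := by linarith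
    have := (mul_eq_zero.mp h2).resolve_left (pow_ne_zero 2 hn)
    linarith
  have haz : ∀ β j, LO.a β z j = ‖z‖ * LO.a β n j := by
    intro β j
    simp only [LO.a, Finset.mul_sum]
    refine Finset.sum_congr rfl fun i _ => ?_
    rw [hnd]; ring
  have hqz : ∀ β, LO.q β z = ‖z‖ ^ 2 * LO.q β n := by
    intro β
    simp only [LO.q, Finset.mul_sum]
    refine Finset.sum_congr rfl fun i _ => ?_
    rw [hnd, haz]; ring
  have hj : ∀ β i, jacobianMatrix lawsonOsserman z β i
      = LO.c * (2 * LO.a β n i - LO.q β n * n i) := by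
    intro β i
    simp only [jacobianMatrix, Matrix.of_apply]
    rw [LO.first β i z hz, haz, hqz, hnd]
    field_simp
  have hc : LO.c * LO.c = 5 / 4 := by
    have := Real.mul_self_sqrt (show (0 : ℝ) ≤ 5 by norm_num)
    unfold LO.c
    linarith
  have hg : (inducedMetric lawsonOsserman z)⁻¹ = LO.ginv n := by
    refine Matrix.inv_eq_right_inv (LO.g_mul n h1 _ fun i j => ?_)
    simp only [inducedMetric, Matrix.add_apply, Matrix.mul_apply, Matrix.transpose_apply, hj]
    have e : ∀ β, LO.c * (2 * LO.a β n i - LO.q β n * n i) *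
        (LO.c * (2 * LO.a β n j - LO.q β n * n j)) =
        5 / 4 * ((2 * LO.a β n i - LO.q β n * n i) * (2 * LO.a β n j - LO.q β n * n j)) := by
      intro β
      rw [← hc]; ring
    simp only [e, ← Finset.mul_sum]
    rw [LO.jac_id n h1]
    ring
  rw [hg]
  have ht := LO.tr_id n h1 α
  have h0 : (LO.c * ‖z‖⁻¹) * (∑ i, ∑ j, LO.ginv n i j * (2 * LO.A α i j - 2 * LO.a α n i * n j
      - 2 * LO.a α n j * n i - LO.q α n * (1 : Matrix (Fin 4) (Fin 4) ℝ) i j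
      + 3 * LO.q α n * n i * n j)) = 0 := by rw [ht, mul_zero]
  rw [← h0]
  simp only [Finset.mul_sum]
  refine Finset.sum_congr rfl fun i _ => Finset.sum_congr rfl fun j _ => ?_
  rw [LO.second α i j z hz, haz, haz, hqz, hnd i, hnd j]
  field_simp
end

section
/- (Trapping-region inequality for the Bombieri–De Giorgi–Giusti ODE) For every real x > 1, one has 3(1 + x^{-5})(x^{-1} − x^{-5/2}) > (5/2) x^{-7/2} (x − x^{-5/2}). Equivalently, setting z = x^{1/2} > 1, the polynomial inequality 6z¹³ − 11z¹⁰ + 11z³ − 6 > 0 holds. -/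
open Real

/-- Trapping-region inequality for the Bombieri–De Giorgi–Giusti ODE: for `x > 1`,
`3(1 + x⁻⁵)(x⁻¹ − x^{-5/2}) > (5/2) x^{-7/2} (x − x^{-5/2})`; equivalently, with
`z = √x > 1`, the polynomial inequality `6z¹³ − 11z¹⁰ + 11z³ − 6 > 0`. -/
theorem bdg_trapping_inequality :
    (∀ x : ℝ, 1 < x →
      3 * (1 + x ^ (-5 : ℝ)) * (x ^ (-1 : ℝ) - x ^ (-(5 : ℝ)/2))
        > 5/2 * x ^ (-(7 : ℝ)/2) * (x - x ^ (-(5 : ℝ)/2))) ∧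
    (∀ z : ℝ, 1 < z → 0 < 6 * z ^ 13 - 11 * z ^ 10 + 11 * z ^ 3 - 6) := by
  have key : ∀ z : ℝ, 1 < z → 0 < 6 * z ^ 13 - 11 * z ^ 10 + 11 * z ^ 3 - 6 := by
    intro z hz
    obtain ⟨t, ht, rfl⟩ : ∃ t : ℝ, 0 < t ∧ z = 1 + t := ⟨z - 1, by linarith, by ring⟩
    ring_nf
    positivity
  refine ⟨?_, key⟩
  intro x hx
  obtain ⟨z, hz, rfl⟩ : ∃ z : ℝ, 1 < z ∧ x = z ^ (2 : ℝ) := by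
    refine ⟨√x, by rw [Real.lt_sqrt] <;> linarith, ?_⟩
    rw [Real.rpow_two, Real.sq_sqrt (by linarith)]
  have hz0 : 0 < z := by linarith
  have hk := key z hz
  have e : ∀ (a : ℝ) (n : ℕ), 2 * a = -(n : ℝ) → (z ^ (2 : ℝ)) ^ a = (z ^ n)⁻¹ := by
    intro a n h
    rw [← Real.rpow_mul hz0.le, h, Real.rpow_neg hz0.le, Real.rpow_natCast]
  rw [e (-5) 10 (by norm_num), e (-1) 2 (by norm_num), e (-(5 : ℝ)/2) 5 (by norm_num),
    e (-(7 : ℝ)/2) 7 (by norm_num), Real.rpow_two, gt_iff_lt, ← sub_pos]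
  have h : 3 * (1 + (z ^ 10)⁻¹) * ((z ^ 2)⁻¹ - (z ^ 5)⁻¹)
      - 5 / 2 * (z ^ 7)⁻¹ * (z ^ 2 - (z ^ 5)⁻¹)
      = (6 * z ^ 13 - 11 * z ^ 10 + 11 * z ^ 3 - 6) / (2 * z ^ 15) := by
    field_simp
    ring
  rw [h]
  positivity
end

section
/- (A non-convex entire solution of the Monge–Ampère equation in three variables) For every smooth function f : ℝ → ℝ, the function u : ℝ³ → ℝ defined by u(x₁, x₂, x₃) = f(x₁) + x₁x₂ − x₃²/2 satisfies det D²u(x) = 1 for every x ∈ ℝ³, and u is not convex. -/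
open Real

/-- A non-convex entire solution of the Monge–Ampère equation in three variables:
for any smooth `f`, the function `u(x) = f(x₁) + x₁x₂ − x₃²/2` satisfies
`det D²u = 1` everywhere, and `u` is not convex. -/
theorem nonconvex_monge_ampere_solution (f : ℝ → ℝ) (hf : ContDiff ℝ (⊤ : ℕ∞) f)
    (u : EuclideanSpace ℝ (Fin 3) → ℝ)
    (hu : ∀ x, u x = f (x 0) + x 0 * x 1 - x 2 ^ 2 / 2) :
    (∀ x, (hessianMatrix u x).det = 1) ∧ ¬ ConvexOn ℝ Set.univ u := by
  have hf1 : Differentiable ℝ f := hf.differentiable (by simp)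
  have hf2 : Differentiable ℝ (deriv f) :=
    ((contDiff_infty_iff_deriv.1 hf).2).differentiable (by simp)
  have hp : ∀ (i : Fin 3) (x : EuclideanSpace ℝ (Fin 3)),
      HasFDerivAt (fun y : EuclideanSpace ℝ (Fin 3) => y i)
        (EuclideanSpace.proj i : EuclideanSpace ℝ (Fin 3) →L[ℝ] ℝ) x :=
    fun i x => (EuclideanSpace.proj i : EuclideanSpace ℝ (Fin 3) →L[ℝ] ℝ).hasFDerivAt
  have hcomp : ∀ (g : ℝ → ℝ), Differentiable ℝ g → ∀ x : EuclideanSpace ℝ (Fin 3),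
      HasFDerivAt (fun y : EuclideanSpace ℝ (Fin 3) => g (y 0))
        (deriv g (x 0) • (EuclideanSpace.proj 0 : EuclideanSpace ℝ (Fin 3) →L[ℝ] ℝ)) x :=
    fun g hg x => (hg (x 0)).hasDerivAt.comp_hasFDerivAt x (hp 0 x)
  have hu' : u = fun x => f (x 0) + x 0 * x 1 - x 2 * x 2 * (1 / 2) := by
    funext x; rw [hu]; ring
  have h1 : ∀ (x v : EuclideanSpace ℝ (Fin 3)),
      fderiv ℝ u x v = deriv f (x 0) * v 0 + (x 0 * v 1 + x 1 * v 0) - x 2 * v 2 := by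
    intro x v
    have h := (((hcomp f hf1 x).add ((hp 0 x).mul (hp 1 x))).sub
      (((hp 2 x).mul (hp 2 x)).mul_const (1 / 2 : ℝ)))
    have h' := h.congr_of_eventuallyEq (f₁ := u) (Filter.Eventually.of_forall fun y => by rw [hu']; rfl)
    rw [h'.fderiv]
    simp
    ring
  have h2 : ∀ (x v w : EuclideanSpace ℝ (Fin 3)),
      fderiv ℝ (fun y => fderiv ℝ u y v) x w =
        deriv (deriv f) (x 0) * w 0 * v 0 + (w 0 * v 1 + w 1 * v 0) - w 2 * v 2 := by
    intro x v w
    have h := ((((hcomp _ hf2 x).mul_const (v 0)).add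
      (((hp 0 x).mul_const (v 1)).add ((hp 1 x).mul_const (v 0)))).sub
      ((hp 2 x).mul_const (v 2)))
    have h' := h.congr_of_eventuallyEq (f₁ := fun y => fderiv ℝ u y v)
      (Filter.Eventually.of_forall fun y => h1 y v)
    rw [h'.fderiv]
    simp
    ring
  refine ⟨fun x => ?_, fun hc => ?_⟩
  · rw [Matrix.det_fin_three]
    simp [hessianMatrix, h2]
  · have h := hc.2 (Set.mem_univ (EuclideanSpace.single (2 : Fin 3) (1 : ℝ)))
      (Set.mem_univ (EuclideanSpace.single (2 : Fin 3) (-1 : ℝ)))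
      (by norm_num : (0 : ℝ) ≤ 1 / 2) (by norm_num : (0 : ℝ) ≤ 1 / 2) (by norm_num)
    simp [hu] at h
    linarith
end
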